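/- arXiv:2111.14981 — 2 statements merged into one kernel-verified Lean document; each statement's English description precedes it below -/
import Mathlib

section
/- Let k ≥ 2 and let φ : ℕ → (0,∞) be an arbitrary positive increasing function. Then for Lebesgue-almost every α ∈ ℝ^k: the maximal discrepancy satisfies Δ(α;N) ≪ (log N)^k · φ(log log N) (with a constant depending on α and φ) if and only if ∑_{n=1}^∞ 1/φ(n) < ∞. -/
open MeasureTheory Finset

noncomputable section

/-- Ergodic discrepancy of the torus translation by `α ∈ ℝ^k` relative to the box
`B(x) = [0,x₁)×⋯×[0,x_k)`:
`D(α,x;m) = ∑_{1≤n≤m} χ_{B(x)}(nα mod 1) − m·Vol(B(x))`. -/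
def DiscT (k : ℕ) (α : Fin k → ℝ) (x : Fin k → ℝ) (m : ℕ) : ℝ :=
  (∑ n ∈ Finset.Icc 1 m,
      if ∀ i, Int.fract ((n : ℝ) * α i) < x i then (1 : ℝ) else 0)
    - (m : ℝ) * ∏ i, x i

/-! ### The sawtooth function and its periodic primitive -/

/-- A continuous `1`-periodic primitive of the sawtooth `t ↦ Int.fract t - 1 / 2`. -/
def sawPrim (t : ℝ) : ℝ := (Int.fract t ^ 2 - Int.fract t + 1 / 6) / 2

lemma sawPrim_le (t : ℝ) (j : ℤ) : sawPrim t ≤ ((t - j) ^ 2 - (t - j) + 1 / 6) / 2 := by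
  unfold sawPrim
  have h0 := Int.fract_nonneg t
  have h1 := Int.fract_lt_one t
  have ht : t - j = Int.fract t + ((⌊t⌋ - j : ℤ) : ℝ) := by
    push_cast
    linarith [Int.floor_add_fract t]
  rw [ht]
  generalize ⌊t⌋ - j = d
  have key : 0 ≤ (d : ℝ) * (d - 1 + 2 * Int.fract t) := by
    rcases lt_trichotomy d 0 with hd | hd | hd
    · have : (d : ℝ) ≤ -1 := by exact_mod_cast (by omega : d ≤ -1)
      nlinarith
    · simp [hd]
    · have : (1 : ℝ) ≤ d := by exact_mod_cast hd
      nlinarith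
  nlinarith

lemma sawPrim_eq (t : ℝ) :
    sawPrim t = ((t - ⌊t⌋) ^ 2 - (t - ⌊t⌋) + 1 / 6) / 2 := rfl

lemma sawPrim_add_one (t : ℝ) : sawPrim (t + 1) = sawPrim t := by simp [sawPrim]

lemma sawPrim_hasSum (t : ℝ) :
    HasSum (fun n : ℕ => Real.cos (2 * Real.pi * n * t) / (2 * Real.pi ^ 2 * (n : ℝ) ^ 2))
      (sawPrim t) := by
  have h := hasSum_one_div_nat_pow_mul_cos (k := 1) one_ne_zero
    (x := Int.fract t) ⟨Int.fract_nonneg t, (Int.fract_lt_one t).le⟩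
  have h2 := h.mul_left (1 / (2 * Real.pi ^ 2))
  convert! h2 using 1
  · ext n
    have : Real.cos (2 * Real.pi * n * t) = Real.cos (2 * Real.pi * n * Int.fract t) := by
      rw [Int.fract, mul_sub]
      have : 2 * Real.pi * n * (⌊t⌋ : ℝ) = ((n * ⌊t⌋ : ℤ) : ℝ) * (2 * Real.pi) := by
        push_cast; ring
      rw [this, Real.cos_sub_int_mul_two_pi]
    rw [this]
    rcases eq_or_ne n 0 with rfl | hn
    · simp
    · rw [mul_one]
      field_simp
  · have : (Polynomial.map (algebraMap ℚ ℝ) (Polynomial.bernoulli 2)).eval (Int.fract t)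
        = Int.fract t ^ 2 - Int.fract t + 1 / 6 := by
      simp [Polynomial.bernoulli, Finset.sum_range_succ, Polynomial.eval_monomial, bernoulli_one,
        bernoulli_two]
      ring
    rw [mul_one, this, sawPrim]
    have := Real.pi_pos
    norm_num [Nat.factorial]
    field_simp

/-- Partial sums of the Fourier series of `sawPrim`. -/
def sawTrig (K : ℕ) (t : ℝ) : ℝ :=
  ∑ n ∈ range (K + 1), Real.cos (2 * Real.pi * n * t) / (2 * Real.pi ^ 2 * (n : ℝ) ^ 2)

lemma abs_sawPrim_sub_sawTrig_le {K : ℕ} (hK : 1 ≤ K) (t : ℝ) :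
    |sawPrim t - sawTrig K t| ≤ 1 / K := by
  have hlim := (sawPrim_hasSum t).tendsto_sum_nat
  have hlim2 := ((hlim.comp (Filter.tendsto_add_atTop_nat 1)).sub_const (sawTrig K t)).abs
  refine le_of_tendsto hlim2 ?_
  filter_upwards [Filter.eventually_ge_atTop K] with M hM
  simp only [Function.comp, sawTrig]
  rw [← Finset.sum_range_add_sum_Ico _ (by omega : K + 1 ≤ M + 1), add_sub_cancel_left]
  refine (abs_sum_le_sum_abs _ _).trans ?_
  have h1 := sum_Ioc_inv_sq_le_sub (α := ℝ) (k := K) (n := M) (by omega) hM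
  have h2 : (Finset.Ico (K + 1) (M + 1)) = Finset.Ioc K M := by
    ext; simp
  rw [h2]
  refine le_trans (Finset.sum_le_sum fun n hn => ?_) (h1.trans ?_)
  · have hn' : 0 < (n : ℝ) := by
      simp only [Finset.mem_Ioc] at hn
      exact_mod_cast (by omega : 0 < n)
    rw [abs_div, abs_of_pos (by positivity : 0 < 2 * Real.pi ^ 2 * (n : ℝ) ^ 2),
      div_le_iff₀ (by positivity)]
    have := Real.abs_cos_le_one (2 * Real.pi * n * t)
    have hpi := Real.pi_gt_three
    field_simp
    nlinarith
  · have : (0 : ℝ) ≤ (M : ℝ)⁻¹ := by positivity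
    rw [one_div]
    linarith

/-- Normalised second difference of `sawPrim`. -/
def sawDiff (h t : ℝ) : ℝ := (2 * sawPrim t - sawPrim (t + h) - sawPrim (t - h)) / h

/-- Normalised second difference of `sawTrig`. -/
def sawDiffTrig (K : ℕ) (h t : ℝ) : ℝ :=
  (2 * sawTrig K t - sawTrig K (t + h) - sawTrig K (t - h)) / h

lemma neg_le_sawDiff {h : ℝ} (hh : 0 < h) (t : ℝ) : -h ≤ sawDiff h t := by
  unfold sawDiff
  have h1 := sawPrim_le (t + h) ⌊t⌋
  have h2 := sawPrim_le (t - h) ⌊t⌋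
  rw [le_div_iff₀ hh, sawPrim_eq t]
  nlinarith

lemma abs_sawDiff_sub_sawDiffTrig_le {K : ℕ} (hK : 1 ≤ K) {h : ℝ} (hh : 0 < h) (t : ℝ) :
    |sawDiff h t - sawDiffTrig K h t| ≤ 4 / (h * K) := by
  have hK' : (0 : ℝ) < K := by exact_mod_cast hK
  have h1 := abs_le.1 (abs_sawPrim_sub_sawTrig_le hK t)
  have h2 := abs_le.1 (abs_sawPrim_sub_sawTrig_le hK (t + h))
  have h3 := abs_le.1 (abs_sawPrim_sub_sawTrig_le hK (t - h))
  have : (4 : ℝ) / (h * K) = (4 * (1 / K)) / h := by field_simp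
  rw [sawDiff, sawDiffTrig, ← sub_div, abs_div, abs_of_pos hh, this]
  gcongr
  rw [abs_le]
  constructor <;> linarith [h1.1, h1.2, h2.1, h2.2, h3.1, h3.2]

lemma sawtooth_remainder_bounds {h : ℝ} (hh : 0 < h) (t : ℝ) :
    |(Int.fract t - 1 / 2) - (sawPrim (t + h) - sawPrim t) / h| ≤ sawDiff h t + 3 / 2 * h := by
  have h1 := sawPrim_le (t + h) ⌊t⌋
  have h2 := sawPrim_le (t - h) ⌊t⌋
  have h0 := sawPrim_eq t
  have hd : sawDiff h t = (2 * sawPrim t - sawPrim (t + h) - sawPrim (t - h)) / h := rfl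
  have hl := neg_le_sawDiff hh t
  have e1 : (sawPrim (t + h) - sawPrim t) / h ≤ (Int.fract t - 1 / 2) + h / 2 := by
    rw [div_le_iff₀ hh, Int.fract]; nlinarith
  have e2 : (Int.fract t - 1 / 2) - (sawPrim (t + h) - sawPrim t) / h ≤ sawDiff h t + h / 2 := by
    have : Int.fract t - 1 / 2 ≤ (sawPrim t - sawPrim (t - h)) / h + h / 2 := by
      rw [← sub_le_iff_le_add, le_div_iff₀ hh, Int.fract]; nlinarith
    have e3 : sawDiff h t = (sawPrim t - sawPrim (t - h)) / h - (sawPrim (t + h) - sawPrim t) / h := by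
      rw [hd]; ring
    linarith
  rw [abs_le]
  constructor <;> linarith

/-- Fourier coefficient of the normalised second difference. -/
def sawCoeff (h : ℝ) (n : ℕ) : ℝ :=
  (1 - Real.cos (2 * Real.pi * n * h)) / (Real.pi ^ 2 * (n : ℝ) ^ 2 * h)

lemma sawDiffTrig_eq (K : ℕ) (h t : ℝ) :
    sawDiffTrig K h t = ∑ n ∈ range (K + 1), sawCoeff h n * Real.cos (2 * Real.pi * n * t) := by
  simp only [sawDiffTrig, sawTrig, Finset.mul_sum, ← Finset.sum_sub_distrib, Finset.sum_div]
  refine Finset.sum_congr rfl fun n _ => ?_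
  rw [mul_add, mul_sub, Real.cos_add, Real.cos_sub, sawCoeff]
  rcases eq_or_ne n 0 with rfl | hn
  · simp
  · rcases eq_or_ne h 0 with rfl | hh
    · simp
    field_simp
    ring

lemma sawCoeff_nonneg {h : ℝ} (hh : 0 < h) (n : ℕ) : 0 ≤ sawCoeff h n := by
  unfold sawCoeff
  have := Real.cos_le_one (2 * Real.pi * n * h)
  have : 0 ≤ 1 - Real.cos (2 * Real.pi * n * h) := by linarith
  positivity

lemma sawCoeff_le_mul {h : ℝ} (hh : 0 < h) (n : ℕ) : sawCoeff h n ≤ 2 * h := by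
  unfold sawCoeff
  rcases eq_or_ne n 0 with rfl | hn
  · simp; positivity
  have hn' : 0 < (n : ℝ) := by positivity
  have h1 := Real.one_sub_sq_div_two_le_cos (x := 2 * Real.pi * n * h)
  rw [div_le_iff₀ (by positivity)]
  nlinarith

lemma sawCoeff_le_inv {h : ℝ} (hh : 0 < h) {n : ℕ} (hn : n ≠ 0) :
    sawCoeff h n ≤ 1 / ((n : ℝ) ^ 2 * h) := by
  unfold sawCoeff
  have hn' : 0 < (n : ℝ) := by positivity
  have h1 := Real.neg_one_le_cos (2 * Real.pi * n * h)
  rw [div_le_div_iff₀ (by positivity) (by positivity)]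
  have hpi : 9 ≤ Real.pi ^ 2 := by nlinarith [Real.pi_gt_three]
  have : 0 < (n : ℝ) ^ 2 * h := by positivity
  nlinarith

lemma sawCoeff_zero (h : ℝ) : sawCoeff h 0 = 0 := by simp [sawCoeff]

/-! ### Trigonometric polynomials -/

/-- The additive character `x ↦ exp (2πix)`. -/
def eu (x : ℝ) : ℂ := Complex.exp ((2 * Real.pi * x : ℝ) * Complex.I)

lemma eu_add (x y : ℝ) : eu (x + y) = eu x * eu y := by
  simp only [eu, ← Complex.exp_add]
  congr 1
  push_cast
  ring

lemma norm_eu (x : ℝ) : ‖eu x‖ = 1 := Complex.norm_exp_ofReal_mul_I _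

lemma eu_zero : eu 0 = 1 := by simp [eu]

lemma eu_add_eu_neg (x : ℝ) : eu x + eu (-x) = 2 * (Real.cos (2 * Real.pi * x) : ℂ) := by
  simp only [eu, Complex.ofReal_cos, Complex.cos]
  push_cast
  ring_nf

/-- `f` is the trigonometric polynomial of degree at most `K` with coefficients `c`. -/
def IsTrig (K : ℕ) (f : ℝ → ℝ) (c : ℤ → ℂ) : Prop :=
  ∀ t, (f t : ℂ) = ∑ n ∈ Icc (-(K : ℤ)) K, c n * eu (n * t)

lemma IsTrig.add {K : ℕ} {f g : ℝ → ℝ} {c d : ℤ → ℂ} (hf : IsTrig K f c) (hg : IsTrig K g d) :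
    IsTrig K (fun t => f t + g t) (fun n => c n + d n) := fun t => by
  simp only [Complex.ofReal_add, hf t, hg t, ← Finset.sum_add_distrib, add_mul]

lemma IsTrig.sub {K : ℕ} {f g : ℝ → ℝ} {c d : ℤ → ℂ} (hf : IsTrig K f c) (hg : IsTrig K g d) :
    IsTrig K (fun t => f t - g t) (fun n => c n - d n) := fun t => by
  simp only [Complex.ofReal_sub, hf t, hg t, ← Finset.sum_sub_distrib, sub_mul]

lemma IsTrig.const_mul {K : ℕ} {f : ℝ → ℝ} {c : ℤ → ℂ} (hf : IsTrig K f c) (a : ℝ) :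
    IsTrig K (fun t => a * f t) (fun n => a * c n) := fun t => by
  simp only [Complex.ofReal_mul, hf t, Finset.mul_sum, mul_assoc]

lemma IsTrig.shift {K : ℕ} {f : ℝ → ℝ} {c : ℤ → ℂ} (hf : IsTrig K f c) (s : ℝ) :
    IsTrig K (fun t => f (t + s)) (fun n => c n * eu (n * s)) := fun t => by
  simp only [hf (t + s)]
  refine Finset.sum_congr rfl fun n _ => ?_
  rw [mul_add, eu_add]
  ring

lemma isTrig_const (K : ℕ) (a : ℝ) : IsTrig K (fun _ => a) (fun n => if n = 0 then (a : ℂ) else 0) := by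
  intro t
  simp only [ite_mul, zero_mul]
  rw [Finset.sum_ite_eq' (Icc (-(K : ℤ)) K) 0]
  simp [eu_zero]

lemma isTrig_cos (K : ℕ) (a : ℕ → ℝ) (ha : a 0 = 0) :
    IsTrig K (fun t => ∑ n ∈ range (K + 1), a n * Real.cos (2 * Real.pi * n * t))
      (fun n => ((a n.natAbs / 2 : ℝ) : ℂ)) := by
  intro t
  induction K with
  | zero => simp [ha]
  | succ K ih =>
    beta_reduce at ih ⊢
    have hI : Icc (-((K + 1 : ℕ) : ℤ)) ((K + 1 : ℕ) : ℤ) =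
        insert ((K + 1 : ℕ) : ℤ) (insert (-((K + 1 : ℕ) : ℤ)) (Icc (-(K : ℤ)) K)) := by
      ext n; simp; omega
    rw [Finset.sum_range_succ, Complex.ofReal_add, ih, hI, Finset.sum_insert (by simp; omega),
      Finset.sum_insert (by simp)]
    have h := eu_add_eu_neg ((K + 1 : ℕ) * t)
    simp only [Int.natAbs_natCast, Int.natAbs_neg, Int.cast_natCast, Int.cast_neg]
    rw [neg_mul]
    rw [← mul_assoc (2 * Real.pi)] at h
    rw [Complex.ofReal_mul, Complex.ofReal_div]
    push_cast at h ⊢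
    linear_combination (-(a (K + 1) : ℂ) / 2) * h

lemma isTrig_sawDiffTrig (K : ℕ) (h : ℝ) :
    IsTrig K (sawDiffTrig K h) (fun n => ((sawCoeff h n.natAbs / 2 : ℝ) : ℂ)) := by
  have := isTrig_cos K (sawCoeff h) (sawCoeff_zero h)
  intro t
  rw [sawDiffTrig_eq]
  exact this t

/-! ### Dyadic decomposition of the indicator of an arc -/

/-- The size of the `n`-th Fourier coefficient of a dyadic piece of scale `2⁻ˡ`. -/
def dyadicWeight (l : ℕ) (n : ℤ) : ℝ := min ((2 : ℝ)⁻¹ ^ l) (2 ^ l / (max 1 |(n : ℝ)|) ^ 2)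

lemma dyadicWeight_nonneg (l : ℕ) (n : ℤ) : 0 ≤ dyadicWeight l n := by
  unfold dyadicWeight; positivity

lemma dyadicWeight_zero (l : ℕ) : dyadicWeight l 0 = (2 : ℝ)⁻¹ ^ l := by
  unfold dyadicWeight
  have h1 : (2 : ℝ)⁻¹ ^ l ≤ 1 := pow_le_one₀ (by norm_num) (by norm_num)
  have h2 : (1 : ℝ) ≤ 2 ^ l := one_le_pow₀ (by norm_num)
  simp only [Int.cast_zero, abs_zero, zero_le_one, sup_of_le_left, one_pow, div_one]
  exact min_eq_left (h1.trans h2)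

lemma sawCoeff_le_dyadicWeight {l : ℕ} {h : ℝ} (hh : 0 < h) {n : ℤ}
    (h1 : 2⁻¹ ^ l ≤ 2 * h) (h2 : h ≤ 2⁻¹ ^ l) : sawCoeff h n.natAbs / 2 ≤ dyadicWeight l n := by
  unfold dyadicWeight
  rcases eq_or_ne n 0 with rfl | hn
  · simp only [Int.natAbs_zero, sawCoeff_zero, zero_div]; positivity
  have hn1 : (1 : ℝ) ≤ |(n : ℝ)| := by exact_mod_cast Int.one_le_abs hn
  rw [max_eq_right hn1]
  refine le_min ?_ ?_
  · linarith [sawCoeff_le_mul hh n.natAbs]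
  · have := sawCoeff_le_inv hh (n := n.natAbs) (by simpa using hn)
    have e : ((n.natAbs : ℕ) : ℝ) = |(n : ℝ)| := by
      simp [Nat.cast_natAbs]
    rw [e] at this
    have h3 : 1 / (|(n : ℝ)| ^ 2 * h) / 2 ≤ 2 ^ l / |(n : ℝ)| ^ 2 := by
      rw [div_div, div_le_div_iff₀ (by positivity) (by positivity)]
      have h4 : (2 : ℝ) ^ l * 2⁻¹ ^ l = 1 := by rw [← mul_pow]; norm_num
      have h5 : 1 ≤ 2 ^ l * (2 * h) := by
        rw [← h4]; gcongr
      have : 0 < |(n : ℝ)| ^ 2 := by positivity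
      nlinarith
    linarith

/-- The dyadic piece of scale `2⁻ˡ` of the sawtooth function, truncated to frequencies at most
`4 ^ Λ`. -/
def sawPiece (Λ l : ℕ) (t : ℝ) : ℝ :=
  2⁻¹ * sawDiffTrig (4 ^ Λ) (2⁻¹ ^ (l + 1)) (t + 2⁻¹ ^ (l + 1))

/-- What remains of the sawtooth function after removing its pieces of scale larger than `2⁻ᴸ`. -/
def sawRem (Λ : ℕ) (t : ℝ) : ℝ := Int.fract t - 1 / 2 - ∑ l ∈ range Λ, sawPiece Λ l t

lemma sum_sawDiff (Λ : ℕ) (t : ℝ) :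
    ∑ l ∈ range Λ, 2⁻¹ * sawDiff (2⁻¹ ^ (l + 1)) (t + 2⁻¹ ^ (l + 1)) =
      (sawPrim (t + 2⁻¹ ^ Λ) - sawPrim t) / 2⁻¹ ^ Λ := by
  induction Λ with
  | zero => simp [sawPrim_add_one]
  | succ Λ ih =>
    rw [Finset.sum_range_succ, ih, sawDiff]
    have h1 : t + 2⁻¹ ^ (Λ + 1) + 2⁻¹ ^ (Λ + 1) = t + 2⁻¹ ^ Λ := by ring
    rw [h1, add_sub_cancel_right, pow_succ]
    field_simp
    ring

lemma abs_sawPiece_error (Λ l : ℕ) (t : ℝ) :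
    |2⁻¹ * sawDiff (2⁻¹ ^ (l + 1)) (t + 2⁻¹ ^ (l + 1)) - sawPiece Λ l t| ≤
      4 * 2 ^ l * 4⁻¹ ^ Λ := by
  have h := abs_sawDiff_sub_sawDiffTrig_le (K := 4 ^ Λ) (Nat.one_le_pow _ _ (by norm_num))
    (h := 2⁻¹ ^ (l + 1)) (by positivity) (t + 2⁻¹ ^ (l + 1))
  rw [sawPiece, ← mul_sub, abs_mul, abs_of_pos (by norm_num : (0 : ℝ) < 2⁻¹)]
  calc _ ≤ 2⁻¹ * (4 / (2⁻¹ ^ (l + 1) * ((4 ^ Λ : ℕ) : ℝ))) := by gcongr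
    _ = _ := by
      push_cast
      rw [pow_succ, inv_pow, inv_pow]
      field_simp

lemma two_pow_mul_le (Λ l : ℕ) (hl : l ≤ Λ) : (2 : ℝ) ^ l * 4⁻¹ ^ Λ ≤ 2⁻¹ ^ Λ := by
  have : (4 : ℝ)⁻¹ ^ Λ = 2⁻¹ ^ Λ * 2⁻¹ ^ Λ := by rw [← mul_pow]; norm_num
  rw [this, ← mul_assoc]
  have h1 : (2 : ℝ) ^ l * 2⁻¹ ^ Λ ≤ 2 ^ Λ * 2⁻¹ ^ Λ := by gcongr; norm_num
  have h2 : (2 : ℝ) ^ Λ * 2⁻¹ ^ Λ = 1 := by rw [← mul_pow]; norm_num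
  rw [h2] at h1
  have : (0 : ℝ) < 2⁻¹ ^ Λ := by positivity
  nlinarith

lemma abs_sawPiece_le {Λ l : ℕ} (hl : l < Λ) (t : ℝ) :
    |sawPiece Λ l t| ≤ sawPiece Λ l t + 10 * 2⁻¹ ^ l := by
  have h1 := abs_le.1 (abs_sawPiece_error Λ l t)
  have h2 := neg_le_sawDiff (h := 2⁻¹ ^ (l + 1)) (by positivity) (t + 2⁻¹ ^ (l + 1))
  have h3 := two_pow_mul_le Λ l hl.le
  have h4 : (2 : ℝ)⁻¹ ^ Λ ≤ 2⁻¹ ^ l := pow_le_pow_of_le_one (by norm_num) (by norm_num) hl.le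
  have h5 : (2 : ℝ)⁻¹ ^ (l + 1) = 2⁻¹ ^ l / 2 := by rw [pow_succ]; ring
  have h6 : (0 : ℝ) < 2⁻¹ ^ l := by positivity
  rw [h5] at h1 h2
  rw [abs_le]
  constructor <;> nlinarith

lemma abs_sawRem_le (Λ : ℕ) (t : ℝ) :
    |sawRem Λ t| ≤ sawDiffTrig (4 ^ Λ) (2⁻¹ ^ Λ) t + 10 * 2⁻¹ ^ Λ := by
  have h1 := sawtooth_remainder_bounds (h := 2⁻¹ ^ Λ) (by positivity) t
  have h2 := abs_le.1 <| abs_sawDiff_sub_sawDiffTrig_le (K := 4 ^ Λ)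
    (Nat.one_le_pow _ _ (by norm_num)) (h := 2⁻¹ ^ Λ) (by positivity) t
  have h3 : (4 : ℝ) / (2⁻¹ ^ Λ * ((4 ^ Λ : ℕ) : ℝ)) = 4 * 2⁻¹ ^ Λ := by
    have : (4 : ℝ) ^ Λ = 2 ^ Λ * 2 ^ Λ := by rw [← mul_pow]; norm_num
    push_cast
    rw [inv_pow, this]
    field_simp
  rw [h3] at h2
  rw [← sum_sawDiff] at h1
  have h4 : |∑ l ∈ range Λ, (2⁻¹ * sawDiff (2⁻¹ ^ (l + 1)) (t + 2⁻¹ ^ (l + 1)) - sawPiece Λ l t)| ≤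
      4 * 2⁻¹ ^ Λ := by
    refine (abs_sum_le_sum_abs _ _).trans
      ((Finset.sum_le_sum fun l _ => abs_sawPiece_error Λ l t).trans ?_)
    rw [← Finset.sum_mul, ← Finset.mul_sum, mul_assoc]
    have h5 : ∑ l ∈ range Λ, (2 : ℝ) ^ l ≤ 2 ^ Λ := by
      rw [geom_sum_eq (by norm_num)]; norm_num
    have h6 := two_pow_mul_le Λ Λ le_rfl
    have : (0 : ℝ) < 4⁻¹ ^ Λ := by positivity
    nlinarith
  rw [Finset.sum_sub_distrib] at h4
  have h1' := abs_le.1 h1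
  have h4' := abs_le.1 h4
  have : (0 : ℝ) < 2⁻¹ ^ Λ := by positivity
  rw [sawRem, abs_le]
  constructor <;> linarith [h1'.1, h1'.2, h4'.1, h4'.2, h2.1, h2.2]

/-- The pieces of the sawtooth function, the last one being the remainder. -/
def sawPart (Λ l : ℕ) (t : ℝ) : ℝ := if l < Λ then sawPiece Λ l t else sawRem Λ t

/-- Trigonometric polynomials majorising the pieces of the sawtooth function. -/
def sawMaj (Λ l : ℕ) (t : ℝ) : ℝ :=
  (if l < Λ then sawPiece Λ l t else sawDiffTrig (4 ^ Λ) (2⁻¹ ^ Λ) t) + 10 * 2⁻¹ ^ l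

lemma abs_sawPart_le {Λ l : ℕ} (hl : l ≤ Λ) (t : ℝ) : |sawPart Λ l t| ≤ sawMaj Λ l t := by
  unfold sawPart sawMaj
  split_ifs with h
  · exact abs_sawPiece_le h t
  · obtain rfl : l = Λ := by omega
    exact abs_sawRem_le l t

lemma sum_sawPart (Λ : ℕ) (t : ℝ) :
    ∑ l ∈ range (Λ + 1), sawPart Λ l t = Int.fract t - 1 / 2 := by
  rw [Finset.sum_range_succ]
  have : ∑ l ∈ range Λ, sawPart Λ l t = ∑ l ∈ range Λ, sawPiece Λ l t :=
    Finset.sum_congr rfl fun l hl => by simp [sawPart, Finset.mem_range.1 hl]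
  rw [this, sawPart, if_neg (lt_irrefl _), sawRem]
  ring

lemma exists_isTrig_sawPiece (Λ l : ℕ) :
    ∃ c : ℤ → ℂ, IsTrig (4 ^ Λ) (sawPiece Λ l) c ∧ c 0 = 0 ∧ ∀ n, ‖c n‖ ≤ dyadicWeight l n := by
  have h := ((isTrig_sawDiffTrig (4 ^ Λ) (2⁻¹ ^ (l + 1))).shift (2⁻¹ ^ (l + 1))).const_mul 2⁻¹
  refine ⟨_, h, by simp [sawCoeff_zero], fun n => ?_⟩
  have h0 : (0 : ℝ) < 2⁻¹ ^ (l + 1) := by positivity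
  have h1 := sawCoeff_nonneg h0 n.natAbs
  have h5 : (2 : ℝ)⁻¹ ^ (l + 1) = 2⁻¹ ^ l / 2 := by rw [pow_succ]; ring
  have h2 := sawCoeff_le_dyadicWeight (l := l) h0 (n := n) (by rw [h5]; linarith)
    (by rw [h5] at h0 ⊢; linarith)
  rw [norm_mul, norm_mul, norm_eu, Complex.norm_real, Complex.norm_real, mul_one,
    Real.norm_of_nonneg (by positivity), Real.norm_of_nonneg (by positivity)]
  linarith

lemma exists_isTrig_sawMaj {Λ l : ℕ} (hl : l ≤ Λ) :
    ∃ c : ℤ → ℂ, IsTrig (4 ^ Λ) (sawMaj Λ l) c ∧ ∀ n, ‖c n‖ ≤ 10 * dyadicWeight l n := by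
  have key : ∃ c : ℤ → ℂ, IsTrig (4 ^ Λ)
      (fun t => if l < Λ then sawPiece Λ l t else sawDiffTrig (4 ^ Λ) (2⁻¹ ^ Λ) t) c ∧ c 0 = 0 ∧
      ∀ n, ‖c n‖ ≤ dyadicWeight l n := by
    by_cases h : l < Λ
    · simp only [h, if_true]
      exact exists_isTrig_sawPiece Λ l
    · obtain rfl : l = Λ := by omega
      simp only [h, if_false]
      refine ⟨_, isTrig_sawDiffTrig _ _, by simp [sawCoeff_zero], fun n => ?_⟩
      have h0 : (0 : ℝ) < 2⁻¹ ^ l := by positivity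
      have h1 := sawCoeff_nonneg h0 n.natAbs
      rw [Complex.norm_real, Real.norm_of_nonneg (by positivity)]
      exact sawCoeff_le_dyadicWeight h0 (by linarith) le_rfl
  obtain ⟨c, hc, hc0, hcn⟩ := key
  refine ⟨_, hc.add (isTrig_const _ (10 * 2⁻¹ ^ l)), fun n => ?_⟩
  rcases eq_or_ne n 0 with rfl | hn
  · rw [hc0, dyadicWeight_zero]
    simp
  · simp only [hn, if_false, add_zero]
    linarith [hcn n, dyadicWeight_nonneg l n]

lemma indicator_eq_sawtooth {x : ℝ} (hx : x ∈ Set.Icc (0 : ℝ) 1) (y : ℝ) :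
    (if Int.fract y < x then (1 : ℝ) else 0) =
      x + (Int.fract (y - x) - 1 / 2) - (Int.fract y - 1 / 2) := by
  have h0 := Int.fract_nonneg y
  have h1 := Int.fract_lt_one y
  have hy := Int.floor_add_fract y
  split_ifs with h
  · have : Int.fract (y - x) = Int.fract y - x + 1 := by
      rw [Int.fract_eq_iff]
      refine ⟨by linarith [hx.2], by linarith, ⌊y⌋ - 1, ?_⟩
      push_cast
      linarith
    rw [this]; ring
  · have : Int.fract (y - x) = Int.fract y - x := by
      rw [Int.fract_eq_iff]
      refine ⟨by linarith, by linarith [hx.1], ⌊y⌋, ?_⟩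
      linarith
    rw [this]; ring

/-- The indicator of the arc `[0, x)` is a sum of pieces of scale `2⁻ˡ`, `0 ≤ l ≤ Λ`, all but the
last of which are trigonometric polynomials with controlled coefficients, and all of which have
controlled trigonometric majorants. -/
theorem exists_dyadic_decomposition (Λ : ℕ) {x : ℝ} (hx : x ∈ Set.Icc (0 : ℝ) 1) :
    ∃ (u v : ℕ → ℝ → ℝ) (c d : ℕ → ℤ → ℂ),
      (∀ y, (if Int.fract y < x then (1 : ℝ) else 0) = ∑ l ∈ range (Λ + 1), u l y) ∧
      (∀ l ≤ Λ, ∀ y, |u l y| ≤ v l y) ∧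
      (∀ l < Λ, IsTrig (4 ^ Λ) (u l) (c l)) ∧
      (∀ l ≤ Λ, IsTrig (4 ^ Λ) (v l) (d l)) ∧
      (∀ l < Λ, ∀ n, ‖c l n‖ ≤ 21 * dyadicWeight l n) ∧
      (∀ l ≤ Λ, ∀ n, ‖d l n‖ ≤ 21 * dyadicWeight l n) ∧
      (∀ l < Λ, c l 0 = if l = 0 then (x : ℂ) else 0) := by
  choose p hp hp0 hpn using exists_isTrig_sawPiece Λ
  choose! q hq hqn using fun l => @exists_isTrig_sawMaj Λ l
  refine ⟨fun l y => (if l = 0 then x else 0) + sawPart Λ l (y + -x) - sawPart Λ l y,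
    fun l y => (if l = 0 then 1 else 0) + sawMaj Λ l (y + -x) + sawMaj Λ l y,
    fun l n => (if n = 0 then (((if l = 0 then x else 0 : ℝ)) : ℂ) else 0)
      + p l n * eu (n * (-x)) - p l n,
    fun l n => (if n = 0 then (((if l = 0 then 1 else 0 : ℝ)) : ℂ) else 0)
      + q l n * eu (n * (-x)) + q l n, ?_, ?_, ?_, ?_, ?_, ?_, ?_⟩
  · intro y
    rw [Finset.sum_sub_distrib, Finset.sum_add_distrib, sum_sawPart, sum_sawPart,
      indicator_eq_sawtooth hx, Finset.sum_ite_eq' (range (Λ + 1)) 0]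
    simp [sub_eq_add_neg]
  · intro l hl y
    have h1 := abs_le.1 (abs_sawPart_le hl (y + -x))
    have h2 := abs_le.1 (abs_sawPart_le hl y)
    have h3 : (0 : ℝ) ≤ (if l = 0 then x else 0) ∧
        (if l = 0 then x else 0) ≤ (if l = 0 then (1 : ℝ) else 0) := by
      split_ifs
      exacts [⟨hx.1, hx.2⟩, ⟨le_rfl, le_rfl⟩]
    rw [abs_le]
    constructor <;> linarith [h1.1, h1.2, h2.1, h2.2, h3.1, h3.2]
  · intro l hl
    have h : sawPart Λ l = sawPiece Λ l := by
      ext t; simp [sawPart, hl]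
    beta_reduce
    rw [h]
    exact ((isTrig_const _ _).add ((hp l).shift (-x))).sub (hp l)
  · intro l hl
    exact ((isTrig_const _ _).add ((hq l hl).shift (-x))).add (hq l hl)
  · intro l hl n
    have h1 := hpn l n
    have h2 := dyadicWeight_nonneg l n
    refine (norm_sub_le _ _).trans ((add_le_add (norm_add_le _ _) h1).trans ?_)
    rw [norm_mul, norm_eu, mul_one]
    have h3 : ‖(if n = 0 then (((if l = 0 then x else 0 : ℝ)) : ℂ) else 0)‖ ≤ dyadicWeight l n := by
      split_ifs with hn hl0
      · subst hn hl0
        rw [dyadicWeight_zero, Complex.norm_real, Real.norm_of_nonneg hx.1]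
        simpa using hx.2
      all_goals simpa using h2
    linarith
  · intro l hl n
    have h1 := hqn l hl n
    have h2 := dyadicWeight_nonneg l n
    refine (norm_add_le _ _).trans ((add_le_add (norm_add_le _ _) h1).trans ?_)
    rw [norm_mul, norm_eu, mul_one]
    have h3 : ‖(if n = 0 then (((if l = 0 then 1 else 0 : ℝ)) : ℂ) else 0)‖ ≤ dyadicWeight l n := by
      split_ifs with hn hl0
      · subst hn hl0
        rw [dyadicWeight_zero]
        simp
      all_goals simpa using h2
    linarith
  · intro l hl
    simp [hp0]
    split_ifs <;> simp

/-! ### Averages of exponential sums -/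

lemma eu_nat_mul (t : ℕ) (θ : ℝ) : eu (t * θ) = eu θ ^ t := by
  simp only [eu, ← Complex.exp_nat_mul]
  congr 1
  push_cast
  ring

lemma eu_intCast (n : ℤ) : eu n = 1 := by
  rw [eu, Complex.exp_eq_one_iff]
  exact ⟨n, by push_cast; ring⟩

lemma norm_eu_sub_one (θ : ℝ) : ‖eu θ - 1‖ = 2 * |Real.sin (Real.pi * θ)| := by
  have h : eu θ - 1 = Complex.exp (Complex.I * ((2 * Real.pi * θ : ℝ) : ℂ)) - 1 := by
    rw [eu, mul_comm]
  rw [h, Complex.norm_exp_I_mul_ofReal_sub_one]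
  rw [Real.norm_eq_abs, abs_mul, abs_two]
  congr 3
  ring

lemma four_mul_norm_le (θ : ℝ) : 4 * ‖(θ : UnitAddCircle)‖ ≤ ‖eu θ - 1‖ := by
  have h1 : eu θ = eu (θ - round θ) := by
    have h := eu_add (θ - round θ) (round θ)
    rw [sub_add_cancel, eu_intCast, mul_one] at h
    exact h
  rw [h1, norm_eu_sub_one, UnitAddCircle.norm_eq]
  set r := θ - round θ with hr
  have hr2 : |r| ≤ 1 / 2 := abs_sub_round θ
  have h2 : |Real.sin (Real.pi * r)| = Real.sin (Real.pi * |r|) := by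
    rcases le_total 0 r with h | h
    · rw [abs_of_nonneg h, abs_of_nonneg]
      rw [abs_of_nonneg h] at hr2
      exact Real.sin_nonneg_of_nonneg_of_le_pi (by positivity) (by nlinarith [Real.pi_pos])
    · rw [abs_of_nonpos h] at hr2 ⊢
      rw [mul_neg, Real.sin_neg, abs_of_nonpos]
      have : 0 ≤ Real.sin (Real.pi * -r) :=
        Real.sin_nonneg_of_nonneg_of_le_pi (mul_nonneg Real.pi_pos.le (by linarith))
          (by nlinarith [Real.pi_pos])
      rw [mul_neg, Real.sin_neg] at this
      linarith
  rw [h2]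
  have h3 := Real.mul_le_sin (x := Real.pi * |r|) (by positivity) (by nlinarith [Real.pi_pos])
  have h4 : 2 / Real.pi * (Real.pi * |r|) = 2 * |r| := by
    field_simp
  linarith

lemma norm_geom_sum_eu_le {θ : ℝ} (hθ : 0 < ‖(θ : UnitAddCircle)‖) (J : ℕ) :
    ‖∑ t ∈ range J, eu (t * θ)‖ ≤ 1 / ‖(θ : UnitAddCircle)‖ := by
  have h4 := four_mul_norm_le θ
  have hne : eu θ ≠ 1 := by
    intro h
    rw [h, sub_self, norm_zero] at h4
    linarith
  simp only [eu_nat_mul]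
  rw [geom_sum_eq hne, norm_div, div_le_div_iff₀ (by linarith) hθ]
  have : ‖eu θ ^ J - 1‖ ≤ 2 := by
    refine (norm_sub_le _ _).trans ?_
    rw [norm_pow, norm_eu]
    norm_num
  nlinarith

lemma norm_sum_eu_le_card (θ : ℝ) (J : ℕ) : ‖∑ t ∈ range J, eu (t * θ)‖ ≤ J := by
  refine (norm_sum_le _ _).trans ?_
  simp [norm_eu]

/-- Weight with which a frequency `θ` enters an average of length `M` of exponential sums. -/
def avgWeight (M : ℕ) (θ : ℝ) : ℝ :=
  min 1 (1 / (M * ‖(θ : UnitAddCircle)‖)) / ‖(θ : UnitAddCircle)‖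

lemma avgWeight_nonneg (M : ℕ) (θ : ℝ) : 0 ≤ avgWeight M θ := by
  unfold avgWeight
  positivity

lemma norm_double_sum_eu_le {θ : ℝ} (hθ : 0 < ‖(θ : UnitAddCircle)‖) {M : ℕ} (hM : 1 ≤ M)
    (J : ℕ) (a : ℤ) :
    ‖∑ s ∈ range M, ∑ t ∈ range J, eu (((a + s + t : ℤ) : ℝ) * θ)‖ ≤ M * avgWeight M θ := by
  have h : ∑ s ∈ range M, ∑ t ∈ range J, eu (((a + s + t : ℤ) : ℝ) * θ) =
      eu (a * θ) * ((∑ s ∈ range M, eu (s * θ)) * ∑ t ∈ range J, eu (t * θ)) := by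
    rw [Finset.sum_mul_sum, Finset.mul_sum]
    refine Finset.sum_congr rfl fun s _ => ?_
    rw [Finset.mul_sum]
    refine Finset.sum_congr rfl fun t _ => ?_
    push_cast
    rw [add_mul, add_mul, eu_add, eu_add, mul_assoc]
  have hM' : (0 : ℝ) < M := by exact_mod_cast hM
  rw [h, norm_mul, norm_eu, one_mul, norm_mul, avgWeight, ← mul_div_assoc, ← mul_one_div]
  refine mul_le_mul ?_ (norm_geom_sum_eu_le hθ J) (norm_nonneg _) (by positivity)
  rw [mul_min_of_nonneg _ _ hM'.le, mul_one]
  refine le_min (norm_sum_eu_le_card θ M) ((norm_geom_sum_eu_le hθ M).trans (le_of_eq ?_))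
  field_simp

lemma norm_average_sub_le {ι : Type*} (S : Finset ι) (θ : ι → ℝ)
    (hθ : ∀ n ∈ S, 0 < ‖(θ n : UnitAddCircle)‖) (G : ℤ → ℝ) (a₀ : ℂ) (g : ι → ℂ)
    (hG : ∀ τ, (G τ : ℂ) = a₀ + ∑ n ∈ S, g n * eu (τ * θ n)) {M : ℕ} (hM : 1 ≤ M) (J : ℕ)
    (a : ℤ) :
    ‖((∑ s ∈ range M, ∑ t ∈ range J, G (a + s + t) : ℝ) : ℂ) - M * (J * a₀)‖ ≤
      M * ∑ n ∈ S, ‖g n‖ * avgWeight M (θ n) := by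
  have h : ((∑ s ∈ range M, ∑ t ∈ range J, G (a + s + t) : ℝ) : ℂ) - M * (J * a₀) =
      ∑ n ∈ S, g n * ∑ s ∈ range M, ∑ t ∈ range J, eu (((a + s + t : ℤ) : ℝ) * θ n) := by
    push_cast
    simp only [hG, Finset.sum_add_distrib, Finset.sum_const, card_range, nsmul_eq_mul]
    rw [add_sub_cancel_left]
    simp only [Finset.mul_sum]
    rw [Finset.sum_comm (s := S)]
    refine Finset.sum_congr rfl fun s _ => ?_
    rw [Finset.sum_comm (s := S)]
    simp
  rw [h, Finset.mul_sum]
  refine (norm_sum_le _ _).trans (Finset.sum_le_sum fun n hn => ?_)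
  rw [norm_mul]
  calc _ ≤ ‖g n‖ * (M * avgWeight M (θ n)) :=
        mul_le_mul_of_nonneg_left (norm_double_sum_eu_le (hθ n hn) hM J a) (norm_nonneg _)
    _ = _ := by ring

lemma sum_block_le {ι : Type*} (S : Finset ι) (θ : ι → ℝ)
    (hθ : ∀ n ∈ S, 0 < ‖(θ n : UnitAddCircle)‖) (V : ℤ → ℝ) (hV : ∀ τ, 0 ≤ V τ) (d₀ : ℂ)
    (d : ι → ℂ) (hG : ∀ τ, (V τ : ℂ) = d₀ + ∑ n ∈ S, d n * eu (τ * θ n)) {M : ℕ} (hM : 1 ≤ M)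
    (a : ℤ) :
    ∑ t ∈ range M, V (a + t) ≤ 2 * (M * ‖d₀‖) + ∑ n ∈ S, ‖d n‖ * avgWeight M (θ n) := by
  have hM' : (0 : ℝ) < M := by exact_mod_cast hM
  have h1 := norm_average_sub_le S θ hθ V d₀ d hG hM (2 * M) (a - M)
  have h2 : ∀ s ∈ range M,
      ∑ t ∈ range M, V (a + t) ≤ ∑ t ∈ range (2 * M), V (a - M + s + t) := by
    intro s hs
    have hs' := Finset.mem_range.1 hs
    have h3 : ∑ t ∈ range M, V (a + t) =
        ∑ t ∈ (range M).image (fun t => t + (M - s)), V (a - M + s + t) := by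
      rw [Finset.sum_image fun x _ y _ h => by simpa using h]
      refine Finset.sum_congr rfl fun t _ => ?_
      congr 1
      push_cast [Nat.cast_sub hs'.le]
      ring
    rw [h3]
    refine Finset.sum_le_sum_of_subset_of_nonneg ?_ fun _ _ _ => hV _
    intro t ht
    simp only [Finset.mem_image, Finset.mem_range] at ht ⊢
    omega
  have h4 : M * ∑ t ∈ range M, V (a + t) ≤
      ∑ s ∈ range M, ∑ t ∈ range (2 * M), V (a - M + s + t) := by
    have := Finset.sum_le_sum h2
    simpa using this
  have h5 : ∑ s ∈ range M, ∑ t ∈ range (2 * M), V (a - M + s + t) ≤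
      M * (2 * (M * ‖d₀‖)) + M * ∑ n ∈ S, ‖d n‖ * avgWeight M (θ n) := by
    refine (le_abs_self _).trans ?_
    rw [← Real.norm_eq_abs, ← Complex.norm_real]
    have h6 := norm_le_norm_sub_add
      ((∑ s ∈ range M, ∑ t ∈ range (2 * M), V (a - M + s + t) : ℝ) : ℂ)
      (M * (((2 * M : ℕ) : ℂ) * d₀))
    refine h6.trans ?_
    rw [add_comm]
    refine add_le_add (le_of_eq ?_) h1
    simp only [norm_mul, Complex.norm_natCast]
    push_cast
    ring
  rw [← mul_add] at h5
  exact le_of_mul_le_mul_left (h4.trans h5) hM'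

lemma abs_sum_sub_sum_shift_le (f : ℤ → ℝ) (a : ℤ) (m s : ℕ) :
    |∑ t ∈ range m, f (a + t) - ∑ t ∈ range m, f (a + s + t)| ≤
      ∑ t ∈ range s, |f (a + t)| + ∑ t ∈ range s, |f (a + m + t)| := by
  have h : ∑ t ∈ range m, f (a + t) - ∑ t ∈ range m, f (a + s + t) =
      ∑ t ∈ range s, f (a + t) - ∑ t ∈ range s, f (a + m + t) := by
    have h1 := Finset.sum_range_add (fun t : ℕ => f (a + t)) m s
    have h2 := Finset.sum_range_add (fun t : ℕ => f (a + t)) s m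
    rw [add_comm s m, h1] at h2
    simp only [Nat.cast_add, ← add_assoc] at h2
    linarith
  rw [h]
  exact (abs_sub _ _).trans (add_le_add (Finset.abs_sum_le_sum_abs _ _)
    (Finset.abs_sum_le_sum_abs _ _))

lemma norm_sum_sub_le {ι : Type*} (S : Finset ι) (θ : ι → ℝ)
    (hθ : ∀ n ∈ S, 0 < ‖(θ n : UnitAddCircle)‖) (f V : ℤ → ℝ) (hfV : ∀ τ, |f τ| ≤ V τ)
    (c₀ d₀ : ℂ) (c d : ι → ℂ) (hf : ∀ τ, (f τ : ℂ) = c₀ + ∑ n ∈ S, c n * eu (τ * θ n))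
    (hV : ∀ τ, (V τ : ℂ) = d₀ + ∑ n ∈ S, d n * eu (τ * θ n)) {M : ℕ} (hM : 1 ≤ M) (w : ι → ℝ)
    (hc : ∀ n ∈ S, ‖c n‖ ≤ w n) (hd : ∀ n ∈ S, ‖d n‖ ≤ w n) (a : ℤ) (m : ℕ) :
    ‖((∑ t ∈ range m, f (a + t) : ℝ) : ℂ) - m * c₀‖ ≤
      4 * (M * ‖d₀‖) + 3 * ∑ n ∈ S, w n * avgWeight M (θ n) := by
  have hM' : (0 : ℝ) < M := by exact_mod_cast hM
  have hV0 : ∀ τ, 0 ≤ V τ := fun τ => (abs_nonneg _).trans (hfV τ)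
  set W := ∑ n ∈ S, w n * avgWeight M (θ n) with hW
  have hcw : ∑ n ∈ S, ‖c n‖ * avgWeight M (θ n) ≤ W :=
    Finset.sum_le_sum fun n hn => mul_le_mul_of_nonneg_right (hc n hn) (avgWeight_nonneg _ _)
  have hdw : ∑ n ∈ S, ‖d n‖ * avgWeight M (θ n) ≤ W :=
    Finset.sum_le_sum fun n hn => mul_le_mul_of_nonneg_right (hd n hn) (avgWeight_nonneg _ _)
  have hblock : ∀ b : ℤ, ∀ s ∈ range M, ∑ t ∈ range s, |f (b + t)| ≤ 2 * (M * ‖d₀‖) + W := by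
    intro b s hs
    calc _ ≤ ∑ t ∈ range s, V (b + t) := Finset.sum_le_sum fun t _ => hfV _
      _ ≤ ∑ t ∈ range M, V (b + t) :=
        Finset.sum_le_sum_of_subset_of_nonneg
          (Finset.range_mono (Finset.mem_range.1 hs).le) fun _ _ _ => hV0 _
      _ ≤ _ := (sum_block_le S θ hθ V hV0 d₀ d hV hM b).trans (by linarith)
  have h1 := norm_average_sub_le S θ hθ f c₀ c hf hM m a
  have h2 : |M * ∑ t ∈ range m, f (a + t) - ∑ s ∈ range M, ∑ t ∈ range m, f (a + s + t)| ≤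
      M * (2 * (2 * (M * ‖d₀‖) + W)) := by
    have h3 : M * ∑ t ∈ range m, f (a + t) - ∑ s ∈ range M, ∑ t ∈ range m, f (a + s + t) =
        ∑ s ∈ range M, (∑ t ∈ range m, f (a + t) - ∑ t ∈ range m, f (a + s + t)) := by
      rw [Finset.sum_sub_distrib]
      simp
    rw [h3]
    refine (Finset.abs_sum_le_sum_abs _ _).trans ?_
    have := Finset.sum_le_sum (s := range M) fun s hs => (abs_sum_sub_sum_shift_le f a m s).trans
      (add_le_add (hblock a s hs) (hblock (a + m) s hs))
    refine this.trans (le_of_eq ?_)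
    simp
    ring
  have h4 : (M : ℝ) * ‖((∑ t ∈ range m, f (a + t) : ℝ) : ℂ) - m * c₀‖ ≤
      M * (4 * (M * ‖d₀‖) + 3 * W) := by
    have h5 : (M : ℝ) * ‖((∑ t ∈ range m, f (a + t) : ℝ) : ℂ) - m * c₀‖ =
        ‖(((M * ∑ t ∈ range m, f (a + t) - ∑ s ∈ range M, ∑ t ∈ range m, f (a + s + t) : ℝ)) : ℂ)
          + (((∑ s ∈ range M, ∑ t ∈ range m, f (a + s + t) : ℝ) : ℂ) - M * (m * c₀))‖ := by
      nth_rewrite 1 [← Complex.norm_natCast]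
      rw [← norm_mul]
      congr 1
      push_cast
      ring
    rw [h5]
    refine (norm_add_le _ _).trans ?_
    rw [Complex.norm_real, Real.norm_eq_abs]
    nlinarith [mul_le_mul_of_nonneg_left hcw hM'.le]
  exact (mul_le_mul_iff_right₀ hM').1 h4

/-! ### The deterministic bound for the discrepancy -/

/-- The linear form `n · α`. -/
def linForm {k : ℕ} (n : Fin k → ℤ) (α : Fin k → ℝ) : ℝ := ∑ i, (n i : ℝ) * α i

/-- The multiplicative height `∏ max(1, |nᵢ|)`. -/
def hypHeight {k : ℕ} (n : Fin k → ℤ) : ℝ := ∏ i, max 1 |(n i : ℝ)|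

/-- The nonzero frequencies in the cube `[-4^Λ, 4^Λ]^k`. -/
def freqBox (k Λ : ℕ) : Finset (Fin k → ℤ) :=
  (Fintype.piFinset fun _ : Fin k => Icc (-((4 ^ Λ : ℕ) : ℤ)) ((4 ^ Λ : ℕ) : ℤ)).erase 0

lemma hypHeight_pos {k : ℕ} (n : Fin k → ℤ) : 0 < hypHeight n :=
  Finset.prod_pos fun _ _ => lt_max_of_lt_left one_pos

lemma one_le_hypHeight {k : ℕ} (n : Fin k → ℤ) : 1 ≤ hypHeight n :=
  Finset.prod_induction _ (fun y : ℝ => 1 ≤ y) (fun _ _ ha hb => one_le_mul_of_one_le_of_one_le ha hb)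
    le_rfl fun _ _ => le_max_left _ _

lemma prod_isTrig {k Λ : ℕ} (α : Fin k → ℝ) (F : Fin k → ℝ → ℝ) (c : Fin k → ℤ → ℂ)
    (h : ∀ i, IsTrig (4 ^ Λ) (F i) (c i)) (τ : ℤ) :
    ((∏ i, F i (τ * α i) : ℝ) : ℂ) =
      ∏ i, c i 0 + ∑ n ∈ freqBox k Λ, (∏ i, c i (n i)) * eu (τ * linForm n α) := by
  have heu : ∀ n : Fin k → ℤ, ∏ i, eu (n i * (τ * α i)) = eu (τ * linForm n α) := by
    intro n
    simp only [linForm, eu, ← Complex.exp_sum]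
    congr 1
    push_cast
    rw [Finset.mul_sum, Finset.mul_sum, Finset.sum_mul]
    exact Finset.sum_congr rfl fun i _ => by ring
  push_cast
  simp only [fun i => h i (τ * α i)]
  rw [Finset.prod_univ_sum]
  simp only [Finset.prod_mul_distrib, heu]
  rw [freqBox, ← Finset.add_sum_erase _ _ (a := (0 : Fin k → ℤ))]
  · simp [linForm, eu_zero]
  · simp

lemma norm_piece_sub_le {k Λ : ℕ} {α : Fin k → ℝ}
    (hα : ∀ n ∈ freqBox k Λ, 0 < ‖(linForm n α : UnitAddCircle)‖) {x : Fin k → ℝ}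
    (hΛ : 1 ≤ Λ) (u v : Fin k → ℕ → ℝ → ℝ) (c d : Fin k → ℕ → ℤ → ℂ)
    (huv : ∀ i, ∀ l ≤ Λ, ∀ y, |u i l y| ≤ v i l y)
    (hu : ∀ i, ∀ l < Λ, IsTrig (4 ^ Λ) (u i l) (c i l))
    (hv : ∀ i, ∀ l ≤ Λ, IsTrig (4 ^ Λ) (v i l) (d i l))
    (hc : ∀ i, ∀ l < Λ, ∀ n, ‖c i l n‖ ≤ 21 * dyadicWeight l n)
    (hd : ∀ i, ∀ l ≤ Λ, ∀ n, ‖d i l n‖ ≤ 21 * dyadicWeight l n)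
    (hc0 : ∀ i, ∀ l < Λ, c i l 0 = if l = 0 then (x i : ℂ) else 0)
    {m : ℕ} (hm : m ≤ 2 ^ Λ) {l : Fin k → ℕ} (hl : ∀ i, l i ≤ Λ) :
    |∑ t ∈ range m, ∏ i, u i (l i) (((1 + t : ℤ) : ℝ) * α i)
        - (if l = 0 then m * ∏ i, x i else 0)| ≤
      4 * 21 ^ k + 3 * ∑ n ∈ freqBox k Λ,
        (∏ i, 21 * dyadicWeight (l i) (n i)) * avgWeight (2 ^ ∑ i, l i) (linForm n α) := by
  set M := 2 ^ ∑ i, l i with hMdef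
  have hM : 1 ≤ M := Nat.one_le_two_pow
  have hd0 : M * ‖∏ i, d i (l i) 0‖ ≤ 21 ^ k := by
    rw [norm_prod]
    have h1 : ∏ i, ‖d i (l i) 0‖ ≤ ∏ i : Fin k, 21 * (2 : ℝ)⁻¹ ^ l i :=
      Finset.prod_le_prod (fun _ _ => norm_nonneg _) fun i _ =>
        (hd i _ (hl i) 0).trans (by rw [dyadicWeight_zero])
    rw [Finset.prod_mul_distrib, Finset.prod_pow_eq_pow_sum] at h1
    simp only [prod_const, card_univ, Fintype.card_fin] at h1
    have hM0 : (0 : ℝ) < M := by exact_mod_cast hM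
    refine (mul_le_mul_of_nonneg_left h1 hM0.le).trans (le_of_eq ?_)
    rw [hMdef]
    push_cast
    rw [inv_pow]
    field_simp
  have hdn : ∀ n ∈ freqBox k Λ, ‖∏ i, d i (l i) (n i)‖ ≤ ∏ i, 21 * dyadicWeight (l i) (n i) := by
    intro n _
    rw [norm_prod]
    exact Finset.prod_le_prod (fun _ _ => norm_nonneg _) fun i _ => hd i _ (hl i) _
  have hV := prod_isTrig α (fun i => v i (l i)) (fun i => d i (l i)) fun i => hv i _ (hl i)
  have hfV : ∀ τ : ℤ, |∏ i, u i (l i) (τ * α i)| ≤ ∏ i, v i (l i) (τ * α i) := by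
    intro τ
    rw [Finset.abs_prod]
    exact Finset.prod_le_prod (fun _ _ => abs_nonneg _) fun i _ => huv i _ (hl i) _
  have hS0 : 0 ≤ ∑ n ∈ freqBox k Λ,
      (∏ i, 21 * dyadicWeight (l i) (n i)) * avgWeight M (linForm n α) :=
    Finset.sum_nonneg fun n _ => mul_nonneg
      (Finset.prod_nonneg fun i _ => mul_nonneg (by norm_num) (dyadicWeight_nonneg _ _))
      (avgWeight_nonneg _ _)
  by_cases hall : ∀ i, l i < Λ
  · have hcn : ∀ n ∈ freqBox k Λ,
        ‖∏ i, c i (l i) (n i)‖ ≤ ∏ i, 21 * dyadicWeight (l i) (n i) := by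
      intro n _
      rw [norm_prod]
      exact Finset.prod_le_prod (fun _ _ => norm_nonneg _) fun i _ => hc i _ (hall i) _
    have h := norm_sum_sub_le (freqBox k Λ) (fun n => linForm n α) hα
      (fun τ => ∏ i, u i (l i) (τ * α i)) (fun τ => ∏ i, v i (l i) (τ * α i)) hfV _ _ _ _
      (prod_isTrig α (fun i => u i (l i)) (fun i => c i (l i)) fun i => hu i _ (hall i)) hV hM _
      hcn hdn 1 m
    have h0 : ∏ i, c i (l i) 0 = if l = 0 then ((∏ i, x i : ℝ) : ℂ) else 0 := by
      split_ifs with hl0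
      · push_cast
        exact Finset.prod_congr rfl fun i _ => by rw [hc0 i _ (hall i)]; simp [hl0]
      · obtain ⟨i, hi⟩ := Function.ne_iff.1 hl0
        exact Finset.prod_eq_zero (Finset.mem_univ i) (by rw [hc0 i _ (hall i)]; exact if_neg hi)
    rw [← Real.norm_eq_abs, ← Complex.norm_real]
    refine le_trans (le_of_eq ?_) (h.trans (by linarith))
    rw [h0]
    split_ifs <;> simp
  · push Not at hall
    obtain ⟨i, hi⟩ := hall
    have hl0 : l ≠ 0 := by
      rintro rfl
      simp at hi
      omega
    have hmM : m ≤ M := hm.trans (Nat.pow_le_pow_right (by norm_num)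
      (hi.trans (Finset.single_le_sum (f := l) (fun _ _ => Nat.zero_le _) (Finset.mem_univ i))))
    rw [if_neg hl0, sub_zero]
    have hV0 : ∀ τ : ℤ, 0 ≤ ∏ i, v i (l i) (τ * α i) := fun τ => (abs_nonneg _).trans (hfV τ)
    calc _ ≤ ∑ t ∈ range m, |∏ i, u i (l i) (((1 + t : ℤ) : ℝ) * α i)| :=
          Finset.abs_sum_le_sum_abs _ _
      _ ≤ ∑ t ∈ range m, ∏ i, v i (l i) (((1 + t : ℤ) : ℝ) * α i) :=
          Finset.sum_le_sum fun t _ => hfV _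
      _ ≤ ∑ t ∈ range M, ∏ i, v i (l i) (((1 + t : ℤ) : ℝ) * α i) :=
          Finset.sum_le_sum_of_subset_of_nonneg (Finset.range_mono hmM) fun _ _ _ => hV0 _
      _ ≤ _ := sum_block_le (freqBox k Λ) (fun n => linForm n α) hα
          (fun τ => ∏ i, v i (l i) (τ * α i)) hV0 _ _ hV hM 1
      _ ≤ 2 * (M * ‖∏ i, d i (l i) 0‖) + ∑ n ∈ freqBox k Λ,
        (∏ i, 21 * dyadicWeight (l i) (n i)) * avgWeight M (linForm n α) := by
          gcongr with n hn
          · exact avgWeight_nonneg _ _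
          · exact hdn n hn
      _ ≤ _ := by linarith [pow_pos (show (0 : ℝ) < 21 by norm_num) k]

lemma dyadicWeight_mul_le (l : ℕ) (n : ℤ) :
    dyadicWeight l n * 2⁻¹ ^ l ≤ 1 / (max 1 |(n : ℝ)|) ^ 2 := by
  refine (mul_le_mul_of_nonneg_right (min_le_right _ _) (by positivity)).trans (le_of_eq ?_)
  rw [inv_pow]
  field_simp

lemma sum_dyadicWeight_le (Λ : ℕ) (n : ℤ) :
    ∑ l ∈ range Λ, dyadicWeight l n ≤ 4 / max 1 |(n : ℝ)| := by
  set R := max 1 |(n : ℝ)| with hR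
  have hR1 : 1 ≤ R := le_max_left _ _
  obtain ⟨p, hp1, hp2⟩ := exists_nat_pow_near hR1 (show (1 : ℝ) < 2 by norm_num)
  have hR0 : 0 < R := by linarith
  have hgeo : ∀ q : ℕ, ∑ l ∈ range q, (2 : ℝ) ^ l ≤ 2 ^ q := by
    intro q
    rw [geom_sum_eq (by norm_num)]
    linarith
  have hgeo2 : ∀ q : ℕ, ∑ l ∈ range q, (2 : ℝ)⁻¹ ^ l ≤ 2 := by
    intro q
    rw [geom_sum_eq (by norm_num)]
    have : (0 : ℝ) ≤ 2⁻¹ ^ q := by positivity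
    rw [div_le_iff_of_neg (by norm_num)]
    norm_num at this ⊢
  calc ∑ l ∈ range Λ, dyadicWeight l n ≤ ∑ l ∈ range ((p + 1) + Λ), dyadicWeight l n :=
        Finset.sum_le_sum_of_subset_of_nonneg (Finset.range_mono (by omega))
          fun _ _ _ => dyadicWeight_nonneg _ _
    _ = ∑ l ∈ range (p + 1), dyadicWeight l n
        + ∑ l ∈ range Λ, dyadicWeight (p + 1 + l) n := Finset.sum_range_add _ _ _
    _ ≤ ∑ l ∈ range (p + 1), 2 ^ l / R ^ 2 + ∑ l ∈ range Λ, 2⁻¹ ^ (p + 1) * 2⁻¹ ^ l := by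
        refine add_le_add (Finset.sum_le_sum fun l _ => min_le_right _ _)
          (Finset.sum_le_sum fun l _ => (min_le_left _ _).trans (le_of_eq (pow_add _ _ _)))
    _ ≤ 2 ^ (p + 1) / R ^ 2 + 2⁻¹ ^ (p + 1) * 2 := by
        rw [← Finset.sum_div, ← Finset.mul_sum]
        gcongr
        · exact hgeo _
        · exact hgeo2 _
    _ ≤ 2 / R + 2 / R := by
        refine add_le_add ?_ ?_
        · rw [div_le_div_iff₀ (by positivity) hR0]
          have : (2 : ℝ) ^ (p + 1) = 2 * 2 ^ p := by ring
          nlinarith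
        · rw [inv_pow, inv_mul_eq_div]
          gcongr
    _ = 4 / R := by ring

lemma sum_pieces_le {k Λ : ℕ} {α : Fin k → ℝ} {n : Fin k → ℤ}
    (hα : 0 < ‖(linForm n α : UnitAddCircle)‖) :
    ∑ l ∈ Fintype.piFinset fun _ : Fin k => range (Λ + 1),
      (∏ i, 21 * dyadicWeight (l i) (n i)) * avgWeight (2 ^ ∑ i, l i) (linForm n α) ≤
    84 ^ k * min (1 / (hypHeight n * ‖(linForm n α : UnitAddCircle)‖))
      ((Λ + 1) ^ k / (hypHeight n * ‖(linForm n α : UnitAddCircle)‖) ^ 2) := by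
  set δ := ‖(linForm n α : UnitAddCircle)‖ with hδ
  have hP := hypHeight_pos n
  have hdw : ∀ l : Fin k → ℕ, 0 ≤ ∏ i, 21 * dyadicWeight (l i) (n i) := fun l =>
    Finset.prod_nonneg fun i _ => mul_nonneg (by norm_num) (dyadicWeight_nonneg _ _)
  have h21 : (21 : ℝ) ^ k ≤ 84 ^ k := pow_le_pow_left₀ (by norm_num) (by norm_num) k
  rw [mul_min_of_nonneg _ _ (by positivity)]
  refine le_min ?_ ?_
  · calc _ ≤ ∑ l ∈ Fintype.piFinset fun _ : Fin k => range (Λ + 1),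
            (∏ i, 21 * dyadicWeight (l i) (n i)) * (1 / δ) := by
          refine Finset.sum_le_sum fun l _ => mul_le_mul_of_nonneg_left ?_ (hdw l)
          rw [avgWeight]
          gcongr
          exact min_le_left _ _
      _ = (∏ i, ∑ l ∈ range (Λ + 1), 21 * dyadicWeight l (n i)) * (1 / δ) := by
          rw [← Finset.sum_mul, Finset.prod_univ_sum]
      _ ≤ (∏ i, 84 / max 1 |(n i : ℝ)|) * (1 / δ) := by
          refine mul_le_mul_of_nonneg_right (Finset.prod_le_prod (fun i _ =>
            Finset.sum_nonneg fun l _ => mul_nonneg (by norm_num) (dyadicWeight_nonneg _ _))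
              fun i _ => ?_) (by positivity)
          rw [← Finset.mul_sum]
          refine (mul_le_mul_of_nonneg_left (sum_dyadicWeight_le _ _) (by norm_num)).trans
            (le_of_eq (by ring))
      _ = _ := by
          rw [Finset.prod_div_distrib, ← hypHeight]
          simp only [prod_const, card_univ, Fintype.card_fin]
          field_simp
  · calc _ ≤ ∑ l ∈ Fintype.piFinset fun _ : Fin k => range (Λ + 1),
            21 ^ k / (hypHeight n * δ) ^ 2 := by
          refine Finset.sum_le_sum fun l _ => ?_
          have h1 : avgWeight (2 ^ ∑ i, l i) (linForm n α) ≤ (∏ i, 2⁻¹ ^ l i) * (1 / δ ^ 2) := by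
            rw [avgWeight, ← hδ, Finset.prod_pow_eq_pow_sum]
            calc _ ≤ (1 / (((2 ^ ∑ i, l i : ℕ) : ℝ) * δ)) / δ := by
                  gcongr
                  exact min_le_right _ _
              _ = _ := by
                  push_cast
                  rw [inv_pow]
                  field_simp
          refine (mul_le_mul_of_nonneg_left h1 (hdw l)).trans ?_
          rw [← mul_assoc, ← Finset.prod_mul_distrib]
          calc _ ≤ (∏ i, 21 / (max 1 |(n i : ℝ)|) ^ 2) * (1 / δ ^ 2) := by
                refine mul_le_mul_of_nonneg_right (Finset.prod_le_prod (fun i _ =>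
                  mul_nonneg (mul_nonneg (by norm_num) (dyadicWeight_nonneg _ _))
                    (by positivity)) fun i _ => ?_) (by positivity)
                rw [mul_assoc]
                exact (mul_le_mul_of_nonneg_left (dyadicWeight_mul_le _ _) (by norm_num)).trans
                  (le_of_eq (by ring))
            _ = _ := by
                rw [Finset.prod_div_distrib, Finset.prod_pow, ← hypHeight]
                simp only [prod_const, card_univ, Fintype.card_fin]
                field_simp
      _ = 21 ^ k * ((Λ + 1) ^ k / (hypHeight n * δ) ^ 2) := by
          rw [Finset.sum_const, Fintype.card_piFinset]
          simp
          ring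
      _ ≤ _ := by gcongr

/-- Deterministic upper bound for the discrepancy by a sum over small denominators. -/
theorem abs_DiscT_le {k Λ : ℕ} (hΛ : 1 ≤ Λ) {α : Fin k → ℝ}
    (hα : ∀ n ∈ freqBox k Λ, 0 < ‖(linForm n α : UnitAddCircle)‖) {x : Fin k → ℝ}
    (hx : ∀ i, x i ∈ Set.Icc (0 : ℝ) 1) {m : ℕ} (hm : m ≤ 2 ^ Λ) :
    |DiscT k α x m| ≤ 4 * 84 ^ k * ((Λ + 1) ^ k + ∑ n ∈ freqBox k Λ,
      min (1 / (hypHeight n * ‖(linForm n α : UnitAddCircle)‖))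
        ((Λ + 1) ^ k / (hypHeight n * ‖(linForm n α : UnitAddCircle)‖) ^ 2)) := by
  choose u v c d hind huv hu hv hc hd hc0 using fun i => exists_dyadic_decomposition Λ (hx i)
  set Q := Fintype.piFinset fun _ : Fin k => range (Λ + 1) with hQ
  have hD : DiscT k α x m = ∑ l ∈ Q,
      (∑ t ∈ range m, ∏ i, u i (l i) (((1 + t : ℤ) : ℝ) * α i)
        - (if l = 0 then m * ∏ i, x i else 0)) := by
    rw [DiscT, Finset.sum_sub_distrib]
    congr 1
    · rw [Finset.sum_comm, ← Finset.Ico_add_one_right_eq_Icc, Finset.sum_Ico_eq_sum_range]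
      refine Finset.sum_congr rfl fun t _ => ?_
      have h := Finset.prod_univ_sum (fun _ : Fin k => range (Λ + 1))
        fun i l => u i l (((1 + t : ℤ) : ℝ) * α i)
      rw [hQ, ← h]
      simp only [← hind]
      rw [Finset.prod_ite_zero]
      simp
    · rw [Finset.sum_ite_eq', if_pos (by simp [hQ])]
  rw [hD]
  refine (Finset.abs_sum_le_sum_abs _ _).trans ?_
  calc _ ≤ ∑ l ∈ Q, (4 * 21 ^ k + 3 * ∑ n ∈ freqBox k Λ,
        (∏ i, 21 * dyadicWeight (l i) (n i)) * avgWeight (2 ^ ∑ i, l i) (linForm n α)) :=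
        Finset.sum_le_sum fun l hl => norm_piece_sub_le hα hΛ u v c d huv hu hv hc hd hc0 hm
          fun i => Nat.lt_succ_iff.1 (Finset.mem_range.1 (Fintype.mem_piFinset.1 hl i))
    _ = (Λ + 1) ^ k * (4 * 21 ^ k) + 3 * ∑ n ∈ freqBox k Λ, ∑ l ∈ Q,
        (∏ i, 21 * dyadicWeight (l i) (n i)) * avgWeight (2 ^ ∑ i, l i) (linForm n α) := by
        rw [Finset.sum_comm, hQ, Finset.sum_add_distrib, Finset.mul_sum, Finset.sum_const,
          Fintype.card_piFinset]
        simp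
    _ ≤ (Λ + 1) ^ k * (4 * 84 ^ k) + 4 * ∑ n ∈ freqBox k Λ,
        84 ^ k * min (1 / (hypHeight n * ‖(linForm n α : UnitAddCircle)‖))
        ((Λ + 1) ^ k / (hypHeight n * ‖(linForm n α : UnitAddCircle)‖) ^ 2) := by
        have h1 : ∑ n ∈ freqBox k Λ, ∑ l ∈ Q,
          (∏ i, 21 * dyadicWeight (l i) (n i)) * avgWeight (2 ^ ∑ i, l i) (linForm n α) ≤ _ :=
          Finset.sum_le_sum fun n hn => sum_pieces_le (hα n hn)
        have h2 : 0 ≤ ∑ n ∈ freqBox k Λ, ∑ l ∈ Q,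
          (∏ i, 21 * dyadicWeight (l i) (n i)) * avgWeight (2 ^ ∑ i, l i) (linForm n α) :=
          Finset.sum_nonneg fun n _ => Finset.sum_nonneg fun l _ => mul_nonneg
            (Finset.prod_nonneg fun i _ => mul_nonneg (by norm_num) (dyadicWeight_nonneg _ _))
            (avgWeight_nonneg _ _)
        have h3 : (21 : ℝ) ^ k ≤ 84 ^ k := pow_le_pow_left₀ (by norm_num) (by norm_num) k
        have h4 : (0 : ℝ) ≤ (Λ + 1) ^ k := by positivity
        nlinarith
    _ = _ := by
        rw [← Finset.mul_sum]
        ring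

/-! ### Linear forms on the torus -/

instance isProbabilityMeasure_unitAddCircle :
    IsProbabilityMeasure (volume : Measure UnitAddCircle) := ⟨UnitAddCircle.measure_univ⟩

instance isProbabilityMeasure_torus (k : ℕ) :
    IsProbabilityMeasure (volume : Measure (Fin k → UnitAddCircle)) :=
  inferInstanceAs (IsProbabilityMeasure (Measure.pi fun _ => volume))

/-- The linear form `n · a` on the torus. -/
def torusForm {k : ℕ} (n : Fin k → ℤ) : (Fin k → UnitAddCircle) →+ UnitAddCircle where
  toFun a := ∑ i, n i • a i
  map_zero' := by simp
  map_add' a b := by simp [Finset.sum_add_distrib]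

lemma torusForm_apply {k : ℕ} (n : Fin k → ℤ) (a : Fin k → UnitAddCircle) :
    torusForm n a = ∑ i, n i • a i := rfl

lemma torusForm_coe {k : ℕ} (n : Fin k → ℤ) (α : Fin k → ℝ) :
    torusForm n (fun i => (α i : UnitAddCircle)) = (linForm n α : UnitAddCircle) := by
  rw [torusForm_apply, linForm]
  refine Eq.trans ?_ (map_sum (QuotientAddGroup.mk' (AddSubgroup.zmultiples (1 : ℝ))) _ _).symm
  refine Finset.sum_congr rfl fun i _ => ?_
  rw [← zsmul_eq_mul]
  rfl

lemma continuous_torusForm {k : ℕ} (n : Fin k → ℤ) : Continuous (torusForm n) := by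
  change Continuous fun a : Fin k → UnitAddCircle => ∑ i, n i • a i
  fun_prop

lemma measurePreserving_torusForm {k : ℕ} {n : Fin k → ℤ} (hn : n ≠ 0) :
    MeasurePreserving (torusForm n) volume volume := by
  refine AddMonoidHom.measurePreserving (continuous_torusForm n) ?_ (by simp only [measure_univ])
  obtain ⟨i, hi⟩ := Function.ne_iff.1 hn
  intro y
  induction y using QuotientAddGroup.induction_on with
  | H Y =>
    refine ⟨fun j => ((Pi.single i (Y / n i) : Fin k → ℝ) j : UnitAddCircle), ?_⟩
    rw [torusForm_coe, linForm, Finset.sum_eq_single i]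
    · have : (n i : ℝ) ≠ 0 := by exact_mod_cast hi
      rw [Pi.single_eq_same, mul_div_cancel₀ _ this]
    · intro j _ hj
      simp [Pi.single_eq_of_ne hj]
    · simp

lemma indepFun_torusForm {k : ℕ} {n n' : Fin k → ℤ} {i j : Fin k}
    (h : n i * n' j - n j * n' i ≠ 0) :
    ProbabilityTheory.IndepFun (torusForm n) (torusForm n') volume := by
  have hij : i ≠ j := by
    rintro rfl
    exact h (by ring)
  have hn : n ≠ 0 := by
    rintro rfl
    simp at h
  have hn' : n' ≠ 0 := by
    rintro rfl
    simp at h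
  rw [ProbabilityTheory.indepFun_iff_map_prod_eq_prod_map_map
    (continuous_torusForm n).aemeasurable (continuous_torusForm n').aemeasurable,
    (measurePreserving_torusForm hn).map_eq, (measurePreserving_torusForm hn').map_eq]
  refine (AddMonoidHom.measurePreserving (f := (torusForm n).prod (torusForm n'))
    ((continuous_torusForm n).prodMk (continuous_torusForm n')) ?_ (by simp only [measure_univ])).map_eq
  rintro ⟨y, z⟩
  induction y using QuotientAddGroup.induction_on with
  | H Y =>
  induction z using QuotientAddGroup.induction_on with
  | H Z =>
    have hD : (n i * n' j - n j * n' i : ℝ) ≠ 0 := by exact_mod_cast h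
    set D : ℝ := n i * n' j - n j * n' i with hDdef
    set β : Fin k → ℝ := Pi.single i ((n' j * Y - n j * Z) / D) +
      Pi.single j ((n i * Z - n' i * Y) / D) with hβ
    have hβi : β i = (n' j * Y - n j * Z) / D := by simp [hβ, hij]
    have hβj : β j = (n i * Z - n' i * Y) / D := by simp [hβ, hij.symm]
    have hsum : ∀ p : Fin k → ℤ, linForm p β = p i * β i + p j * β j := by
      intro p
      rw [linForm, ← Finset.sum_subset (Finset.subset_univ {i, j}), Finset.sum_pair hij]
      intro l _ hl
      simp only [Finset.mem_insert, Finset.mem_singleton, not_or] at hl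
      simp [hβ, hl.1, hl.2]
    refine ⟨fun l => (β l : UnitAddCircle), ?_⟩
    rw [AddMonoidHom.prod_apply, torusForm_coe, torusForm_coe, hsum, hsum, hβi, hβj]
    congr 2
    · field_simp
      rw [hDdef]
      ring
    · field_simp
      rw [hDdef]
      ring

/-! ### Truncated reciprocals on the circle -/

/-- The contribution of a small denominator `g`, truncated at `κ`. -/
def truncTerm (κ L g : ℝ) : ℝ := if κ ≤ g then min (1 / g) (L / g ^ 2) else 0

lemma measurable_truncTerm (κ L : ℝ) : Measurable (truncTerm κ L) := by
  unfold truncTerm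
  exact Measurable.ite measurableSet_Ici (by fun_prop) measurable_const

section
variable {κ L : ℝ}

lemma truncTerm_nonneg (hκ : 0 < κ) (hL : 0 ≤ L) (g : ℝ) : 0 ≤ truncTerm κ L g := by
  unfold truncTerm
  split_ifs with h
  · have : 0 < g := hκ.trans_le h
    positivity
  · exact le_rfl

lemma truncTerm_le (hκ : 0 < κ) (g : ℝ) : truncTerm κ L g ≤ 1 / κ := by
  unfold truncTerm
  split_ifs with h
  · exact (min_le_left _ _).trans (one_div_le_one_div_of_le hκ h)
  · positivity

lemma truncTerm_antitone {κ' : ℝ} (hκ : 0 < κ) (hL : 0 ≤ L) (h : κ ≤ κ') (g : ℝ) :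
    truncTerm κ' L g ≤ truncTerm κ L g := by
  by_cases h' : κ' ≤ g
  · rw [truncTerm, truncTerm, if_pos h', if_pos (h.trans h')]
  · rw [truncTerm, if_neg h']
    exact truncTerm_nonneg hκ hL g

lemma integral_Ioi_inv_sq {c : ℝ} (hc : 0 < c) :
    IntegrableOn (fun g : ℝ => 1 / g ^ 2) (Set.Ioi c) ∧ ∫ g in Set.Ioi c, 1 / g ^ 2 = 1 / c := by
  have h : ∀ g ∈ Set.Ioi c, g ^ (-2 : ℝ) = 1 / g ^ 2 := by
    intro g hg
    have : 0 < g := hc.trans hg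
    rw [Real.rpow_neg this.le, one_div]
    norm_cast
  refine ⟨(integrableOn_Ioi_rpow_of_lt (by norm_num) hc).congr_fun h measurableSet_Ioi, ?_⟩
  rw [← setIntegral_congr_fun measurableSet_Ioi h, integral_Ioi_rpow_of_lt (by norm_num) hc]
  norm_num
  rw [Real.rpow_neg_one]

lemma integral_truncTerm_sq_le (hκ : 0 < κ) (hL : 0 ≤ L) :
    IntegrableOn (fun g => truncTerm κ L g ^ 2) (Set.Ioi 0) ∧
      ∫ g in Set.Ioi 0, truncTerm κ L g ^ 2 ≤ 1 / κ := by
  obtain ⟨h1, h2⟩ := integral_Ioi_inv_sq hκ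
  have hb : ∀ g, truncTerm κ L g ^ 2 ≤ (Set.Ici κ).indicator (fun g => 1 / g ^ 2) g := by
    intro g
    by_cases h : κ ≤ g
    · rw [Set.indicator_of_mem (Set.mem_Ici.2 h), truncTerm, if_pos h, ← one_div_pow]
      have : 0 < g := hκ.trans_le h
      exact pow_le_pow_left₀ (by positivity) (min_le_left _ _) 2
    · rw [Set.indicator_of_notMem (by simpa using h), truncTerm, if_neg h]
      norm_num
  have hi : Integrable ((Set.Ici κ).indicator fun g : ℝ => 1 / g ^ 2) :=
    (integrable_indicator_iff measurableSet_Ici).2 ((integrableOn_Ici_iff_integrableOn_Ioi (by simp)).2 h1)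
  have hI : Integrable fun g => truncTerm κ L g ^ 2 :=
    hi.mono' ((measurable_truncTerm κ L).pow_const 2).aestronglyMeasurable
      (Filter.Eventually.of_forall fun g => by
        rw [Real.norm_of_nonneg (sq_nonneg _)]
        exact hb g)
  refine ⟨hI.integrableOn, ?_⟩
  calc ∫ g in Set.Ioi 0, truncTerm κ L g ^ 2 ≤ ∫ g, truncTerm κ L g ^ 2 :=
        setIntegral_le_integral hI (Filter.Eventually.of_forall fun _ => sq_nonneg _)
    _ ≤ ∫ g, (Set.Ici κ).indicator (fun g => 1 / g ^ 2) g := integral_mono hI hi hb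
    _ = 1 / κ := by rw [integral_indicator measurableSet_Ici, integral_Ici_eq_integral_Ioi, h2]

lemma integral_truncTerm_le (hκ : 0 < κ) (hκL : κ ≤ L) :
    IntegrableOn (truncTerm κ L) (Set.Ioi 0) ∧
      ∫ g in Set.Ioi 0, truncTerm κ L g ≤ Real.log (L / κ) + 1 := by
  have hL : 0 < L := hκ.trans_le hκL
  obtain ⟨h1, h2⟩ := integral_Ioi_inv_sq hL
  have h3 : IntegrableOn (fun g : ℝ => 1 / g) (Set.Ioc κ L) := by
    refine (ContinuousOn.integrableOn_Icc (a := κ) (b := L) ?_).mono_set Set.Ioc_subset_Icc_self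
    exact continuousOn_const.div continuousOn_id fun x hx => (hκ.trans_le hx.1).ne'
  have hi1 : Integrable ((Set.Icc κ L).indicator fun g : ℝ => 1 / g) :=
    (integrable_indicator_iff measurableSet_Icc).2 ((integrableOn_Icc_iff_integrableOn_Ioc (by simp)).2 h3)
  have hi2 : Integrable ((Set.Ioi L).indicator fun g : ℝ => L * (1 / g ^ 2)) :=
    (integrable_indicator_iff measurableSet_Ioi).2 (h1.const_mul L)
  have hb : ∀ g, truncTerm κ L g ≤ (Set.Icc κ L).indicator (fun g => 1 / g) g +
      (Set.Ioi L).indicator (fun g => L * (1 / g ^ 2)) g := by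
    intro g
    by_cases h : κ ≤ g
    · rw [truncTerm, if_pos h]
      by_cases h' : g ≤ L
      · rw [Set.indicator_of_mem (Set.mem_Icc.2 ⟨h, h'⟩),
          Set.indicator_of_notMem (by simpa using h'), add_zero]
        exact min_le_left _ _
      · rw [Set.indicator_of_notMem (by simp [h']),
          Set.indicator_of_mem (by simpa using h'), zero_add, mul_one_div]
        exact min_le_right _ _
    · rw [truncTerm, if_neg h, Set.indicator_of_notMem (by simp [h]),
        Set.indicator_of_notMem (by simp; linarith), add_zero]
  have hI : Integrable (truncTerm κ L) :=
    (hi1.add hi2).mono' (measurable_truncTerm κ L).aestronglyMeasurable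
      (Filter.Eventually.of_forall fun g => by
        rw [Real.norm_of_nonneg (truncTerm_nonneg hκ hL.le g)]
        exact hb g)
  refine ⟨hI.integrableOn, ?_⟩
  calc ∫ g in Set.Ioi 0, truncTerm κ L g ≤ ∫ g, truncTerm κ L g :=
        setIntegral_le_integral hI
          (Filter.Eventually.of_forall fun _ => truncTerm_nonneg hκ hL.le _)
    _ ≤ ∫ g, ((Set.Icc κ L).indicator (fun g => 1 / g) g +
      (Set.Ioi L).indicator (fun g => L * (1 / g ^ 2)) g) := integral_mono hI (hi1.add hi2) hb
    _ = Real.log (L / κ) + 1 := by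
        rw [integral_add hi1 hi2, integral_indicator measurableSet_Icc,
          integral_indicator measurableSet_Ioi, integral_const_mul, h2,
          integral_Icc_eq_integral_Ioc, ← intervalIntegral.integral_of_le hκL,
          integral_one_div_of_pos hκ hL, mul_one_div_cancel hL.ne']

end

lemma integral_circle_le {ψ : ℝ → ℝ} (hψ : ∀ g, 0 ≤ ψ g)
    (hψint : IntegrableOn ψ (Set.Ioi 0)) {P : ℝ} (hP : 0 < P) :
    ∫ θ : UnitAddCircle, ψ (P * ‖θ‖) ≤ 2 / P * ∫ g in Set.Ioi 0, ψ g := by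
  have h1 : IntegrableOn (fun x => ψ (P * x)) (Set.Ioi 0) := by
    have := (integrableOn_Ioi_comp_mul_left_iff ψ 0 hP).2
    rw [mul_zero] at this
    exact this hψint
  have h2 : Integrable (fun x => ψ (P * |x|)) := by
    have hpos : IntegrableOn (fun x => ψ (P * |x|)) (Set.Ioi 0) :=
      h1.congr_fun (fun x hx => by simp only [abs_of_pos (Set.mem_Ioi.1 hx)]) measurableSet_Ioi
    have hneg : IntegrableOn (fun x => ψ (P * |x|)) (Set.Iic 0) := by
      rw [← Measure.map_neg_eq_self (volume : Measure ℝ)]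
      have hm : MeasurableEmbedding fun x : ℝ => -x := (Homeomorph.neg ℝ).measurableEmbedding
      rw [hm.integrableOn_map_iff]
      simp only [Function.comp_def, abs_neg, Set.neg_preimage, Set.neg_Iic, neg_zero]
      exact (integrableOn_Ici_iff_integrableOn_Ioi (by simp)).2 hpos
    rw [← integrableOn_univ, ← Set.Iic_union_Ioi (a := (0 : ℝ))]
    exact hneg.union hpos
  rw [← UnitAddCircle.integral_preimage (-(1 / 2))]
  calc ∫ a in Set.Ioc (-(1 / 2) : ℝ) (-(1 / 2) + 1), ψ (P * ‖(a : UnitAddCircle)‖)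
      = ∫ a in Set.Ioc (-(1 / 2) : ℝ) (-(1 / 2) + 1), ψ (P * |a|) := by
        refine setIntegral_congr_fun measurableSet_Ioc fun a ha => ?_
        have : ‖(a : UnitAddCircle)‖ = |a| := by
          refine (AddCircle.norm_coe_eq_abs_iff 1 one_ne_zero).2 ?_
          rw [abs_one, abs_le]
          exact ⟨ha.1.le, ha.2.trans (by norm_num)⟩
        simp only [this]
    _ ≤ ∫ a : ℝ, ψ (P * |a|) :=
        setIntegral_le_integral h2 (Filter.Eventually.of_forall fun _ => hψ _)
    _ = 2 * ∫ x in Set.Ioi 0, ψ (P * x) := integral_comp_abs (f := fun x => ψ (P * x))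
    _ = _ := by
        rw [integral_comp_mul_left_Ioi ψ 0 hP, mul_zero, smul_eq_mul]
        ring

/-! ### Moments of the truncated small denominators on the torus -/

/-- The normalized small denominator `P(n) ‖n · a‖`. -/
def torusDenom {k : ℕ} (n : Fin k → ℤ) (a : Fin k → UnitAddCircle) : ℝ :=
  hypHeight n * ‖torusForm n a‖

lemma measurable_torusDenom {k : ℕ} (n : Fin k → ℤ) : Measurable (torusDenom n) :=
  ((continuous_torusForm n).norm.measurable.const_mul _)

lemma integral_comp_torusDenom_le {k : ℕ} {n : Fin k → ℤ} (hn : n ≠ 0) {ψ : ℝ → ℝ}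
    (hm : Measurable ψ) (hψ : ∀ g, 0 ≤ ψ g) (hψint : IntegrableOn ψ (Set.Ioi 0)) :
    ∫ a, ψ (torusDenom n a) ≤ 2 / hypHeight n * ∫ g in Set.Ioi 0, ψ g := by
  refine le_trans (le_of_eq ?_) (integral_circle_le hψ hψint (hypHeight_pos n))
  rw [← (measurePreserving_torusForm hn).map_eq,
    integral_map (continuous_torusForm n).aemeasurable]
  · rfl
  · exact (hm.comp (continuous_norm.measurable.const_mul _)).aestronglyMeasurable

lemma measure_torusDenom_lt_le {k : ℕ} {n : Fin k → ℤ} (hn : n ≠ 0) (κ : ℝ) :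
    volume {a | torusDenom n a < κ} ≤ ENNReal.ofReal (2 * κ / hypHeight n) := by
  have hP := hypHeight_pos n
  have h : {a | torusDenom n a < κ} ⊆
      torusForm n ⁻¹' Metric.closedBall (0 : UnitAddCircle) (κ / hypHeight n) := by
    intro a ha
    simp only [Set.mem_ofPred_eq, torusDenom] at ha
    simp only [Set.mem_preimage, mem_closedBall_zero_iff]
    rw [le_div_iff₀ hP, mul_comm]
    exact ha.le
  refine (measure_mono h).trans ?_
  rw [(measurePreserving_torusForm hn).measure_preimage
    Metric.isClosed_closedBall.measurableSet.nullMeasurableSet, AddCircle.volume_closedBall]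
  refine ENNReal.ofReal_le_ofReal ((min_le_right _ _).trans (le_of_eq (by ring)))

lemma memLp_truncTerm {k : ℕ} (n : Fin k → ℤ) {κ L : ℝ} (hκ : 0 < κ) (hL : 0 ≤ L)
    (p : ENNReal) : MemLp (fun a => truncTerm κ L (torusDenom n a)) p volume :=
  MemLp.of_bound ((measurable_truncTerm κ L).comp (measurable_torusDenom n)).aestronglyMeasurable
    (1 / κ) (Filter.Eventually.of_forall fun a => by
      rw [Real.norm_of_nonneg (truncTerm_nonneg hκ hL _)]
      exact truncTerm_le hκ _)

lemma integral_truncTerm_torusDenom_le {k : ℕ} {n : Fin k → ℤ} (hn : n ≠ 0) {κ L : ℝ}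
    (hκ : 0 < κ) (hκL : κ ≤ L) :
    ∫ a, truncTerm κ L (torusDenom n a) ≤ 2 / hypHeight n * (Real.log (L / κ) + 1) := by
  obtain ⟨h1, h2⟩ := integral_truncTerm_le hκ hκL
  have hP := hypHeight_pos n
  exact (integral_comp_torusDenom_le hn (measurable_truncTerm κ L)
    (truncTerm_nonneg hκ (hκ.le.trans hκL)) h1).trans
    (mul_le_mul_of_nonneg_left h2 (by positivity))

lemma variance_truncTerm_torusDenom_le {k : ℕ} {n : Fin k → ℤ} (hn : n ≠ 0) {κ L : ℝ}
    (hκ : 0 < κ) (hL : 0 ≤ L) :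
    ProbabilityTheory.variance (fun a => truncTerm κ L (torusDenom n a)) volume ≤
      2 / hypHeight n * (1 / κ) := by
  obtain ⟨h1, h2⟩ := integral_truncTerm_sq_le hκ hL
  have hP := hypHeight_pos n
  refine (ProbabilityTheory.variance_le_expectation_sq
    (memLp_truncTerm n hκ hL 1).aestronglyMeasurable).trans ?_
  exact (integral_comp_torusDenom_le hn ((measurable_truncTerm κ L).pow_const 2)
    (fun _ => sq_nonneg _) h1).trans (mul_le_mul_of_nonneg_left h2 (by positivity))

/-! ### Harmonic sums over frequency cubes -/

/-- The symmetric interval `[-N, N]` of integers. -/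
def symIcc (N : ℕ) : Finset ℤ := Icc (-(N : ℤ)) N

/-- The cube `[-N, N]^k` of frequencies. -/
def freqCube (k N : ℕ) : Finset (Fin k → ℤ) := Fintype.piFinset fun _ : Fin k => symIcc N

lemma mem_freqCube {k N : ℕ} {n : Fin k → ℤ} : n ∈ freqCube k N ↔ ∀ i, |n i| ≤ N := by
  simp [freqCube, symIcc, abs_le]

lemma freqBox_eq (k Λ : ℕ) : freqBox k Λ = (freqCube k (4 ^ Λ)).erase 0 := rfl

/-- The sum of `1 / max(1, |n|)` over `|n| ≤ N`. -/
def symHarmonic (N : ℕ) : ℝ := ∑ n ∈ symIcc N, 1 / max 1 |(n : ℝ)|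

lemma symHarmonic_nonneg (N : ℕ) : 0 ≤ symHarmonic N :=
  Finset.sum_nonneg fun _ _ => by positivity

lemma symHarmonic_eq (N : ℕ) : symHarmonic N = 1 + 2 * (harmonic N : ℝ) := by
  induction N with
  | zero => simp [symHarmonic, symIcc]
  | succ N ih =>
    have h : symIcc (N + 1) = insert ((N : ℤ) + 1) (insert (-((N : ℤ) + 1)) (symIcc N)) := by
      ext n
      simp only [symIcc, Finset.mem_Icc, Finset.mem_insert]
      push_cast
      omega
    have hm : max 1 ((N : ℝ) + 1) = N + 1 := max_eq_right (by linarith [Nat.cast_nonneg (α := ℝ) N])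
    have hp : (0 : ℝ) ≤ (N : ℝ) + 1 := by positivity
    rw [symHarmonic, h, Finset.sum_insert, Finset.sum_insert, ← symHarmonic, ih, harmonic_succ]
    · push_cast
      rw [abs_neg, abs_of_nonneg hp, hm]
      ring
    · simp [symIcc]
    · simp only [symIcc, Finset.mem_insert, Finset.mem_Icc]
      omega

lemma symHarmonic_four_pow_le (Λ : ℕ) : symHarmonic (4 ^ Λ) ≤ 3 * (Λ + 1) := by
  have h := harmonic_le_one_add_log (4 ^ Λ)
  have h4 : Real.log (4 : ℝ) ≤ 3 / 2 := by
    have : (4 : ℝ) = 2 ^ 2 := by norm_num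
    rw [this, Real.log_pow]
    have := Real.log_two_lt_d9
    push_cast
    linarith
  push_cast at h
  rw [Real.log_pow] at h
  rw [symHarmonic_eq]
  nlinarith [Nat.cast_nonneg (α := ℝ) Λ]

lemma one_div_hypHeight {k : ℕ} (n : Fin k → ℤ) :
    1 / hypHeight n = ∏ i, 1 / max 1 |(n i : ℝ)| := by
  rw [hypHeight, Finset.prod_div_distrib, Finset.prod_const_one]

lemma sum_one_div_hypHeight (k N : ℕ) :
    ∑ n ∈ freqCube k N, 1 / hypHeight n = symHarmonic N ^ k := by
  simp only [one_div_hypHeight]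
  have h := Finset.prod_univ_sum (fun _ : Fin k => symIcc N) fun _ n => 1 / max 1 |(n : ℝ)|
  rw [freqCube, ← h, Finset.prod_const, ← symHarmonic, Finset.card_univ, Fintype.card_fin]

lemma sum_biUnion_le_sum_sum {ι β : Type*} [DecidableEq β] (s : Finset ι) (t : ι → Finset β)
    {f : β → ℝ} (hf : ∀ x, 0 ≤ f x) : ∑ x ∈ s.biUnion t, f x ≤ ∑ i ∈ s, ∑ x ∈ t i, f x := by
  classical
  induction s using Finset.induction_on with
  | empty => simp
  | insert i s hi ih =>
    rw [Finset.biUnion_insert, Finset.sum_insert hi]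
    have h := Finset.sum_union_inter (s₁ := t i) (s₂ := s.biUnion t) (f := f)
    have h0 : 0 ≤ ∑ x ∈ t i ∩ s.biUnion t, f x := Finset.sum_nonneg fun x _ => hf x
    linarith

/-- The frequencies with a vanishing coordinate. -/
def degenFreq (k N : ℕ) : Finset (Fin k → ℤ) := (freqCube k N).filter fun n => ∃ i, n i = 0

lemma sum_degenFreq_le (k N : ℕ) :
    ∑ n ∈ degenFreq k N, 1 / hypHeight n ≤ k * symHarmonic N ^ (k - 1) := by
  have hsub : degenFreq k N ⊆ (univ : Finset (Fin k)).biUnion fun i =>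
      Fintype.piFinset fun j => if j = i then {0} else symIcc N := by
    intro n hn
    simp only [degenFreq, freqCube, Finset.mem_filter, Fintype.mem_piFinset] at hn
    obtain ⟨hn, i, hi⟩ := hn
    simp only [Finset.mem_biUnion, Finset.mem_univ, true_and, Fintype.mem_piFinset]
    refine ⟨i, fun j => ?_⟩
    split_ifs with hj
    · simp [hj, hi]
    · exact hn j
  have hnn : ∀ n : Fin k → ℤ, 0 ≤ 1 / hypHeight n := fun n =>
    one_div_nonneg.2 (hypHeight_pos n).le
  calc _ ≤ ∑ n ∈ (univ : Finset (Fin k)).biUnion fun i =>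
          Fintype.piFinset fun j => if j = i then {0} else symIcc N, 1 / hypHeight n :=
        Finset.sum_le_sum_of_subset_of_nonneg hsub fun n _ _ => hnn n
    _ ≤ ∑ i : Fin k, ∑ n ∈ Fintype.piFinset fun j => if j = i then {0} else symIcc N,
          1 / hypHeight n := sum_biUnion_le_sum_sum _ _ hnn
    _ = ∑ i : Fin k, symHarmonic N ^ (k - 1) := by
        refine Finset.sum_congr rfl fun i _ => ?_
        simp only [one_div_hypHeight]
        have h := Finset.prod_univ_sum (fun j : Fin k => if j = i then {0} else symIcc N)
          fun _ n => 1 / max 1 |(n : ℝ)|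
        rw [← h, ← Finset.mul_prod_erase _ _ (Finset.mem_univ i), if_pos rfl]
        rw [Finset.prod_congr rfl (g := fun _ => symHarmonic N)]
        · simp
        · intro j hj
          rw [if_neg (Finset.ne_of_mem_erase hj), symHarmonic]
    _ = _ := by simp

/-- The greatest common divisor of the coordinates. -/
def vecGcd {k : ℕ} (n : Fin k → ℤ) : ℕ := univ.gcd fun i => (n i).natAbs

/-- The frequencies with nonzero coordinates and greatest common divisor `a`, normalized by
the positivity of the coordinate `i₀`. -/
def gcdClass {k : ℕ} (i₀ : Fin k) (N a : ℕ) : Finset (Fin k → ℤ) :=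
  (freqCube k N).filter fun n => 0 < n i₀ ∧ (∀ i, n i ≠ 0) ∧ vecGcd n = a

lemma sum_gcdClass_le {k : ℕ} (i₀ : Fin k) (N : ℕ) {a : ℕ} (ha : 1 ≤ a) :
    ∑ n ∈ gcdClass i₀ N a, 1 / hypHeight n ≤ 1 / (a : ℝ) ^ k * symHarmonic N ^ k := by
  have ha' : (1 : ℝ) ≤ a := by exact_mod_cast ha
  have hnn : ∀ n : Fin k → ℤ, 0 ≤ 1 / hypHeight n := fun n =>
    one_div_nonneg.2 (hypHeight_pos n).le
  have hsub : gcdClass i₀ N a ⊆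
      ((freqCube k N).filter fun n => ∀ i, n i ≠ 0).image fun n i => (a : ℤ) * n i := by
    intro n hn
    simp only [gcdClass, Finset.mem_filter, mem_freqCube] at hn
    obtain ⟨hN, -, hne, hg⟩ := hn
    have hdvd : ∀ i, (a : ℤ) ∣ n i := by
      intro i
      rw [Int.natCast_dvd, ← hg]
      exact Finset.gcd_dvd (Finset.mem_univ i)
    choose m hm using hdvd
    refine Finset.mem_image.2 ⟨m, ?_, funext fun i => (hm i).symm⟩
    simp only [Finset.mem_filter, mem_freqCube]
    refine ⟨fun i => le_trans ?_ (hN i), fun i h => hne i (by rw [hm, h, mul_zero])⟩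
    rw [hm i, abs_mul]
    refine le_mul_of_one_le_left (abs_nonneg _) ?_
    rw [Nat.abs_cast]
    exact_mod_cast ha
  calc _ ≤ ∑ n ∈ ((freqCube k N).filter fun n => ∀ i, n i ≠ 0).image fun n i => (a : ℤ) * n i,
          1 / hypHeight n := Finset.sum_le_sum_of_subset_of_nonneg hsub fun n _ _ => hnn n
    _ = ∑ n ∈ (freqCube k N).filter fun n => ∀ i, n i ≠ 0, 1 / (a : ℝ) ^ k * (1 / hypHeight n) := by
        rw [Finset.sum_image]
        · refine Finset.sum_congr rfl fun n hn => ?_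
          have hn' := (Finset.mem_filter.1 hn).2
          rw [one_div_mul_one_div]
          congr 1
          rw [hypHeight, hypHeight, ← Fin.prod_const, ← Finset.prod_mul_distrib]
          refine Finset.prod_congr rfl fun i _ => ?_
          have h1 : (1 : ℝ) ≤ |(n i : ℝ)| := by exact_mod_cast Int.one_le_abs (hn' i)
          push_cast
          rw [abs_mul, Nat.abs_cast, max_eq_right h1, max_eq_right]
          nlinarith
        · intro n _ n' _ h
          funext i
          have := congrFun h i
          have h0 : (a : ℤ) ≠ 0 := by positivity
          exact mul_left_cancel₀ h0 this
    _ ≤ ∑ n ∈ freqCube k N, 1 / (a : ℝ) ^ k * (1 / hypHeight n) :=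
        Finset.sum_le_sum_of_subset_of_nonneg (Finset.filter_subset _ _) fun n _ _ =>
          mul_nonneg (by positivity) (hnn n)
    _ = _ := by rw [← Finset.mul_sum, sum_one_div_hypHeight]

lemma exists_minor_ne_zero {k : ℕ} {i₀ : Fin k} {n n' : Fin k → ℤ} (hn : 0 < n i₀)
    (hn' : 0 < n' i₀) (hg : vecGcd n = vecGcd n') (hne : n ≠ n') :
    ∃ j, n i₀ * n' j - n j * n' i₀ ≠ 0 := by
  by_contra! h
  apply hne
  have h1 : ∀ j, (n i₀).natAbs * (n' j).natAbs = (n' i₀).natAbs * (n j).natAbs := by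
    intro j
    rw [← Int.natAbs_mul, ← Int.natAbs_mul]
    congr 1
    linarith [h j]
  have h2 : (n i₀).natAbs * vecGcd n' = (n' i₀).natAbs * vecGcd n := by
    have h3 := Finset.gcd_mul_left (s := univ) (f := fun j => (n' j).natAbs) (a := (n i₀).natAbs)
    have h4 := Finset.gcd_mul_left (s := univ) (f := fun j => (n j).natAbs) (a := (n' i₀).natAbs)
    simp only [normalize_eq] at h3 h4
    rw [vecGcd, vecGcd, ← h3, ← h4]
    simp only [h1]
  have hpos : 0 < vecGcd n := by
    rw [vecGcd, Nat.pos_iff_ne_zero, Ne, Finset.gcd_eq_zero_iff]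
    intro h0
    have := h0 i₀ (Finset.mem_univ _)
    omega
  rw [← hg] at h2
  have h5 := Nat.eq_of_mul_eq_mul_right hpos h2
  have h6 : n i₀ = n' i₀ := by omega
  funext j
  have h7 := h j
  rw [h6] at h7
  have : n' i₀ * (n' j - n j) = 0 := by linarith
  rcases mul_eq_zero.1 this with h8 | h8
  · omega
  · omega

/-! ### Probabilistic bounds for the sums over small denominators -/

/-- The sum of the weights `a ^ (-5/4)` attached to the gcd classes. -/
def gcdZeta : ℝ := ∑' a : ℕ, (a : ℝ) ^ (-(5 / 4) : ℝ)

lemma sum_gcdWeight_le (S : Finset ℕ) : ∑ a ∈ S, (a : ℝ) ^ (-(5 / 4) : ℝ) ≤ gcdZeta :=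
  (Real.summable_nat_rpow.2 (by norm_num)).sum_le_tsum S fun _ _ => by positivity

lemma gcdZeta_nonneg : 0 ≤ gcdZeta := tsum_nonneg fun _ => by positivity

section
variable {x : ℝ} {k : ℕ}

lemma sqrt_div_pow_le (hx : 1 ≤ x) (hk : 2 ≤ k) : √x * (1 / x ^ k) ≤ x ^ (-(5 / 4) : ℝ) := by
  have hx0 : 0 < x := by linarith
  have hk' : (2 : ℝ) ≤ k := by exact_mod_cast hk
  rw [Real.sqrt_eq_rpow, ← Real.rpow_natCast, one_div (x ^ (k : ℝ)), ← Real.rpow_neg hx0.le,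
    ← Real.rpow_add hx0]
  exact Real.rpow_le_rpow_of_exponent_le hx (by linarith)

lemma one_div_pow_le_rpow (hx : 1 ≤ x) (hk : 2 ≤ k) : 1 / x ^ k ≤ x ^ (-(5 / 4) : ℝ) := by
  refine le_trans ?_ (sqrt_div_pow_le hx hk)
  exact le_mul_of_one_le_left (by positivity) (Real.one_le_sqrt.2 hx)

lemma one_div_pow_div_rpow_le (hx : 1 ≤ x) (hk : 2 ≤ k) :
    1 / √x * (1 / x ^ k) / x ^ (-(5 / 4) : ℝ) ≤ x ^ (-(5 / 4) : ℝ) := by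
  have hx0 : 0 < x := by linarith
  have hk' : (2 : ℝ) ≤ k := by exact_mod_cast hk
  rw [Real.sqrt_eq_rpow, ← Real.rpow_natCast, one_div (x ^ (k : ℝ)), ← Real.rpow_neg hx0.le,
    one_div (x ^ (1 / 2 : ℝ)), ← Real.rpow_neg hx0.le, ← Real.rpow_add hx0, ← Real.rpow_sub hx0]
  exact Real.rpow_le_rpow_of_exponent_le hx (by linarith)

end

lemma measureReal_torusDenom_lt_le {k : ℕ} {n : Fin k → ℤ} (hn : n ≠ 0) {κ : ℝ} (hκ : 0 ≤ κ) :
    volume.real {a | torusDenom n a < κ} ≤ 2 * κ * (1 / hypHeight n) := by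
  have hP := hypHeight_pos n
  have h := ENNReal.toReal_mono ENNReal.ofReal_ne_top (measure_torusDenom_lt_le hn κ)
  rw [ENNReal.toReal_ofReal (by positivity)] at h
  exact h.trans (le_of_eq (by ring))

lemma variance_sum_le_weighted {Ω ι : Type*} [MeasurableSpace Ω] {μ : Measure Ω}
    [IsProbabilityMeasure μ] (S : Finset ι) {X : ι → Ω → ℝ} (hX : ∀ i ∈ S, MemLp (X i) 2 μ)
    {w : ι → ℝ} (hw : ∀ i ∈ S, 0 < w i) :
    ProbabilityTheory.variance (∑ i ∈ S, X i) μ ≤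
      (∑ i ∈ S, w i) * ∑ i ∈ S, ProbabilityTheory.variance (X i) μ / w i := by
  have hXint : ∀ i ∈ S, Integrable (X i) μ := fun i hi => (hX i hi).integrable (by norm_num)
  have hX2 : ∀ i ∈ S, Integrable (fun ω => (X i ω - ∫ ω, X i ω ∂μ) ^ 2) μ := fun i hi =>
    ((hX i hi).sub (memLp_const _)).integrable_sq
  have hsum : MemLp (∑ i ∈ S, X i) 2 μ := memLp_finsetSum' S hX
  have hE : ∫ ω, (∑ i ∈ S, X i) ω ∂μ = ∑ i ∈ S, ∫ ω, X i ω ∂μ := by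
    simp only [Finset.sum_apply]
    exact integral_finsetSum S hXint
  rw [ProbabilityTheory.variance_eq_integral hsum.aemeasurable, hE]
  have hR : Integrable (fun ω => (∑ i ∈ S, w i) *
      ∑ i ∈ S, (X i ω - ∫ ω, X i ω ∂μ) ^ 2 / w i) μ :=
    (integrable_finsetSum S fun i hi => (hX2 i hi).div_const _).const_mul _
  calc _ ≤ ∫ ω, (∑ i ∈ S, w i) * ∑ i ∈ S, (X i ω - ∫ ω, X i ω ∂μ) ^ 2 / w i ∂μ := by
        refine integral_mono (hsum.sub (memLp_const _)).integrable_sq hR fun ω => ?_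
        simp only [Finset.sum_apply, ← Finset.sum_sub_distrib]
        refine Finset.sum_sq_le_sum_mul_sum_of_sq_le_mul S (fun i hi => (hw i hi).le)
          (fun i hi => div_nonneg (sq_nonneg _) (hw i hi).le) fun i hi => ?_
        rw [mul_div_cancel₀ _ (hw i hi).ne']
    _ = _ := by
        rw [integral_const_mul, integral_finsetSum S fun i hi => (hX2 i hi).div_const _]
        congr 1
        refine Finset.sum_congr rfl fun i hi => ?_
        rw [integral_div, ProbabilityTheory.variance_eq_integral (hX i hi).aemeasurable]

lemma log_div_le {L lam : ℝ} (hL : 1 ≤ L) (hlam : 1 ≤ lam) :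
    Real.log (L / (1 / (lam * L))) + 1 ≤ 2 * (lam + Real.log L + 1) := by
  have h : L / (1 / (lam * L)) = lam * (L * L) := by field_simp
  rw [h, Real.log_mul (by positivity) (by positivity), Real.log_mul (by positivity) (by positivity)]
  have := Real.log_le_sub_one_of_pos (show 0 < lam by linarith)
  linarith

/-- The threshold factor for the sums over small denominators. -/
def sumFactor (k Λ : ℕ) (lam : ℝ) : ℝ := lam + Real.log ((Λ + 1 : ℝ) ^ k) + 1

lemma one_le_pow_succ (k Λ : ℕ) : (1 : ℝ) ≤ (Λ + 1 : ℝ) ^ k :=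
  one_le_pow₀ (by linarith [Nat.cast_nonneg (α := ℝ) Λ])

lemma sumFactor_pos {k Λ : ℕ} {lam : ℝ} (hlam : 1 ≤ lam) : 1 ≤ sumFactor k Λ lam := by
  have := Real.log_nonneg (one_le_pow_succ k Λ)
  unfold sumFactor
  linarith

lemma symHarmonic_pow_le (k Λ : ℕ) : symHarmonic (4 ^ Λ) ^ k ≤ 3 ^ k * (Λ + 1 : ℝ) ^ k := by
  rw [← mul_pow]
  exact pow_le_pow_left₀ (symHarmonic_nonneg _) (symHarmonic_four_pow_le Λ) k

lemma truncTerm_eq_of_le {κ L g : ℝ} (h : κ ≤ g) : truncTerm κ L g = min (1 / g) (L / g ^ 2) :=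
  if_pos h

/-- The sum over the degenerate frequencies is small off a small exceptional set. -/
lemma degenFreq_bound {k : ℕ} (hk : 2 ≤ k) (Λ : ℕ) {lam : ℝ} (hlam : 1 ≤ lam) :
    ∃ B : Set (Fin k → UnitAddCircle), volume.real B ≤ 6 * k * 3 ^ k * (1 / (Λ + 1)) ∧
      ∀ a ∉ B, (∀ n ∈ (degenFreq k (4 ^ Λ)).erase 0, 0 < torusDenom n a) ∧
        ∑ n ∈ (degenFreq k (4 ^ Λ)).erase 0,
          min (1 / torusDenom n a) ((Λ + 1 : ℝ) ^ k / torusDenom n a ^ 2) ≤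
            (Λ + 1 : ℝ) ^ k * sumFactor k Λ lam := by
  set L : ℝ := (Λ + 1 : ℝ) ^ k with hLdef
  have hL : 1 ≤ L := one_le_pow_succ k Λ
  set S := (degenFreq k (4 ^ Λ)).erase 0 with hS
  set κ := 1 / (lam * L) with hκdef
  have hκ : 0 < κ := by positivity
  have hκ1 : κ ≤ 1 := by
    rw [hκdef, div_le_one (by positivity)]
    nlinarith
  have hQ := sumFactor_pos (k := k) (Λ := Λ) hlam
  set Q := sumFactor k Λ lam with hQdef
  have hne : ∀ n ∈ S, n ≠ 0 := fun n hn => Finset.ne_of_mem_erase hn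
  have hΛ0 : (0 : ℝ) < Λ + 1 := by positivity
  have hsum : ∑ n ∈ S, 1 / hypHeight n ≤ k * 3 ^ k * (L / (Λ + 1)) := by
    calc _ ≤ ∑ n ∈ degenFreq k (4 ^ Λ), 1 / hypHeight n :=
          Finset.sum_le_sum_of_subset_of_nonneg (Finset.erase_subset _ _) fun n _ _ =>
            one_div_nonneg.2 (hypHeight_pos n).le
      _ ≤ k * symHarmonic (4 ^ Λ) ^ (k - 1) := sum_degenFreq_le _ _
      _ ≤ k * (3 ^ (k - 1) * (Λ + 1 : ℝ) ^ (k - 1)) := by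
          gcongr
          exact symHarmonic_pow_le _ _
      _ ≤ k * (3 ^ k * (Λ + 1 : ℝ) ^ (k - 1)) := by
          gcongr
          · norm_num
          · omega
      _ = k * 3 ^ k * (L / (Λ + 1)) := by
          have : L = (Λ + 1 : ℝ) ^ (k - 1) * (Λ + 1) := by
            rw [hLdef, ← pow_succ, Nat.sub_add_cancel (by omega)]
          rw [this]
          field_simp
  set X : (Fin k → UnitAddCircle) → ℝ := fun a => ∑ n ∈ S, truncTerm κ L (torusDenom n a) with hX
  refine ⟨(⋃ n ∈ S, {a | torusDenom n a < κ}) ∪ {a | L * Q ≤ X a}, ?_, ?_⟩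
  · have h1 : volume.real (⋃ n ∈ S, {a | torusDenom n a < κ}) ≤ 2 * k * 3 ^ k * (1 / (Λ + 1)) := by
      calc _ ≤ ∑ n ∈ S, volume.real {a | torusDenom n a < κ} := measureReal_biUnion_finset_le _ _
        _ ≤ ∑ n ∈ S, 2 * κ * (1 / hypHeight n) :=
            Finset.sum_le_sum fun n hn => measureReal_torusDenom_lt_le (hne n hn) hκ.le
        _ ≤ 2 * κ * (k * 3 ^ k * (L / (Λ + 1))) := by
            rw [← Finset.mul_sum]
            gcongr
        _ = 2 * k * 3 ^ k * (1 / (Λ + 1)) / lam := by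
            rw [hκdef]
            field_simp
        _ ≤ _ := div_le_self (by positivity) hlam
    have hXint : ∫ a, X a ≤ 2 * (k * 3 ^ k * (L / (Λ + 1))) * (2 * Q) := by
      rw [hX, integral_finsetSum S fun n _ =>
        (memLp_truncTerm n hκ (by linarith) 1).integrable le_rfl]
      calc _ ≤ ∑ n ∈ S, 2 / hypHeight n * (Real.log (L / κ) + 1) :=
            Finset.sum_le_sum fun n hn =>
              integral_truncTerm_torusDenom_le (hne n hn) hκ (by linarith)
        _ ≤ ∑ n ∈ S, 2 / hypHeight n * (2 * Q) := by
            refine Finset.sum_le_sum fun n _ => mul_le_mul_of_nonneg_left (log_div_le hL hlam) ?_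
            have := hypHeight_pos n
            positivity
        _ = 2 * (∑ n ∈ S, 1 / hypHeight n) * (2 * Q) := by
            rw [← Finset.sum_mul, Finset.mul_sum]
            simp only [mul_one_div]
        _ ≤ _ := by gcongr
    have h2 : volume.real {a | L * Q ≤ X a} ≤ 4 * k * 3 ^ k * (1 / (Λ + 1)) := by
      have hm := mul_meas_ge_le_integral_of_nonneg (μ := (volume : Measure (Fin k → UnitAddCircle)))
        (f := X) (Filter.Eventually.of_forall fun a =>
          Finset.sum_nonneg fun n _ => truncTerm_nonneg hκ (by linarith) _)
        (integrable_finsetSum S fun n _ =>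
          (memLp_truncTerm n hκ (by linarith) 1).integrable le_rfl) (L * Q)
      have hLQ : 0 < L * Q := by positivity
      refine le_of_mul_le_mul_left (hm.trans (hXint.trans (le_of_eq ?_))) hLQ
      field_simp
      ring
    refine (measureReal_union_le _ _).trans ((add_le_add h1 h2).trans (le_of_eq (by ring)))
  · intro a ha
    simp only [Set.mem_union, Set.mem_iUnion, Set.mem_ofPred_eq, not_or, not_exists, not_lt,
      not_le] at ha
    refine ⟨fun n hn => hκ.trans_le (ha.1 n hn), le_trans (le_of_eq ?_) ha.2.le⟩
    exact Finset.sum_congr rfl fun n hn => (truncTerm_eq_of_le (ha.1 n hn)).symm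

lemma gcdClass_ne_zero {k : ℕ} {i₀ : Fin k} {N a : ℕ} {n : Fin k → ℤ}
    (hn : n ∈ gcdClass i₀ N a) : n ≠ 0 := by
  rintro rfl
  simp [gcdClass] at hn

lemma indepFun_gcdClass {k : ℕ} {i₀ : Fin k} {N a : ℕ} {n n' : Fin k → ℤ}
    (hn : n ∈ gcdClass i₀ N a) (hn' : n' ∈ gcdClass i₀ N a) (hne : n ≠ n') :
    ProbabilityTheory.IndepFun (torusForm n) (torusForm n') volume := by
  simp only [gcdClass, Finset.mem_filter] at hn hn'
  obtain ⟨j, hj⟩ := exists_minor_ne_zero hn.2.1 hn'.2.1 (hn.2.2.2.trans hn'.2.2.2.symm) hne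
  exact indepFun_torusForm hj

lemma variance_gcdClass_le {k : ℕ} (i₀ : Fin k) (N : ℕ) {a : ℕ} (ha : 1 ≤ a) {κ L : ℝ}
    (hκ : 0 < κ) (hL : 0 ≤ L) :
    ProbabilityTheory.variance (∑ n ∈ gcdClass i₀ N a, fun b => truncTerm κ L (torusDenom n b))
      volume ≤ 2 * (1 / κ) * (1 / (a : ℝ) ^ k * symHarmonic N ^ k) := by
  rw [ProbabilityTheory.IndepFun.variance_sum fun n _ => memLp_truncTerm n hκ hL 2]
  · calc _ ≤ ∑ n ∈ gcdClass i₀ N a, 2 * (1 / κ) * (1 / hypHeight n) :=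
          Finset.sum_le_sum fun n hn =>
            (variance_truncTerm_torusDenom_le (gcdClass_ne_zero hn) hκ hL).trans
              (le_of_eq (by ring))
      _ ≤ _ := by
          rw [← Finset.mul_sum]
          gcongr
          exact sum_gcdClass_le i₀ N ha
  · intro n hn p hp hne
    have hm : ∀ n : Fin k → ℤ,
        Measurable fun y : UnitAddCircle => truncTerm κ L (hypHeight n * ‖y‖) := fun n =>
      (measurable_truncTerm κ L).comp (measurable_norm.const_mul _)
    exact (indepFun_gcdClass hn hp hne).comp (hm n) (hm p)

/-- The sum over the frequencies of full support is small off a small exceptional set. -/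
lemma gcdClass_bound {k : ℕ} (hk : 2 ≤ k) (i₀ : Fin k) (Λ : ℕ) {lam : ℝ} (hlam : 1 ≤ lam) :
    ∃ B : Set (Fin k → UnitAddCircle),
      volume.real B ≤ 2 * 3 ^ k * (gcdZeta + gcdZeta ^ 2) * (1 / lam) ∧
      ∀ b ∉ B, (∀ a ∈ Icc 1 (4 ^ Λ), ∀ n ∈ gcdClass i₀ (4 ^ Λ) a, 0 < torusDenom n b) ∧
        ∑ a ∈ Icc 1 (4 ^ Λ), ∑ n ∈ gcdClass i₀ (4 ^ Λ) a,
          min (1 / torusDenom n b) ((Λ + 1 : ℝ) ^ k / torusDenom n b ^ 2) ≤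
            (1 + 4 * 3 ^ k * gcdZeta) * ((Λ + 1 : ℝ) ^ k * sumFactor k Λ lam) := by
  set L : ℝ := (Λ + 1 : ℝ) ^ k with hLdef
  have hL : 1 ≤ L := one_le_pow_succ k Λ
  have hL0 : 0 ≤ L := by linarith
  set N := 4 ^ Λ with hN
  set Z := gcdZeta with hZdef
  have hZ : 0 ≤ Z := gcdZeta_nonneg
  have hM : symHarmonic N ^ k ≤ 3 ^ k * L := symHarmonic_pow_le k Λ
  have hM0 : 0 ≤ symHarmonic N ^ k := pow_nonneg (symHarmonic_nonneg N) k
  have hQ := sumFactor_pos (k := k) (Λ := Λ) hlam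
  set Q := sumFactor k Λ lam with hQdef
  set κ : ℕ → ℝ := fun a => √a * (1 / (lam * L)) with hκdef
  have ha1 : ∀ a ∈ Icc 1 N, (1 : ℝ) ≤ a := fun a ha => by
    exact_mod_cast (Finset.mem_Icc.1 ha).1
  have hκ : ∀ a ∈ Icc 1 N, 0 < κ a := fun a ha => by
    have := ha1 a ha
    positivity
  have hκle : ∀ a ∈ Icc 1 N, 1 / (lam * L) ≤ κ a := fun a ha =>
    le_mul_of_one_le_left (by positivity) (Real.one_le_sqrt.2 (ha1 a ha))
  set X : ℕ → (Fin k → UnitAddCircle) → ℝ := fun a =>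
    ∑ n ∈ gcdClass i₀ N a, fun b => truncTerm (κ a) L (torusDenom n b) with hX
  have hXL : ∀ a ∈ Icc 1 N, MemLp (X a) 2 volume := fun a ha =>
    memLp_finsetSum' _ fun n _ => memLp_truncTerm n (hκ a ha) hL0 2
  set T : (Fin k → UnitAddCircle) → ℝ := ∑ a ∈ Icc 1 N, X a with hT
  have hTL : MemLp T 2 volume := memLp_finsetSum' _ hXL
  have hTE : ∫ b, T b ≤ 4 * 3 ^ k * Z * (L * Q) := by
    have e1 : ∫ b, T b = ∑ a ∈ Icc 1 N, ∑ n ∈ gcdClass i₀ N a,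
        ∫ b, truncTerm (κ a) L (torusDenom n b) := by
      simp only [hT, Finset.sum_apply]
      rw [integral_finsetSum _ fun a ha => (hXL a ha).integrable (by norm_num)]
      refine Finset.sum_congr rfl fun a ha => ?_
      simp only [hX, Finset.sum_apply]
      exact integral_finsetSum _ fun n _ =>
        (memLp_truncTerm n (hκ a ha) hL0 1).integrable le_rfl
    rw [e1]
    have hκ0 : 0 < 1 / (lam * L) := by positivity
    have hκ1 : 1 / (lam * L) ≤ L := by
      rw [div_le_iff₀ (by positivity)]
      nlinarith [mul_le_mul hlam hL zero_le_one (by linarith)]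
    calc _ ≤ ∑ a ∈ Icc 1 N, ∑ n ∈ gcdClass i₀ N a, 4 * Q * (1 / hypHeight n) := by
          refine Finset.sum_le_sum fun a ha => Finset.sum_le_sum fun n hn => ?_
          have hP := hypHeight_pos n
          calc _ ≤ ∫ b, truncTerm (1 / (lam * L)) L (torusDenom n b) :=
                integral_mono ((memLp_truncTerm n (hκ a ha) hL0 1).integrable le_rfl)
                  ((memLp_truncTerm n hκ0 hL0 1).integrable le_rfl)
                  fun b => truncTerm_antitone hκ0 hL0 (hκle a ha) _
            _ ≤ 2 / hypHeight n * (Real.log (L / (1 / (lam * L))) + 1) :=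
                integral_truncTerm_torusDenom_le (gcdClass_ne_zero hn) hκ0 hκ1
            _ ≤ 2 / hypHeight n * (2 * Q) := by
                gcongr
                exact log_div_le hL hlam
            _ = _ := by ring
      _ ≤ ∑ a ∈ Icc 1 N, 4 * Q * ((a : ℝ) ^ (-(5 / 4) : ℝ) * (3 ^ k * L)) := by
          refine Finset.sum_le_sum fun a ha => ?_
          rw [← Finset.mul_sum]
          gcongr
          refine (sum_gcdClass_le i₀ N (Finset.mem_Icc.1 ha).1).trans ?_
          gcongr
          exact one_div_pow_le_rpow (ha1 a ha) hk
      _ = 4 * Q * (3 ^ k * L) * ∑ a ∈ Icc 1 N, (a : ℝ) ^ (-(5 / 4) : ℝ) := by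
          rw [Finset.mul_sum]
          exact Finset.sum_congr rfl fun a _ => by ring
      _ ≤ 4 * Q * (3 ^ k * L) * Z := by
          gcongr
          exact sum_gcdWeight_le _
      _ = _ := by ring
  have hTV : ProbabilityTheory.variance T volume ≤ Z * (2 * 3 ^ k * lam * L ^ 2 * Z) := by
    have hw : ∀ a ∈ Icc 1 N, (0 : ℝ) < (a : ℝ) ^ (-(5 / 4) : ℝ) := fun a ha => by
      have := ha1 a ha
      positivity
    calc _ ≤ (∑ a ∈ Icc 1 N, (a : ℝ) ^ (-(5 / 4) : ℝ)) * ∑ a ∈ Icc 1 N,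
            ProbabilityTheory.variance (X a) volume / (a : ℝ) ^ (-(5 / 4) : ℝ) :=
          variance_sum_le_weighted _ hXL hw
      _ ≤ Z * ∑ a ∈ Icc 1 N, 2 * 3 ^ k * lam * L ^ 2 * (a : ℝ) ^ (-(5 / 4) : ℝ) := by
          gcongr with a ha
          · exact Finset.sum_nonneg fun a _ =>
              div_nonneg (ProbabilityTheory.variance_nonneg _ _) (by positivity)
          · exact sum_gcdWeight_le _
          · have h1 := ha1 a ha
            calc _ ≤ 2 * (1 / κ a) * (1 / (a : ℝ) ^ k * (3 ^ k * L)) / (a : ℝ) ^ (-(5 / 4) : ℝ) := by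
                  gcongr
                  refine (variance_gcdClass_le i₀ N (Finset.mem_Icc.1 ha).1 (hκ a ha) hL0).trans ?_
                  have := hκ a ha
                  gcongr
              _ = 2 * 3 ^ k * lam * L ^ 2 *
                    (1 / √(a : ℝ) * (1 / (a : ℝ) ^ k) / (a : ℝ) ^ (-(5 / 4) : ℝ)) := by
                  have : 0 < √(a : ℝ) := by positivity
                  simp only [hκdef]
                  field_simp
              _ ≤ _ := by
                  gcongr
                  exact one_div_pow_div_rpow_le h1 hk
      _ ≤ _ := by
          rw [← Finset.mul_sum]
          gcongr
          exact sum_gcdWeight_le _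
  refine ⟨(⋃ a ∈ Icc 1 N, ⋃ n ∈ gcdClass i₀ N a, {b | torusDenom n b < κ a}) ∪
    {b | lam * L ≤ |T b - ∫ b, T b|}, ?_, ?_⟩
  · have h1 : volume.real (⋃ a ∈ Icc 1 N, ⋃ n ∈ gcdClass i₀ N a, {b | torusDenom n b < κ a}) ≤
        2 * 3 ^ k * Z * (1 / lam) := by
      calc _ ≤ ∑ a ∈ Icc 1 N, ∑ n ∈ gcdClass i₀ N a, volume.real {b | torusDenom n b < κ a} :=
            (measureReal_biUnion_finset_le _ _).trans
              (Finset.sum_le_sum fun a _ => measureReal_biUnion_finset_le _ _)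
        _ ≤ ∑ a ∈ Icc 1 N, 2 * 3 ^ k * (1 / lam) * (a : ℝ) ^ (-(5 / 4) : ℝ) := by
            refine Finset.sum_le_sum fun a ha => ?_
            have h1 := ha1 a ha
            calc _ ≤ ∑ n ∈ gcdClass i₀ N a, 2 * κ a * (1 / hypHeight n) :=
                  Finset.sum_le_sum fun n hn =>
                    measureReal_torusDenom_lt_le (gcdClass_ne_zero hn) (hκ a ha).le
              _ ≤ 2 * κ a * (1 / (a : ℝ) ^ k * (3 ^ k * L)) := by
                  rw [← Finset.mul_sum]
                  have := hκ a ha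
                  gcongr
                  refine (sum_gcdClass_le i₀ N (Finset.mem_Icc.1 ha).1).trans ?_
                  gcongr
              _ = 2 * 3 ^ k * (1 / lam) * (√(a : ℝ) * (1 / (a : ℝ) ^ k)) := by
                  simp only [hκdef]
                  field_simp
              _ ≤ _ := by
                  gcongr
                  exact sqrt_div_pow_le h1 hk
        _ ≤ 2 * 3 ^ k * (1 / lam) * Z := by
            rw [← Finset.mul_sum]
            gcongr
            exact sum_gcdWeight_le _
        _ = _ := by ring
    have h2 : volume.real {b | lam * L ≤ |T b - ∫ b, T b|} ≤ 2 * 3 ^ k * Z ^ 2 * (1 / lam) := by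
      have hc : 0 < lam * L := by positivity
      have h := ENNReal.toReal_mono ENNReal.ofReal_ne_top
        (ProbabilityTheory.meas_ge_le_variance_div_sq hTL hc)
      rw [ENNReal.toReal_ofReal
        (div_nonneg (ProbabilityTheory.variance_nonneg _ _) (by positivity))] at h
      calc _ ≤ _ := h
        _ ≤ Z * (2 * 3 ^ k * lam * L ^ 2 * Z) / (lam * L) ^ 2 := by gcongr
        _ = _ := by field_simp
    exact (measureReal_union_le _ _).trans ((add_le_add h1 h2).trans (le_of_eq (by ring)))
  · intro b hb
    simp only [Set.mem_union, Set.mem_iUnion, Set.mem_ofPred_eq, not_or, not_exists, not_lt,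
      not_le] at hb
    refine ⟨fun a ha n hn => (hκ a ha).trans_le (hb.1 a ha n hn), ?_⟩
    have e : ∑ a ∈ Icc 1 N, ∑ n ∈ gcdClass i₀ N a,
        min (1 / torusDenom n b) (L / torusDenom n b ^ 2) = T b := by
      simp only [hT, hX, Finset.sum_apply]
      exact Finset.sum_congr rfl fun a ha => Finset.sum_congr rfl fun n hn =>
        (truncTerm_eq_of_le (hb.1 a ha n hn)).symm
    rw [e]
    have h3 := (abs_lt.1 hb.2).2
    have h4 : lam * L ≤ L * Q := by
      rw [mul_comm]
      gcongr
      have := Real.log_nonneg hL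
      rw [hQdef, sumFactor]
      linarith
    linarith [hTE]

lemma torusDenom_nonneg {k : ℕ} (n : Fin k → ℤ) (b : Fin k → UnitAddCircle) :
    0 ≤ torusDenom n b :=
  mul_nonneg (hypHeight_pos n).le (norm_nonneg _)

lemma torusDenom_neg {k : ℕ} (n : Fin k → ℤ) (b : Fin k → UnitAddCircle) :
    torusDenom (-n) b = torusDenom n b := by
  have h : torusForm (-n) b = -torusForm n b := by
    simp [torusForm_apply]
  simp [torusDenom, hypHeight, h]

lemma freqBox_subset {k : ℕ} (i₀ : Fin k) (Λ : ℕ) {n : Fin k → ℤ} (hn : n ∈ freqBox k Λ) :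
    n ∈ (degenFreq k (4 ^ Λ)).erase 0 ∨ n ∈ (Icc 1 (4 ^ Λ)).biUnion (gcdClass i₀ (4 ^ Λ)) ∨
      -n ∈ (Icc 1 (4 ^ Λ)).biUnion (gcdClass i₀ (4 ^ Λ)) := by
  rw [freqBox_eq, Finset.mem_erase, mem_freqCube] at hn
  by_cases h0 : ∃ i, n i = 0
  · left
    simp only [degenFreq, Finset.mem_erase, Finset.mem_filter, mem_freqCube]
    exact ⟨hn.1, hn.2, h0⟩
  · push Not at h0
    right
    have key : ∀ n' : Fin k → ℤ, (∀ i, |n' i| ≤ (4 ^ Λ : ℕ)) → (∀ i, n' i ≠ 0) → 0 < n' i₀ →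
        n' ∈ (Icc 1 (4 ^ Λ)).biUnion (gcdClass i₀ (4 ^ Λ)) := by
      intro n' hle hne hpos
      simp only [Finset.mem_biUnion, gcdClass, Finset.mem_filter, mem_freqCube]
      have hd : vecGcd n' ∣ (n' i₀).natAbs := Finset.gcd_dvd (Finset.mem_univ i₀)
      have hp : 0 < (n' i₀).natAbs := Int.natAbs_pos.2 (hne i₀)
      refine ⟨vecGcd n', Finset.mem_Icc.2 ⟨Nat.pos_of_dvd_of_pos hd hp, ?_⟩, hle, hpos, hne, rfl⟩
      refine (Nat.le_of_dvd hp hd).trans ?_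
      have := hle i₀
      rw [Int.abs_eq_natAbs] at this
      exact_mod_cast this
    rcases lt_or_gt_of_ne (h0 i₀) with h | h
    · right
      exact key (-n) (fun i => by simpa using hn.2 i) (fun i => by simpa using h0 i)
        (by simpa using h)
    · left
      exact key n hn.2 h0 h

/-- Off a small exceptional set, all denominators are positive and the truncated sum of their
reciprocals is controlled. -/
theorem exists_exceptional_set {k : ℕ} (hk : 2 ≤ k) :
    ∃ C : ℝ, 0 < C ∧ ∀ (Λ : ℕ) (lam : ℝ), 1 ≤ lam → ∃ B : Set (Fin k → UnitAddCircle),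
      volume.real B ≤ C * (1 / lam + 1 / (Λ + 1)) ∧
      ∀ b ∉ B, (∀ n ∈ freqBox k Λ, 0 < torusDenom n b) ∧
        ∑ n ∈ freqBox k Λ, min (1 / torusDenom n b) ((Λ + 1 : ℝ) ^ k / torusDenom n b ^ 2) ≤
          C * ((Λ + 1 : ℝ) ^ k * sumFactor k Λ lam) := by
  have hZ := gcdZeta_nonneg
  set C₁ : ℝ := 6 * k * 3 ^ k with hC₁
  set C₂ : ℝ := 2 * 3 ^ k * (gcdZeta + gcdZeta ^ 2) with hC₂
  set C₃ : ℝ := 1 + 2 * (1 + 4 * 3 ^ k * gcdZeta) with hC₃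
  have h₁ : 0 ≤ C₁ := by positivity
  have h₂ : 0 ≤ C₂ := by positivity
  have h₃ : 0 < C₃ := by positivity
  refine ⟨C₁ + C₂ + C₃, by positivity, fun Λ lam hlam => ?_⟩
  have i₀ : Fin k := ⟨0, by omega⟩
  obtain ⟨B₁, hB₁, hb₁⟩ := degenFreq_bound hk Λ hlam
  obtain ⟨B₂, hB₂, hb₂⟩ := gcdClass_bound hk i₀ Λ hlam
  have hΛ0 : (0 : ℝ) < Λ + 1 := by positivity
  refine ⟨B₁ ∪ B₂, ?_, fun b hb => ?_⟩
  · refine (measureReal_union_le _ _).trans ((add_le_add hB₁ hB₂).trans ?_)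
    have e1 : 0 ≤ 1 / lam := by positivity
    have e2 : 0 ≤ 1 / ((Λ : ℝ) + 1) := by positivity
    nlinarith [mul_nonneg h₁ e1, mul_nonneg h₂ e2, mul_nonneg h₃.le e1, mul_nonneg h₃.le e2]
  · simp only [Set.mem_union, not_or] at hb
    obtain ⟨p₁, s₁⟩ := hb₁ b hb.1
    obtain ⟨p₂, s₂⟩ := hb₂ b hb.2
    set U := (Icc 1 (4 ^ Λ)).biUnion (gcdClass i₀ (4 ^ Λ)) with hU
    have pU : ∀ n ∈ U, 0 < torusDenom n b := fun n hn => by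
      obtain ⟨a, ha, hna⟩ := Finset.mem_biUnion.1 hn
      exact p₂ a ha n hna
    constructor
    · intro n hn
      rcases freqBox_subset i₀ Λ hn with h | h | h
      · exact p₁ n h
      · exact pU n h
      · exact torusDenom_neg n b ▸ pU _ h
    · set L : ℝ := (Λ + 1 : ℝ) ^ k with hL
      have hL0 : 0 < L := by positivity
      set f : (Fin k → ℤ) → ℝ := fun n =>
        min (1 / torusDenom n b) (L / torusDenom n b ^ 2) with hf
      have hf0 : ∀ n, 0 ≤ f n := fun n =>
        le_min (one_div_nonneg.2 (torusDenom_nonneg n b)) (by positivity)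
      have hfneg : ∀ n, f (-n) = f n := fun n => by simp only [hf, torusDenom_neg]
      have hUs : ∑ n ∈ U, f n ≤ (1 + 4 * 3 ^ k * gcdZeta) * (L * sumFactor k Λ lam) :=
        (sum_biUnion_le_sum_sum _ _ hf0).trans s₂
      have hQ := sumFactor_pos (k := k) (Λ := Λ) hlam
      have hun : ∀ s t : Finset (Fin k → ℤ), ∑ n ∈ s ∪ t, f n ≤ ∑ n ∈ s, f n + ∑ n ∈ t, f n :=
        fun s t => by
          rw [← Finset.sum_union_inter]
          exact le_add_of_nonneg_right (Finset.sum_nonneg fun n _ => hf0 n)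
      have hneg : ∑ n ∈ U.image (fun n => -n), f n = ∑ n ∈ U, f n := by
        rw [Finset.sum_image fun _ _ _ _ h => neg_injective h]
        exact Finset.sum_congr rfl fun n _ => hfneg n
      have hsub : freqBox k Λ ⊆
          (degenFreq k (4 ^ Λ)).erase 0 ∪ (U ∪ U.image (fun n => -n)) := by
        intro n hn
        rw [Finset.mem_union, Finset.mem_union]
        rcases freqBox_subset i₀ Λ hn with h | h | h
        · exact Or.inl h
        · exact Or.inr (Or.inl h)
        · exact Or.inr (Or.inr (Finset.mem_image.2 ⟨-n, h, neg_neg n⟩))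
      have hLQ : 0 ≤ L * sumFactor k Λ lam := by positivity
      calc _ ≤ ∑ n ∈ (degenFreq k (4 ^ Λ)).erase 0 ∪ (U ∪ U.image (fun n => -n)), f n :=
            Finset.sum_le_sum_of_subset_of_nonneg hsub fun n _ _ => hf0 n
        _ ≤ ∑ n ∈ (degenFreq k (4 ^ Λ)).erase 0, f n + (∑ n ∈ U, f n + ∑ n ∈ U, f n) := by
            refine (hun _ _).trans ?_
            gcongr
            exact (hun _ _).trans (by rw [hneg])
        _ ≤ C₃ * (L * sumFactor k Λ lam) := by
            rw [hC₃]
            linarith [s₁, hUs]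
        _ ≤ _ := by
            gcongr
            linarith

/-- A property valid almost everywhere on the torus pulls back to `ℝ^k`. -/
lemma ae_of_ae_torus {k : ℕ} {p : (Fin k → UnitAddCircle) → Prop}
    (hp : ∀ᵐ b ∂(volume : Measure (Fin k → UnitAddCircle)), p b) :
    ∀ᵐ α ∂(volume : Measure (Fin k → ℝ)), p fun i => (α i : UnitAddCircle) := by
  have hcover : (⋃ z : Fin k → ℤ, Set.pi Set.univ fun i => Set.Ioc (z i : ℝ) (z i + 1)) =
      (Set.univ : Set (Fin k → ℝ)) := by
    refine Set.eq_univ_of_forall fun α => Set.mem_iUnion.2 ⟨fun i => ⌈α i⌉ - 1, fun i _ => ?_⟩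
    have h1 := Int.ceil_lt_add_one (α i)
    have h2 := Int.le_ceil (α i)
    constructor <;> push_cast <;> linarith
  rw [← Measure.restrict_univ (μ := (volume : Measure (Fin k → ℝ))), ← hcover,
    ae_restrict_iUnion_iff]
  intro z
  have hmp : MeasurePreserving (fun (α : Fin k → ℝ) i => (α i : UnitAddCircle))
      (volume.restrict (Set.pi Set.univ fun i => Set.Ioc (z i : ℝ) (z i + 1))) volume := by
    rw [volume_pi, Measure.restrict_pi_pi, volume_pi]
    exact measurePreserving_pi _ _ fun i => UnitAddCircle.measurePreserving_mk (z i : ℝ)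
  exact hmp.quasiMeasurePreserving.ae hp

lemma abs_DiscT_le_two_mul {k : ℕ} (α : Fin k → ℝ) {x : Fin k → ℝ}
    (hx : ∀ i, x i ∈ Set.Icc (0 : ℝ) 1) (m : ℕ) : |DiscT k α x m| ≤ 2 * m := by
  have h1 : |∑ n ∈ Finset.Icc 1 m,
      if ∀ i, Int.fract ((n : ℝ) * α i) < x i then (1 : ℝ) else 0| ≤ m := by
    refine (Finset.abs_sum_le_sum_abs _ _).trans ?_
    calc _ ≤ ∑ _n ∈ Finset.Icc 1 m, (1 : ℝ) := Finset.sum_le_sum fun n _ => by split_ifs <;> simp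
      _ = m := by simp
  have h2 : |(m : ℝ) * ∏ i, x i| ≤ m := by
    rw [abs_mul, Nat.abs_cast, abs_of_nonneg (Finset.prod_nonneg fun i _ => (hx i).1)]
    exact mul_le_of_le_one_right (Nat.cast_nonneg m)
      (Finset.prod_le_one (fun i _ => (hx i).1) fun i _ => (hx i).2)
  refine (abs_sub _ _).trans ?_
  linarith

lemma one_le_log_natCast {N : ℕ} (hN : 3 ≤ N) : 1 ≤ Real.log N := by
  rw [Real.le_log_iff_exp_le (by positivity)]
  have : (3 : ℝ) ≤ N := by exact_mod_cast hN
  linarith [Real.exp_one_lt_d9]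

lemma log_le_exp_ceil {N : ℕ} (hN : 3 ≤ N) :
    Real.log N ≤ Real.exp ⌈Real.log (Real.log N)⌉₊ := by
  rw [← Real.log_le_iff_le_exp (by linarith [one_le_log_natCast hN])]
  exact Nat.le_ceil _

lemma exp_ceil_le {N : ℕ} (hN : 3 ≤ N) :
    Real.exp ⌈Real.log (Real.log N)⌉₊ ≤ 3 * Real.log N := by
  have h1 := one_le_log_natCast hN
  have h2 := Nat.ceil_lt_add_one (Real.log_nonneg h1)
  calc _ ≤ Real.exp (Real.log (Real.log N) + 1) := Real.exp_le_exp.2 h2.le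
    _ = Real.log N * Real.exp 1 := by rw [Real.exp_add, Real.exp_log (by linarith)]
    _ ≤ _ := by nlinarith [Real.exp_one_lt_d9]

/-- The dyadic scale attached to the block of `N` with `⌈log log N⌉ = J`. -/
def blockScale (J : ℕ) : ℕ := ⌈2 * Real.exp J⌉₊

lemma le_blockScale (J : ℕ) : 2 * Real.exp J ≤ blockScale J := Nat.le_ceil _

lemma blockScale_add_one_le (J : ℕ) : (blockScale J : ℝ) + 1 ≤ 4 * Real.exp J := by
  have h1 := Nat.ceil_lt_add_one (show 0 ≤ 2 * Real.exp (J : ℝ) by positivity)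
  have h2 := Real.one_le_exp (Nat.cast_nonneg (α := ℝ) J)
  unfold blockScale
  linarith

lemma le_two_pow_blockScale {N : ℕ} (hN : 3 ≤ N) :
    N ≤ 2 ^ blockScale ⌈Real.log (Real.log N)⌉₊ := by
  set J := ⌈Real.log (Real.log N)⌉₊
  have h1 := le_blockScale J
  have h2 := log_le_exp_ceil hN
  have h3 := one_le_log_natCast hN
  have hN0 : (0 : ℝ) < N := by positivity
  have h4 : (N : ℝ) ≤ (2 : ℝ) ^ blockScale J := by
    rw [← Real.log_le_log_iff hN0 (by positivity), Real.log_pow]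
    nlinarith [Real.log_two_gt_d9]
  exact_mod_cast h4

lemma sumFactor_blockScale_le {φ : ℕ → ℝ} (hφpos : ∀ n, 0 < φ n) (hφmono : Monotone φ)
    (hs : Summable fun n => 1 / φ n) (k J : ℕ) :
    sumFactor k (blockScale J) (φ J / φ 0) ≤ (2 / φ 0 + 2 * k * ∑' n, 1 / φ n) * φ J := by
  have h0 := hφpos 0
  have hJ := hφpos J
  have h1 : (J : ℝ) + 1 ≤ (∑' n, 1 / φ n) * φ J := by
    have : ∑ n ∈ range (J + 1), 1 / φ J ≤ ∑' n, 1 / φ n := by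
      refine le_trans (Finset.sum_le_sum fun n hn => ?_)
        (hs.sum_le_tsum (range (J + 1)) fun n _ => (one_div_pos.2 (hφpos n)).le)
      exact one_div_le_one_div_of_le (hφpos n)
        (hφmono (Nat.lt_succ_iff.1 (Finset.mem_range.1 hn)))
    rw [Finset.sum_const, Finset.card_range, nsmul_eq_mul, mul_one_div,
      div_le_iff₀ hJ] at this
    exact_mod_cast this
  have h2 : Real.log ((blockScale J : ℝ) + 1) ≤ J + 2 := by
    rw [Real.log_le_iff_le_exp (by positivity), Real.exp_add]
    refine (blockScale_add_one_le J).trans ?_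
    have : (4 : ℝ) ≤ Real.exp 2 := by
      have := Real.exp_one_gt_d9
      rw [show (2 : ℝ) = 1 + 1 by norm_num, Real.exp_add]
      nlinarith
    nlinarith [Real.exp_pos (J : ℝ)]
  have h3 : 1 ≤ φ J / φ 0 := (one_le_div h0).2 (hφmono (Nat.zero_le J))
  have h4 : (k : ℝ) * Real.log ((blockScale J : ℝ) + 1) ≤ k * (2 * ((∑' n, 1 / φ n) * φ J)) := by
    gcongr
    linarith [Nat.cast_nonneg (α := ℝ) J]
  rw [sumFactor, Real.log_pow]
  calc _ ≤ φ J / φ 0 + k * (2 * ((∑' n, 1 / φ n) * φ J)) + φ J / φ 0 := by linarith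
    _ = _ := by ring

/-- The discrepancy bound in the convergence case. -/
theorem ae_abs_DiscT_le_of_summable {k : ℕ} (hk : 2 ≤ k) {φ : ℕ → ℝ} (hφpos : ∀ n, 0 < φ n)
    (hφmono : Monotone φ) (hs : Summable fun n => 1 / φ n) :
    ∀ᵐ α ∂(volume : Measure (Fin k → ℝ)),
      ∃ C : ℝ, ∀ N : ℕ, 3 ≤ N → ∀ m : ℕ, 1 ≤ m → m ≤ N → ∀ x : Fin k → ℝ,
        (∀ i, x i ∈ Set.Icc (0 : ℝ) 1) →
          |DiscT k α x m| ≤ C * Real.log N ^ k * φ ⌈Real.log (Real.log N)⌉₊ := by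
  obtain ⟨C, hC, hB⟩ := exists_exceptional_set hk
  have h0 := hφpos 0
  have hlam : ∀ J, 1 ≤ φ J / φ 0 := fun J => (one_le_div h0).2 (hφmono (Nat.zero_le J))
  choose B hBm hBb using fun J => hB (blockScale J) (φ J / φ 0) (hlam J)
  have hsum : Summable fun J => volume.real (B J) := by
    refine Summable.of_nonneg_of_le (fun _ => measureReal_nonneg)
      (fun J => (hBm J).trans (mul_le_mul_of_nonneg_left (add_le_add
        (le_of_eq (?_ : _ = φ 0 * (1 / φ J))) (?_ : _ ≤ Real.exp (-1) ^ J)) hC.le)) ?_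
    · rw [one_div_div, mul_one_div]
    · rw [← Real.exp_nat_mul, mul_neg_one, Real.exp_neg, ← one_div]
      refine one_div_le_one_div_of_le (Real.exp_pos _) ?_
      linarith [le_blockScale J, Real.exp_pos (J : ℝ)]
    · exact ((hs.mul_left _).add (summable_geometric_of_lt_one (Real.exp_pos _).le
        (Real.exp_lt_one_iff.2 (by norm_num)))).mul_left _
  have htop : ∑' J, volume (B J) ≠ ⊤ := by
    have := hsum.tsum_ofReal_ne_top
    simpa only [ofReal_measureReal (measure_ne_top _ _)] using this
  filter_upwards [ae_of_ae_torus (ae_eventually_notMem htop)] with α hα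
  obtain ⟨J₀, hJ₀⟩ := Filter.eventually_atTop.1 hα
  set S := ∑' n, 1 / φ n
  have hS : 0 ≤ S := tsum_nonneg fun n => (one_div_pos.2 (hφpos n)).le
  set C₁ : ℝ := 4 * 84 ^ k * ((1 + C) * (12 ^ k * (2 / φ 0 + 2 * k * S))) with hC₁
  set C₂ : ℝ := 2 * Real.exp (Real.exp J₀) / φ 0 with hC₂
  have hC₁0 : 0 ≤ C₁ := by positivity
  have hC₂0 : 0 ≤ C₂ := by positivity
  refine ⟨C₁ + C₂, fun N hN m _ hmN x hx => ?_⟩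
  have hlog := one_le_log_natCast hN
  set J := ⌈Real.log (Real.log N)⌉₊ with hJ
  have hφJ := hφpos J
  have hpow : 1 ≤ Real.log N ^ k := one_le_pow₀ hlog
  rcases le_or_gt J₀ J with hle | hlt
  · have hb := hBb J _ (hJ₀ J hle)
    simp only [torusDenom, torusForm_coe] at hb
    have hpos : ∀ n ∈ freqBox k (blockScale J), 0 < ‖(linForm n α : UnitAddCircle)‖ :=
      fun n hn => pos_of_mul_pos_right (hb.1 n hn) (hypHeight_pos n).le
    have hΛ : 1 ≤ blockScale J := Nat.one_le_ceil_iff.2 (by positivity)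
    refine (abs_DiscT_le hΛ hpos hx (hmN.trans (le_two_pow_blockScale hN))).trans ?_
    have hL : ((blockScale J : ℝ) + 1) ^ k ≤ 12 ^ k * Real.log N ^ k := by
      rw [← mul_pow]
      refine pow_le_pow_left₀ (by positivity) ?_ k
      linarith [blockScale_add_one_le J, exp_ceil_le hN]
    have hQ := sumFactor_blockScale_le hφpos hφmono hs k J
    have hQ1 := sumFactor_pos (k := k) (Λ := blockScale J) (hlam J)
    set L := ((blockScale J : ℝ) + 1) ^ k
    have hL0 : 0 < L := by positivity
    set Q := sumFactor k (blockScale J) (φ J / φ 0)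
    calc _ ≤ 4 * 84 ^ k * (L * Q + C * (L * Q)) := by
          gcongr
          · exact le_mul_of_one_le_right hL0.le hQ1
          · exact hb.2
      _ = 4 * 84 ^ k * ((1 + C) * (L * Q)) := by ring
      _ ≤ 4 * 84 ^ k * ((1 + C) * ((12 ^ k * Real.log N ^ k) *
            ((2 / φ 0 + 2 * k * S) * φ J))) := by gcongr
      _ = C₁ * Real.log N ^ k * φ J := by rw [hC₁]; ring
      _ ≤ _ := by
          gcongr
          linarith
  · have hN' : (N : ℝ) ≤ Real.exp (Real.exp J₀) := by
      rw [← Real.log_le_iff_le_exp (by positivity)]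
      exact (log_le_exp_ceil hN).trans (Real.exp_le_exp.2 (by exact_mod_cast hlt.le))
    calc |DiscT k α x m| ≤ 2 * m := abs_DiscT_le_two_mul α hx m
      _ ≤ 2 * N := by gcongr
      _ ≤ 2 * Real.exp (Real.exp J₀) := by gcongr
      _ = C₂ * 1 * φ 0 := by rw [hC₂]; field_simp
      _ ≤ C₂ * Real.log N ^ k * φ J := by
          gcongr
          exact hφmono (Nat.zero_le J)
      _ ≤ _ := by
          gcongr
          linarith

/-! ### Exponential sums are controlled by the discrepancy -/

lemma continuous_eu : Continuous eu := by
  unfold eu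
  fun_prop

lemma hasDerivAt_eu_mul (n : ℤ) (x : ℝ) :
    HasDerivAt (fun x : ℝ => eu (n * x)) (2 * Real.pi * n * Complex.I * eu (n * x)) x := by
  have h : HasDerivAt (fun x : ℝ => ((2 * Real.pi * (n * x) : ℝ) : ℂ) * Complex.I)
      (2 * Real.pi * n * Complex.I) x := by
    have h1 : HasDerivAt (fun x : ℝ => (2 * Real.pi * (n * x) : ℝ)) (2 * Real.pi * n) x := by
      simpa using ((hasDerivAt_id x).const_mul (n : ℝ)).const_mul (2 * Real.pi)
    have h2 := h1.ofReal_comp.mul_const Complex.I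
    push_cast at h2
    simpa using h2
  exact h.cexp.congr_deriv (mul_comm _ _)

/-- The measure with respect to which the boxes are averaged. -/
def koksmaMeasure : Measure ℝ := Measure.dirac 1 + volume.restrict (Set.Ioo 0 1)

instance isFiniteMeasure_koksmaMeasure : IsFiniteMeasure koksmaMeasure := by
  unfold koksmaMeasure
  infer_instance

lemma koksmaMeasure_univ : koksmaMeasure Set.univ = 2 := by
  simp [koksmaMeasure, one_add_one_eq_two]

/-- The density recovering a character from indicators of intervals. -/
def koksmaKernel (n : ℤ) (x : ℝ) : ℂ :=
  if x = 1 then 1 else if x ∈ Set.Ioo (0 : ℝ) 1 then -(2 * Real.pi * n * Complex.I) * eu (n * x)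
  else 0

lemma measurable_koksmaKernel (n : ℤ) : Measurable (koksmaKernel n) := by
  refine Measurable.ite (measurableSet_singleton 1) measurable_const
    (Measurable.ite measurableSet_Ioo ?_ measurable_const)
  exact ((continuous_eu.comp (continuous_const.mul continuous_id)).const_mul _).measurable

lemma koksmaKernel_one (n : ℤ) : koksmaKernel n 1 = 1 := if_pos rfl

lemma koksmaKernel_of_mem (n : ℤ) {x : ℝ} (hx : x ∈ Set.Ioo (0 : ℝ) 1) :
    koksmaKernel n x = -(2 * Real.pi * n * Complex.I) * eu (n * x) := by
  rw [koksmaKernel, if_neg hx.2.ne, if_pos hx]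

lemma koksmaKernel_of_notMem (n : ℤ) {x : ℝ} (hx : x ∉ Set.Icc (0 : ℝ) 1) :
    koksmaKernel n x = 0 := by
  rw [koksmaKernel, if_neg fun h => hx (by simp [h]), if_neg fun h => hx (Set.Ioo_subset_Icc_self h)]

lemma norm_koksmaKernel_le {n : ℤ} (hn : n ≠ 0) (x : ℝ) :
    ‖koksmaKernel n x‖ ≤ 2 * Real.pi * |(n : ℝ)| := by
  have h1 : (1 : ℝ) ≤ |(n : ℝ)| := by exact_mod_cast Int.one_le_abs hn
  have h2 := Real.pi_gt_three
  rw [koksmaKernel]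
  split_ifs
  · rw [norm_one]
    nlinarith
  · simp [norm_eu, abs_of_pos Real.pi_pos]
  · rw [norm_zero]
    positivity

lemma integrable_mul_koksmaKernel {n : ℤ} (hn : n ≠ 0) {μ : Measure ℝ} [IsFiniteMeasure μ]
    {g : ℝ → ℂ} (hg : Measurable g) (hg1 : ∀ x ∈ Set.Icc (0 : ℝ) 1, ‖g x‖ ≤ 1) :
    Integrable (fun x => g x * koksmaKernel n x) μ := by
  refine Integrable.of_bound (hg.mul (measurable_koksmaKernel n)).aestronglyMeasurable
    (2 * Real.pi * |(n : ℝ)|) (Filter.Eventually.of_forall fun x => ?_)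
  by_cases hx : x ∈ Set.Icc (0 : ℝ) 1
  · rw [norm_mul]
    exact (mul_le_of_le_one_left (norm_nonneg _) (hg1 x hx)).trans (norm_koksmaKernel_le hn x)
  · rw [koksmaKernel_of_notMem n hx, mul_zero, norm_zero]
    positivity

lemma integral_mul_koksmaKernel {n : ℤ} (hn : n ≠ 0) {g : ℝ → ℂ} (hg : Measurable g)
    (hg1 : ∀ x ∈ Set.Icc (0 : ℝ) 1, ‖g x‖ ≤ 1) :
    ∫ x, g x * koksmaKernel n x ∂koksmaMeasure =
      g 1 + ∫ x in Set.Ioo (0 : ℝ) 1, g x * (-(2 * Real.pi * n * Complex.I) * eu (n * x)) := by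
  rw [koksmaMeasure, integral_add_measure (integrable_mul_koksmaKernel hn hg hg1)
    (integrable_mul_koksmaKernel hn hg hg1), integral_dirac, koksmaKernel_one, mul_one]
  congr 1
  exact setIntegral_congr_fun measurableSet_Ioo fun x hx => by
    simp only [koksmaKernel_of_mem n hx]

lemma measurable_indicator_lt (y : ℝ) : Measurable fun x : ℝ => if y < x then (1 : ℂ) else 0 :=
  Measurable.ite measurableSet_Ioi measurable_const measurable_const

lemma norm_indicator_lt_le (y x : ℝ) : ‖if y < x then (1 : ℂ) else 0‖ ≤ 1 := by
  split_ifs <;> simp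

lemma integral_indicator_koksmaKernel {n : ℤ} (hn : n ≠ 0) {y : ℝ} (hy : y ∈ Set.Ico (0 : ℝ) 1) :
    ∫ x, (if y < x then (1 : ℂ) else 0) * koksmaKernel n x ∂koksmaMeasure = eu (n * y) := by
  rw [integral_mul_koksmaKernel hn (measurable_indicator_lt y) fun x _ => norm_indicator_lt_le y x,
    if_pos hy.2]
  have h1 : ∫ x in Set.Ioo (0 : ℝ) 1, (if y < x then (1 : ℂ) else 0) *
      (-(2 * Real.pi * n * Complex.I) * eu (n * x)) =
      ∫ x in y..1, -(2 * Real.pi * n * Complex.I * eu (n * x)) := by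
    rw [intervalIntegral.integral_of_le hy.2.le, integral_Ioc_eq_integral_Ioo,
      ← Set.inter_eq_right.2 (Set.Ioo_subset_Ioo_left hy.1 : Set.Ioo y 1 ⊆ Set.Ioo 0 1),
      ← setIntegral_indicator measurableSet_Ioo]
    refine setIntegral_congr_fun measurableSet_Ioo fun x hx => ?_
    by_cases h : y < x
    · simp [h, hx.2]
    · simp [h]
  rw [h1, intervalIntegral.integral_neg, intervalIntegral.integral_eq_sub_of_hasDerivAt
    fun x _ => hasDerivAt_eu_mul n x, mul_one, eu_intCast]
  · ring
  · exact (((continuous_eu.comp (continuous_const.mul continuous_id)).const_mul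
      _).intervalIntegrable _ _)

lemma integral_id_koksmaKernel {n : ℤ} (hn : n ≠ 0) :
    ∫ x, (x : ℂ) * koksmaKernel n x ∂koksmaMeasure = 0 := by
  rw [integral_mul_koksmaKernel hn Complex.measurable_ofReal fun x hx => by
    simpa [abs_of_nonneg hx.1] using hx.2, ← integral_Ioc_eq_integral_Ioo,
    ← intervalIntegral.integral_of_le zero_le_one]
  have hc : (2 * Real.pi * n * Complex.I : ℂ) ≠ 0 := by
    simp [Real.pi_ne_zero, hn]
  have hd : ∀ x ∈ Set.uIcc (0 : ℝ) 1, HasDerivAt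
      (fun x : ℝ => -((x : ℂ) * eu (n * x)) + eu (n * x) / (2 * Real.pi * n * Complex.I))
      ((x : ℂ) * (-(2 * Real.pi * n * Complex.I) * eu (n * x))) x := fun x _ => by
    have h := (((hasDerivAt_id x).ofReal_comp.mul (hasDerivAt_eu_mul n x)).neg).add
      ((hasDerivAt_eu_mul n x).div_const (2 * Real.pi * n * Complex.I))
    refine h.congr_deriv ?_
    rw [mul_div_cancel_left₀ _ hc]
    simp only [id, Complex.ofReal_one]
    ring
  rw [intervalIntegral.integral_eq_sub_of_hasDerivAt hd]
  · simp [eu_intCast, eu_zero]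
  · exact (Complex.continuous_ofReal.mul ((continuous_eu.comp
      (continuous_const.mul continuous_id)).const_mul _)).intervalIntegrable _ _

lemma ofReal_DiscT_mul_prod {k : ℕ} (α x : Fin k → ℝ) (m : ℕ) (n : Fin k → ℤ) :
    (DiscT k α x m : ℂ) * ∏ i, koksmaKernel (n i) (x i) =
      ∑ t ∈ Finset.Icc 1 m, ∏ i, ((if Int.fract ((t : ℝ) * α i) < x i then (1 : ℂ) else 0) *
        koksmaKernel (n i) (x i)) - m * ∏ i, ((x i : ℂ) * koksmaKernel (n i) (x i)) := by
  simp only [Finset.prod_mul_distrib, Finset.prod_ite_zero, Finset.prod_const_one,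
    Finset.mem_univ, true_imp_iff, ← Finset.sum_mul, ← mul_assoc, ← sub_mul]
  congr 1
  rw [DiscT]
  push_cast
  congr 1
  exact Finset.sum_congr rfl fun t _ => by split_ifs <;> simp

/-- A Koksma type inequality for characters with nonzero frequencies. -/
theorem norm_sum_eu_linForm_le {k : ℕ} (hk : 0 < k) {α : Fin k → ℝ} {n : Fin k → ℤ}
    (hn : ∀ i, n i ≠ 0) {m : ℕ} {M : ℝ}
    (hM : ∀ x : Fin k → ℝ, (∀ i, x i ∈ Set.Icc (0 : ℝ) 1) → |DiscT k α x m| ≤ M) :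
    ‖∑ t ∈ Finset.Icc 1 m, eu (t * linForm n α)‖ ≤ (4 * Real.pi) ^ k * hypHeight n * M := by
  have hM0 : 0 ≤ M := (abs_nonneg _).trans (hM (fun _ => 0) fun _ => by simp)
  set ν : Measure (Fin k → ℝ) := Measure.pi fun _ => koksmaMeasure with hν
  have hi1 : ∀ t : ℕ, Integrable (fun x : Fin k → ℝ => ∏ i,
      ((if Int.fract ((t : ℝ) * α i) < x i then (1 : ℂ) else 0) * koksmaKernel (n i) (x i))) ν :=
    fun t => Integrable.fintype_prod fun i =>
      integrable_mul_koksmaKernel (hn i) (measurable_indicator_lt _)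
        fun x _ => norm_indicator_lt_le _ x
  have hi2 : Integrable (fun x : Fin k → ℝ => ∏ i, ((x i : ℂ) * koksmaKernel (n i) (x i))) ν :=
    Integrable.fintype_prod fun i =>
      integrable_mul_koksmaKernel (hn i) Complex.measurable_ofReal fun x hx => by
        simpa [abs_of_nonneg hx.1] using hx.2
  have key : ∑ t ∈ Finset.Icc 1 m, eu (t * linForm n α) =
      ∫ x, (DiscT k α x m : ℂ) * ∏ i, koksmaKernel (n i) (x i) ∂ν := by
    simp only [ofReal_DiscT_mul_prod]
    rw [integral_sub (integrable_finsetSum _ fun t _ => hi1 t) (hi2.const_mul _),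
      integral_finsetSum _ fun t _ => hi1 t, integral_const_mul]
    have e2 : ∫ x : Fin k → ℝ, ∏ i, ((x i : ℂ) * koksmaKernel (n i) (x i)) ∂ν = 0 := by
      rw [hν, integral_fintype_prod_eq_prod fun i (x : ℝ) => (x : ℂ) * koksmaKernel (n i) x]
      exact Finset.prod_eq_zero (Finset.mem_univ ⟨0, hk⟩) (integral_id_koksmaKernel (hn _))
    rw [e2, mul_zero, sub_zero]
    refine Finset.sum_congr rfl fun t _ => ?_
    rw [hν, integral_fintype_prod_eq_prod fun i (x : ℝ) =>
      (if Int.fract ((t : ℝ) * α i) < x then (1 : ℂ) else 0) * koksmaKernel (n i) x]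
    simp only [integral_indicator_koksmaKernel (hn _)
      ⟨Int.fract_nonneg _, Int.fract_lt_one _⟩]
    have e3 : ∀ i, eu (n i * Int.fract ((t : ℝ) * α i)) = eu (n i * (t * α i)) := fun i => by
      have h : (n i : ℝ) * (t * α i) =
          n i * Int.fract ((t : ℝ) * α i) + ((n i * ⌊(t : ℝ) * α i⌋ : ℤ) : ℝ) := by
        push_cast
        rw [← mul_add, Int.fract_add_floor]
      rw [h, eu_add, eu_intCast, mul_one]
    simp only [e3]
    simp only [eu, ← Complex.exp_sum]
    congr 1
    rw [← Finset.sum_mul, ← Complex.ofReal_sum, linForm]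
    congr 2
    simp only [Finset.mul_sum]
    exact Finset.sum_congr rfl fun i _ => by ring
  rw [key]
  have hP : ∀ x : Fin k → ℝ, ‖(DiscT k α x m : ℂ) * ∏ i, koksmaKernel (n i) (x i)‖ ≤
      M * ((2 * Real.pi) ^ k * hypHeight n) := fun x => by
    by_cases hx : ∀ i, x i ∈ Set.Icc (0 : ℝ) 1
    · rw [norm_mul, Complex.norm_real, Real.norm_eq_abs, norm_prod]
      refine mul_le_mul (hM x hx) ?_ (Finset.prod_nonneg fun _ _ => norm_nonneg _) hM0
      have : (2 * Real.pi) ^ k * hypHeight n = ∏ i, (2 * Real.pi * max 1 |(n i : ℝ)|) := by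
        rw [Finset.prod_mul_distrib, hypHeight, Finset.prod_const, Finset.card_univ,
          Fintype.card_fin]
      rw [this]
      refine Finset.prod_le_prod (fun _ _ => norm_nonneg _) fun i _ =>
        (norm_koksmaKernel_le (hn i) _).trans ?_
      gcongr
      exact le_max_right _ _
    · push Not at hx
      obtain ⟨i, hi⟩ := hx
      rw [Finset.prod_eq_zero (Finset.mem_univ i) (koksmaKernel_of_notMem _ hi), mul_zero,
        norm_zero]
      have := hypHeight_pos n
      positivity
  refine (norm_integral_le_of_norm_le_const (Filter.Eventually.of_forall hP)).trans
    (le_of_eq ?_)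
  have hu : ν.real Set.univ = 2 ^ k := by
    rw [Measure.real, hν, Measure.pi_univ]
    simp [koksmaMeasure_univ]
  rw [hu, show (4 : ℝ) * Real.pi = 2 * Real.pi * 2 by ring, mul_pow (2 * Real.pi)]
  ring

/-! ### Primitive frequencies in shells -/

/-- The frequencies with coordinates in `[1, R]`. -/
def posCube (k R : ℕ) : Finset (Fin k → ℤ) := Fintype.piFinset fun _ : Fin k => Icc 1 (R : ℤ)

lemma mem_posCube {k R : ℕ} {n : Fin k → ℤ} : n ∈ posCube k R ↔ ∀ i, 1 ≤ n i ∧ n i ≤ R := by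
  simp [posCube, Fintype.mem_piFinset]

lemma posCube_mono (k : ℕ) {R R' : ℕ} (h : R ≤ R') : posCube k R ⊆ posCube k R' := fun n hn => by
  rw [mem_posCube] at hn ⊢
  exact fun i => ⟨(hn i).1, (hn i).2.trans (by exact_mod_cast h)⟩

lemma sum_posCube (k R : ℕ) : ∑ n ∈ posCube k R, 1 / hypHeight n = (harmonic R : ℝ) ^ k := by
  simp only [one_div_hypHeight]
  rw [posCube, ← Finset.prod_univ_sum (fun _ : Fin k => Icc 1 (R : ℤ))
    fun _ n => 1 / max 1 |(n : ℝ)|, Finset.prod_const, Finset.card_univ, Fintype.card_fin,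
    harmonic_eq_sum_Icc]
  congr 1
  push_cast
  refine (Finset.sum_bij (fun (a : ℕ) _ => (a : ℤ)) ?_ ?_ ?_ ?_).symm
  · intro a ha
    rw [Finset.mem_Icc] at ha ⊢
    exact_mod_cast ha
  · intro a _ b _ h
    exact_mod_cast h
  · intro b hb
    rw [Finset.mem_Icc] at hb
    refine ⟨b.toNat, ?_, by omega⟩
    rw [Finset.mem_Icc]
    omega
  · intro a ha
    have h1 : (1 : ℝ) ≤ a := by exact_mod_cast (Finset.mem_Icc.1 ha).1
    rw [Int.cast_natCast, Nat.abs_cast, max_eq_right h1, one_div]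

/-- The primitive frequencies with coordinates in `[1, R]`. -/
def primCube (k R : ℕ) : Finset (Fin k → ℤ) := (posCube k R).filter fun n => vecGcd n = 1

lemma hypHeight_mul_of_pos {k : ℕ} {a : ℕ} (ha : 1 ≤ a) {n : Fin k → ℤ} (hn : ∀ i, 1 ≤ n i) :
    hypHeight (fun i => (a : ℤ) * n i) = (a : ℝ) ^ k * hypHeight n := by
  have ha' : (1 : ℝ) ≤ a := by exact_mod_cast ha
  rw [hypHeight, hypHeight, ← Fin.prod_const, ← Finset.prod_mul_distrib]
  refine Finset.prod_congr rfl fun i _ => ?_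
  have h1 : (1 : ℝ) ≤ n i := by exact_mod_cast hn i
  have h2 : |(n i : ℝ)| = n i := abs_of_pos (by linarith)
  push_cast
  rw [abs_mul, Nat.abs_cast, h2, max_eq_right h1, max_eq_right]
  nlinarith

lemma posCube_subset {k : ℕ} (hk : 0 < k) (R : ℕ) :
    posCube k R ⊆ (Icc 1 R).biUnion fun a => (primCube k R).image fun n i => (a : ℤ) * n i := by
  intro n hn
  rw [mem_posCube] at hn
  set a := vecGcd n with ha
  have hd : a ∣ (n ⟨0, hk⟩).natAbs := Finset.gcd_dvd (Finset.mem_univ _)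
  have h0 := hn ⟨0, hk⟩
  have hpos : 0 < a := Nat.pos_of_dvd_of_pos hd (by omega)
  have hle : a ≤ R := (Nat.le_of_dvd (by omega) hd).trans (by omega)
  have hdvd : ∀ i, (a : ℤ) ∣ n i := fun i => by
    rw [Int.natCast_dvd]
    exact Finset.gcd_dvd (Finset.mem_univ i)
  choose m hm using hdvd
  have hm1 : ∀ i, 1 ≤ m i := fun i => by
    have h1 : 0 < (a : ℤ) * m i := by
      have := (hn i).1
      rw [← hm i]
      omega
    have := pos_of_mul_pos_right h1 (by positivity)
    omega
  refine Finset.mem_biUnion.2 ⟨a, Finset.mem_Icc.2 ⟨hpos, hle⟩, Finset.mem_image.2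
    ⟨m, ?_, funext fun i => (hm i).symm⟩⟩
  rw [primCube, Finset.mem_filter, mem_posCube]
  refine ⟨fun i => ⟨hm1 i, le_trans ?_ (hn i).2⟩, ?_⟩
  · rw [hm i]
    refine le_mul_of_one_le_left (by linarith [hm1 i]) (by exact_mod_cast hpos)
  · have e : a = a * vecGcd m := by
      have : vecGcd n = univ.gcd fun i => a * (m i).natAbs := by
        unfold vecGcd
        congr 1
        funext i
        rw [hm i, Int.natAbs_mul, Int.natAbs_natCast]
      rw [Finset.gcd_mul_left, normalize_eq] at this
      exact ha.trans this
    exact (Nat.eq_of_mul_eq_mul_left hpos (e.symm.trans (mul_one a).symm))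

lemma harmonic_pow_le {k : ℕ} (hk : 2 ≤ k) (R : ℕ) :
    (harmonic R : ℝ) ^ k ≤ 2 * ∑ n ∈ primCube k R, 1 / hypHeight n := by
  have hnn : ∀ n : Fin k → ℤ, 0 ≤ 1 / hypHeight n := fun n =>
    one_div_nonneg.2 (hypHeight_pos n).le
  have hprim : 0 ≤ ∑ n ∈ primCube k R, 1 / hypHeight n := Finset.sum_nonneg fun n _ => hnn n
  rw [← sum_posCube]
  calc _ ≤ ∑ n ∈ (Icc 1 R).biUnion fun a => (primCube k R).image fun n i => (a : ℤ) * n i,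
          1 / hypHeight n :=
        Finset.sum_le_sum_of_subset_of_nonneg (posCube_subset (by omega) R) fun n _ _ => hnn n
    _ ≤ ∑ a ∈ Icc 1 R, ∑ n ∈ (primCube k R).image fun n i => (a : ℤ) * n i, 1 / hypHeight n :=
        sum_biUnion_le_sum_sum _ _ hnn
    _ ≤ ∑ a ∈ Icc 1 R, ((a : ℝ) ^ 2)⁻¹ * ∑ n ∈ primCube k R, 1 / hypHeight n := by
        refine Finset.sum_le_sum fun a ha => ?_
        have ha1 := (Finset.mem_Icc.1 ha).1
        have ha' : (1 : ℝ) ≤ a := by exact_mod_cast ha1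
        rw [Finset.sum_image, Finset.mul_sum]
        · refine Finset.sum_le_sum fun n hn => ?_
          rw [primCube, Finset.mem_filter, mem_posCube] at hn
          rw [hypHeight_mul_of_pos ha1 fun i => (hn.1 i).1, ← one_div_mul_one_div, ← one_div]
          gcongr
          exact hnn n
        · intro n _ n' _ h
          funext i
          have h0 : (a : ℤ) ≠ 0 := by positivity
          exact mul_left_cancel₀ h0 (congrFun h i)
    _ ≤ _ := by
        rw [← Finset.sum_mul]
        gcongr
        have h := sum_Ioo_inv_sq_le (α := ℝ) 0 (R + 1)
        have e : Icc 1 R = Ioo 0 (R + 1) := by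
          ext a
          simp only [Finset.mem_Icc, Finset.mem_Ioo]
          omega
        rw [e]
        simpa using h

/-- The radii of the shells of primitive frequencies. -/
def shellRadius (k j : ℕ) : ℕ := ⌊Real.exp (Real.exp j / (2 * k))⌋₊

lemma shellRadius_mono (k : ℕ) : Monotone (shellRadius k) := fun i j h => by
  unfold shellRadius
  gcongr

/-- The `j`th shell of primitive frequencies. -/
def shell (k j : ℕ) : Finset (Fin k → ℤ) :=
  primCube k (shellRadius k (j + 1)) \ posCube k (shellRadius k j)

lemma one_le_of_mem_shell {k j : ℕ} {n : Fin k → ℤ} (hn : n ∈ shell k j) (i : Fin k) :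
    1 ≤ n i := by
  rw [shell, Finset.mem_sdiff, primCube, Finset.mem_filter, mem_posCube] at hn
  exact (hn.1.1 i).1

lemma vecGcd_of_mem_shell {k j : ℕ} {n : Fin k → ℤ} (hn : n ∈ shell k j) : vecGcd n = 1 := by
  rw [shell, Finset.mem_sdiff, primCube, Finset.mem_filter] at hn
  exact hn.1.2

lemma hypHeight_le_of_mem_shell {k j : ℕ} (hk : 0 < k) {n : Fin k → ℤ} (hn : n ∈ shell k j) :
    hypHeight n ≤ Real.exp (Real.exp ((j + 1 : ℕ) : ℝ) / 2) := by
  have h1 := one_le_of_mem_shell hn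
  rw [shell, Finset.mem_sdiff, primCube, Finset.mem_filter, mem_posCube] at hn
  have hk' : (k : ℝ) ≠ 0 := by positivity
  calc hypHeight n ≤ ∏ _i : Fin k, Real.exp (Real.exp ((j + 1 : ℕ) : ℝ) / (2 * k)) := by
        refine Finset.prod_le_prod (fun i _ => by positivity) fun i _ => ?_
        have h2 : (1 : ℝ) ≤ n i := by exact_mod_cast h1 i
        rw [abs_of_pos (by linarith), max_eq_right h2]
        have h3 : (n i : ℝ) ≤ shellRadius k (j + 1) := by exact_mod_cast (hn.1.1 i).2
        exact h3.trans (Nat.floor_le (Real.exp_pos _).le)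
    _ = _ := by
        rw [Fin.prod_const, ← Real.exp_nat_mul]
        congr 1
        field_simp

lemma shell_disjoint {k i j : ℕ} {n : Fin k → ℤ} (hi : n ∈ shell k i) (hj : n ∈ shell k j) :
    i = j := by
  have key : ∀ {i j : ℕ}, n ∈ shell k i → n ∈ shell k j → ¬ i < j := fun {i j} hi hj hij => by
    rw [shell, Finset.mem_sdiff] at hi hj
    exact hj.2 (posCube_mono k (shellRadius_mono k hij)
      (Finset.mem_of_mem_filter n hi.1))
  have := key hi hj
  have := key hj hi
  omega

lemma sum_shell_ge {k : ℕ} (hk : 2 ≤ k) {j : ℕ} (hj : 8 * k ≤ j) :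
    1 / (4 * (2 * k : ℝ) ^ k) * Real.exp ((j + 1 : ℕ) : ℝ) ^ k ≤
      ∑ n ∈ shell k j, 1 / hypHeight n := by
  have hnn : ∀ n : Fin k → ℤ, 0 ≤ 1 / hypHeight n := fun n =>
    one_div_nonneg.2 (hypHeight_pos n).le
  have hk0 : (0 : ℝ) < k := by positivity
  set u := Real.exp (j : ℝ) / (2 * k) with hu
  have hu4 : 4 ≤ u := by
    rw [hu, le_div_iff₀ (by positivity)]
    have h1 := Real.add_one_le_exp (j : ℝ)
    have h2 : (8 * k : ℝ) ≤ j := by exact_mod_cast hj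
    linarith
  have hsplit : ∑ n ∈ primCube k (shellRadius k (j + 1)), 1 / hypHeight n ≤
      ∑ n ∈ shell k j, 1 / hypHeight n + (harmonic (shellRadius k j) : ℝ) ^ k := by
    rw [← sum_posCube, ← Finset.sum_inter_add_sum_sdiff _ (posCube k (shellRadius k j)), add_comm]
    exact add_le_add_right (Finset.sum_le_sum_of_subset_of_nonneg Finset.inter_subset_right
      fun n _ _ => hnn n) _
  have hlow : (Real.exp 1 * u) ^ k ≤ (harmonic (shellRadius k (j + 1)) : ℝ) ^ k := by
    have h := log_le_harmonic_floor (Real.exp (Real.exp ((j + 1 : ℕ) : ℝ) / (2 * k)))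
      (Real.exp_pos _).le
    rw [Real.log_exp] at h
    refine pow_le_pow_left₀ (by positivity) (le_trans (le_of_eq ?_) h) k
    rw [hu]
    push_cast
    rw [Real.exp_add]
    ring
  have hhigh : (harmonic (shellRadius k j) : ℝ) ^ k ≤ (5 / 4 * u) ^ k := by
    have h := harmonic_floor_le_one_add_log (Real.exp u) (Real.one_le_exp (by linarith))
    rw [Real.log_exp] at h
    refine pow_le_pow_left₀ ?_ (h.trans (by linarith)) k
    exact_mod_cast Finset.sum_nonneg fun i _ => by positivity
  have hmain : 4 * (5 / 4 * u) ^ k ≤ (Real.exp 1 * u) ^ k := by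
    have h1 : Real.exp 1 * u = (4 / 5 * Real.exp 1) * (5 / 4 * u) := by ring
    rw [h1, mul_pow (4 / 5 * Real.exp 1)]
    gcongr
    have h2 : (2 : ℝ) ≤ 4 / 5 * Real.exp 1 := by linarith [Real.exp_one_gt_d9]
    calc (4 : ℝ) = 2 ^ 2 := by norm_num
      _ ≤ 2 ^ k := pow_le_pow_right₀ (by norm_num) hk
      _ ≤ _ := pow_le_pow_left₀ (by norm_num) h2 k
  have hp := harmonic_pow_le hk (shellRadius k (j + 1))
  have e : 1 / (4 * (2 * k : ℝ) ^ k) * Real.exp ((j + 1 : ℕ) : ℝ) ^ k =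
      1 / 4 * (Real.exp 1 * u) ^ k := by
    rw [hu]
    push_cast
    rw [Real.exp_add, ← mul_div_assoc, div_pow, mul_comm (Real.exp 1)]
    field_simp
  rw [e]
  linarith

/-! ### A Borel–Cantelli lemma for pairwise independent events -/

lemma measureReal_forall_notMem_le {Ω ι β : Type*} [MeasurableSpace Ω] [MeasurableSpace β]
    {μ : Measure Ω} [IsProbabilityMeasure μ] (S : Finset ι) {f : ι → Ω → β}
    (hf : ∀ i, Measurable (f i)) {U : ι → Set β} (hU : ∀ i, MeasurableSet (U i))
    (hind : (S : Set ι).Pairwise fun i j => ProbabilityTheory.IndepFun (f i) (f j) μ)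
    {M : ℝ} (hM : 0 < M) (hS : M ≤ ∑ i ∈ S, μ.real (f i ⁻¹' U i)) :
    μ.real {ω | ∀ i ∈ S, f i ω ∉ U i} ≤ 1 / M := by
  set X : ι → Ω → ℝ := fun i => (f i ⁻¹' U i).indicator 1 with hX
  have hpre : ∀ i, MeasurableSet (f i ⁻¹' U i) := fun i => hf i (hU i)
  have hXL : ∀ i ∈ S, MemLp (X i) 2 μ := fun i _ =>
    memLp_indicator_const 2 (hpre i) (1 : ℝ) (Or.inr (measure_ne_top _ _))
  have hXind : (S : Set ι).Pairwise fun i j => ProbabilityTheory.IndepFun (X i) (X j) μ :=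
    fun i hi j hj hij => (hind hi hj hij).comp
      (measurable_one.indicator (hU i) : Measurable ((U i).indicator (1 : β → ℝ)))
      (measurable_one.indicator (hU j) : Measurable ((U j).indicator (1 : β → ℝ)))
  have hE : ∀ i, ∫ ω, X i ω ∂μ = μ.real (f i ⁻¹' U i) := fun i => integral_indicator_one (hpre i)
  set p := ∑ i ∈ S, μ.real (f i ⁻¹' U i) with hp
  have hp0 : 0 < p := hM.trans_le hS
  have hV : ProbabilityTheory.variance (∑ i ∈ S, X i) μ ≤ p := by
    rw [ProbabilityTheory.IndepFun.variance_sum hXL hXind]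
    refine Finset.sum_le_sum fun i hi => ?_
    refine (ProbabilityTheory.variance_le_expectation_sq (hXL i hi).aestronglyMeasurable).trans
      (le_of_eq ?_)
    rw [← hE i]
    refine integral_congr_ae (Filter.Eventually.of_forall fun ω => ?_)
    by_cases h : ω ∈ f i ⁻¹' U i <;> simp [hX, h]
  have hEsum : ∫ ω, (∑ i ∈ S, X i) ω ∂μ = p := by
    simp only [Finset.sum_apply]
    rw [integral_finsetSum S fun i hi => (hXL i hi).integrable (by norm_num)]
    exact Finset.sum_congr rfl fun i _ => hE i
  have h := ENNReal.toReal_mono ENNReal.ofReal_ne_top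
    (ProbabilityTheory.meas_ge_le_variance_div_sq (memLp_finsetSum' S hXL) hp0)
  rw [ENNReal.toReal_ofReal
    (div_nonneg (ProbabilityTheory.variance_nonneg _ _) (by positivity)), hEsum] at h
  calc _ ≤ μ.real {ω | p ≤ |(∑ i ∈ S, X i) ω - p|} := by
        refine measureReal_mono fun ω hω => ?_
        have : (∑ i ∈ S, X i) ω = 0 := by
          rw [Finset.sum_apply]
          exact Finset.sum_eq_zero fun i hi =>
            Set.indicator_of_notMem (show ω ∉ f i ⁻¹' U i from hω i hi) _
        rw [Set.mem_ofPred_eq, this, zero_sub, abs_neg, abs_of_pos hp0]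
    _ ≤ _ := h
    _ ≤ p / p ^ 2 := by gcongr
    _ = 1 / p := by field_simp
    _ ≤ 1 / M := one_div_le_one_div_of_le hM hS

lemma ae_exists_mem_of_pairwise_indep {Ω ι β : Type*} [MeasurableSpace Ω] [MeasurableSpace β]
    {μ : Measure Ω} [IsProbabilityMeasure μ] (T : Set ι) {f : ι → Ω → β}
    (hf : ∀ i, Measurable (f i)) {U : ι → Set β} (hU : ∀ i, MeasurableSet (U i))
    (hind : T.Pairwise fun i j => ProbabilityTheory.IndepFun (f i) (f j) μ)
    (hdiv : ∀ M : ℝ, ∃ S : Finset ι, ↑S ⊆ T ∧ M ≤ ∑ i ∈ S, μ.real (f i ⁻¹' U i)) :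
    ∀ᵐ ω ∂μ, ∃ i ∈ T, f i ω ∈ U i := by
  have h0 : μ.real {ω | ∀ i ∈ T, f i ω ∉ U i} = 0 := by
    refine le_antisymm (le_of_forall_pos_le_add fun ε hε => ?_) measureReal_nonneg
    obtain ⟨S, hST, hS⟩ := hdiv (1 / ε)
    rw [zero_add]
    calc _ ≤ μ.real {ω | ∀ i ∈ S, f i ω ∉ U i} :=
          measureReal_mono fun ω (hω : ∀ i ∈ T, f i ω ∉ U i) i hi => hω i (hST hi)
      _ ≤ 1 / (1 / ε) := measureReal_forall_notMem_le S hf hU (hind.mono hST) (by positivity) hS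
      _ = ε := one_div_one_div ε
  rw [measureReal_eq_zero_iff] at h0
  rw [ae_iff]
  convert h0 using 3
  push Not
  rfl

lemma measureReal_torusForm_preimage {k : ℕ} {n : Fin k → ℤ} (hn : n ≠ 0) {r : ℝ} (hr : 0 ≤ r)
    (hr1 : r ≤ 1) :
    r ≤ volume.real (torusForm n ⁻¹' Metric.closedBall (0 : UnitAddCircle) r) := by
  rw [(measurePreserving_torusForm hn).measureReal_preimage
    measurableSet_closedBall.nullMeasurableSet, Measure.real, AddCircle.volume_closedBall,
    ENNReal.toReal_ofReal (by positivity)]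
  exact le_min hr1 (by linarith)

lemma exists_finset_le_sum {φ : ℕ → ℝ} (hφpos : ∀ n, 0 < φ n)
    (hs : ¬ Summable fun n => 1 / φ n) (j₀ : ℕ) (M : ℝ) :
    ∃ G : Finset ℕ, (∀ j ∈ G, j₀ ≤ j ∧ φ (j + 1) ≤ 2 ^ (j + 1)) ∧
      M ≤ ∑ j ∈ G, 1 / φ (j + 1) := by
  by_contra! hcon
  apply hs
  have hnn : ∀ j, 0 ≤ 1 / φ j := fun j => (one_div_pos.2 (hφpos j)).le
  set f : ℕ → ℝ := fun j => if j₀ ≤ j ∧ φ (j + 1) ≤ 2 ^ (j + 1) then 1 / φ (j + 1) else 0 with hf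
  have hfs : Summable f := by
    refine summable_of_sum_le (c := M) (fun j => ?_) fun u => ?_
    · simp only [hf]
      split_ifs
      · exact hnn _
      · exact le_rfl
    · simp only [hf]
      rw [← Finset.sum_filter]
      exact (hcon _ fun j hj => (Finset.mem_filter.1 hj).2).le
  rw [← summable_nat_add_iff 1]
  have hg : Summable fun j : ℕ => f j + (1 / 2 : ℝ) ^ (j + 1) :=
    hfs.add ((summable_nat_add_iff 1).2 (summable_geometric_of_lt_one (by norm_num) (by norm_num)))
  refine Summable.of_norm_bounded_eventually_nat hg (Filter.eventually_atTop.2 ⟨j₀, fun j hj => ?_⟩)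
  rw [Real.norm_of_nonneg (hnn _)]
  have h2 : (0 : ℝ) < (1 / 2) ^ (j + 1) := by positivity
  by_cases h : φ (j + 1) ≤ 2 ^ (j + 1)
  · simp only [hf, hj, h, and_self, if_true]
    linarith
  · simp only [hf, h, and_false, if_false, zero_add]
    rw [one_div_pow]
    exact one_div_le_one_div_of_le (by positivity) (not_le.1 h).le

/-- In the divergence case almost every point has very small linear forms in arbitrarily late
shells. -/
theorem ae_exists_small_form {k : ℕ} (hk : 2 ≤ k) {φ : ℕ → ℝ} (hφpos : ∀ n, 0 < φ n)
    (hφmono : Monotone φ) (hs : ¬ Summable fun n => 1 / φ n) {B : ℝ} (hB : 1 / φ 0 ≤ B) (j₀ : ℕ) :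
    ∀ᵐ b ∂(volume : Measure (Fin k → UnitAddCircle)), ∃ j, j₀ ≤ j ∧ φ (j + 1) ≤ 2 ^ (j + 1) ∧
      ∃ n ∈ shell k j, ‖torusForm n b‖ ≤
        1 / (B * Real.exp ((j + 1 : ℕ) : ℝ) ^ k * φ (j + 1) * hypHeight n) := by
  have hφ0 := hφpos 0
  have hB0 : 0 < B := (one_div_pos.2 hφ0).trans_le hB
  set r : (Σ _ : ℕ, Fin k → ℤ) → ℝ := fun q =>
    1 / (B * Real.exp ((q.1 + 1 : ℕ) : ℝ) ^ k * φ (q.1 + 1) * hypHeight q.2) with hr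
  have hr0 : ∀ q, 0 ≤ r q := fun q => by
    have := hypHeight_pos q.2
    have := hφpos (q.1 + 1)
    positivity
  have hr1 : ∀ q, r q ≤ 1 := fun q => by
    have h1 := one_le_hypHeight q.2
    have h2 := hφpos (q.1 + 1)
    have h3 : 1 ≤ Real.exp ((q.1 + 1 : ℕ) : ℝ) ^ k :=
      one_le_pow₀ (Real.one_le_exp (Nat.cast_nonneg _))
    have h4 : 1 ≤ B * φ (q.1 + 1) := by
      calc 1 = 1 / φ 0 * φ 0 := by field_simp
        _ ≤ _ := by
          gcongr
          exact hφmono (Nat.zero_le _)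
    simp only [hr]
    refine div_le_one_of_le₀ ?_ (by positivity)
    calc (1 : ℝ) = 1 * 1 * 1 := by norm_num
      _ ≤ (B * φ (q.1 + 1)) * Real.exp ((q.1 + 1 : ℕ) : ℝ) ^ k * hypHeight q.2 := by gcongr
      _ = _ := by ring
  set T : Set (Σ _ : ℕ, Fin k → ℤ) :=
    {q | j₀ ≤ q.1 ∧ φ (q.1 + 1) ≤ 2 ^ (q.1 + 1) ∧ q.2 ∈ shell k q.1} with hT
  have hne : ∀ {j : ℕ} {n : Fin k → ℤ}, n ∈ shell k j → n ≠ 0 := fun {j n} hn h => by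
    have := one_le_of_mem_shell hn ⟨0, by omega⟩
    simp [h] at this
  have key := ae_exists_mem_of_pairwise_indep (μ := (volume : Measure (Fin k → UnitAddCircle))) T
    (f := fun q => torusForm q.2) (fun q => (continuous_torusForm q.2).measurable)
    (U := fun q => Metric.closedBall 0 (r q)) (fun q => measurableSet_closedBall) ?_ ?_
  · filter_upwards [key] with b hb
    obtain ⟨⟨j, n⟩, ⟨hj, hφj, hn⟩, hbn⟩ := hb
    exact ⟨j, hj, hφj, n, hn, mem_closedBall_zero_iff.1 hbn⟩
  · rintro ⟨j, n⟩ ⟨-, -, hn⟩ ⟨j', n'⟩ ⟨-, -, hn'⟩ hqq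
    have hnn' : n ≠ n' := by
      rintro rfl
      obtain rfl : j = j' := shell_disjoint hn hn'
      exact hqq rfl
    have hi : 0 < k := by omega
    obtain ⟨l, hl⟩ := exists_minor_ne_zero (i₀ := ⟨0, hi⟩) (one_le_of_mem_shell hn _)
      (one_le_of_mem_shell hn' _) ((vecGcd_of_mem_shell hn).trans (vecGcd_of_mem_shell hn').symm)
      hnn'
    exact indepFun_torusForm hl
  · intro M
    set c : ℝ := 1 / (4 * (2 * k : ℝ) ^ k) with hc
    have hc0 : 0 < c := by positivity
    obtain ⟨G, hG, hGM⟩ := exists_finset_le_sum hφpos hs (max j₀ (8 * k)) (B / c * M)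
    refine ⟨G.sigma fun j => shell k j, ?_, ?_⟩
    · rintro ⟨j, n⟩ hq
      have hq := Finset.mem_sigma.1 (Finset.mem_coe.1 hq)
      have := hG j hq.1
      exact ⟨(le_max_left _ _).trans this.1, this.2, hq.2⟩
    · rw [Finset.sum_sigma]
      calc M = c / B * (B / c * M) := by field_simp
        _ ≤ c / B * ∑ j ∈ G, 1 / φ (j + 1) := by gcongr
        _ ≤ _ := by
          rw [Finset.mul_sum]
          refine Finset.sum_le_sum fun j hj => ?_
          have hφj := hφpos (j + 1)
          set E := Real.exp ((j + 1 : ℕ) : ℝ) ^ k with hE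
          have hE0 : 0 < E := by positivity
          calc c / B * (1 / φ (j + 1)) = 1 / (B * E * φ (j + 1)) * (c * E) := by field_simp
            _ ≤ 1 / (B * E * φ (j + 1)) * ∑ n ∈ shell k j, 1 / hypHeight n := by
                gcongr
                exact sum_shell_ge hk ((le_max_right _ _).trans (hG j hj).1)
            _ = ∑ n ∈ shell k j, r ⟨j, n⟩ := by
                rw [Finset.mul_sum]
                exact Finset.sum_congr rfl fun n _ => one_div_mul_one_div _ _
            _ ≤ _ := Finset.sum_le_sum fun n hn =>
                measureReal_torusForm_preimage (hne hn) (hr0 ⟨j, n⟩) (hr1 ⟨j, n⟩)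

lemma half_le_norm_sum_eu {θ : ℝ} {m : ℕ} (h : 13 * (m : ℝ) * ‖(θ : UnitAddCircle)‖ ≤ 1) :
    (m : ℝ) / 2 ≤ ‖∑ t ∈ Finset.Icc 1 m, eu (t * θ)‖ := by
  rw [UnitAddCircle.norm_eq] at h
  set r := θ - round θ with hr
  have hterm : ∀ t ∈ Finset.Icc 1 m, ‖eu (t * θ) - 1‖ ≤ 1 / 2 := by
    intro t ht
    have htm : (t : ℝ) ≤ m := by exact_mod_cast (Finset.mem_Icc.1 ht).2
    have hθ : eu (t * θ) = eu (t * r) := by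
      have : (t : ℝ) * θ = t * r + ((t * round θ : ℤ) : ℝ) := by
        rw [hr]
        push_cast
        ring
      rw [this, eu_add, eu_intCast, mul_one]
    rw [hθ, norm_eu_sub_one]
    have h1 : |Real.sin (Real.pi * (t * r))| ≤ Real.pi * (t * |r|) := by
      refine Real.abs_sin_le_abs.trans (le_of_eq ?_)
      rw [abs_mul, abs_mul, abs_of_pos Real.pi_pos, Nat.abs_cast]
    have h2 : (t : ℝ) * |r| ≤ 1 / 13 := by
      have := mul_le_mul_of_nonneg_right htm (abs_nonneg r)
      linarith
    have h3 : Real.pi * (t * |r|) ≤ 3.15 * (1 / 13) :=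
      mul_le_mul Real.pi_lt_d2.le h2 (by positivity) (by norm_num)
    linarith
  have hsum : ‖(m : ℂ) - ∑ t ∈ Finset.Icc 1 m, eu (t * θ)‖ ≤ m / 2 := by
    have : (m : ℂ) - ∑ t ∈ Finset.Icc 1 m, eu (t * θ)
        = -∑ t ∈ Finset.Icc 1 m, (eu (t * θ) - 1) := by
      simp [Finset.sum_sub_distrib]
    rw [this, norm_neg]
    refine (norm_sum_le_of_le _ hterm).trans (le_of_eq ?_)
    simp
    ring
  have := norm_sub_norm_le (m : ℂ) (∑ t ∈ Finset.Icc 1 m, eu (t * θ))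
  rw [Complex.norm_natCast] at this
  linarith

lemma exists_lt_exp_half (k : ℕ) (K : ℝ) :
    ∃ J₀ : ℕ, ∀ J : ℕ, J₀ ≤ J →
      K * (Real.exp J ^ k * 2 ^ J) < Real.exp (Real.exp J / 2) := by
  have h1 : Filter.Tendsto (fun y : ℝ => Real.exp (1 / 2 * y) / y ^ (k + 1)) .atTop .atTop := by
    simpa only [← Nat.cast_succ, Real.rpow_natCast] using
      tendsto_exp_mul_div_rpow_atTop ((k + 1 : ℕ) : ℝ) (1 / 2) (by norm_num)
  have h2 : Filter.Tendsto (fun J : ℕ => Real.exp J) .atTop .atTop :=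
    Real.tendsto_exp_atTop.comp tendsto_natCast_atTop_atTop
  obtain ⟨J₀, hJ₀⟩ := Filter.eventually_atTop.1 ((h1.comp h2).eventually_gt_atTop |K|)
  refine ⟨J₀, fun J hJ => ?_⟩
  have h3 := hJ₀ J hJ
  rw [Function.comp_apply, lt_div_iff₀ (by positivity)] at h3
  have h4 : (2 : ℝ) ^ J ≤ Real.exp J := by
    rw [← Real.exp_one_pow]
    gcongr
    linarith [Real.exp_one_gt_d9]
  calc K * (Real.exp J ^ k * 2 ^ J) ≤ |K| * (Real.exp J ^ k * Real.exp J) := by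
        gcongr
        exact le_abs_self K
    _ = |K| * Real.exp J ^ (k + 1) := by ring
    _ < _ := h3
    _ = _ := by ring_nf

lemma not_abs_DiscT_le {k : ℕ} (hk : 0 < k) {φ : ℕ → ℝ} (hφpos : ∀ n, 0 < φ n)
    (hφmono : Monotone φ) {α : Fin k → ℝ} {C B : ℝ} {j : ℕ} {n : Fin k → ℤ} (hC : 0 ≤ C)
    (hn : n ∈ shell k j) (hB : 13 / φ 0 ≤ B) (hBC : 52 * (4 * Real.pi) ^ k * C < B)
    (hφj : φ (j + 1) ≤ 2 ^ (j + 1))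
    (hj : 4 * (4 * Real.pi) ^ k * C * (Real.exp ((j + 1 : ℕ) : ℝ) ^ k * 2 ^ (j + 1)) <
      Real.exp (Real.exp ((j + 1 : ℕ) : ℝ) / 2))
    (hδ : ‖(linForm n α : UnitAddCircle)‖ ≤
      1 / (B * Real.exp ((j + 1 : ℕ) : ℝ) ^ k * φ (j + 1) * hypHeight n)) :
    ¬ ∀ N : ℕ, 3 ≤ N → ∀ m : ℕ, 1 ≤ m → m ≤ N → ∀ x : Fin k → ℝ,
        (∀ i, x i ∈ Set.Icc (0 : ℝ) 1) →
          |DiscT k α x m| ≤ C * Real.log N ^ k * φ ⌈Real.log (Real.log N)⌉₊ := by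
  intro H
  have hP := hypHeight_le_of_mem_shell hk hn
  have hP1 := one_le_hypHeight n
  have hφ0 := hφpos 0
  have hφ1 := hφmono (Nat.zero_le (j + 1))
  have hφJ := hφpos (j + 1)
  set J : ℕ := j + 1 with hJ
  set P := hypHeight n
  set E := Real.exp (J : ℝ) with hE
  have hE2 : 2 < E := by
    have h1 : (1 : ℝ) ≤ J := by exact_mod_cast Nat.le_add_left 1 j
    linarith [Real.exp_one_gt_d9, Real.exp_le_exp.2 h1]
  have hEk : 1 ≤ E ^ k := one_le_pow₀ (by linarith)
  have hEE : 4 < Real.exp E := by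
    have := Real.exp_lt_exp.2 hE2
    have h2 : Real.exp 2 = Real.exp 1 ^ 2 := by rw [← Real.exp_nat_mul]; norm_num
    nlinarith [Real.exp_one_gt_d9]
  set N : ℕ := ⌊Real.exp E⌋₊ with hN
  have hNle : (N : ℝ) ≤ Real.exp E := Nat.floor_le (Real.exp_pos _).le
  have hNge : Real.exp E / 2 ≤ N := by linarith [Nat.lt_floor_add_one (Real.exp E)]
  have hN3 : 3 ≤ N := Nat.le_floor (by push_cast; linarith)
  have hlog1 := one_le_log_natCast hN3
  have hlog : Real.log N ≤ E := by
    rw [Real.log_le_iff_le_exp (by positivity)]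
    exact hNle
  have hll : ⌈Real.log (Real.log N)⌉₊ ≤ J := by
    rw [Nat.ceil_le, Real.log_le_iff_le_exp (by linarith)]
    exact hlog
  set A : ℝ := B * E ^ k * φ J * P with hA
  have hB0 : 0 < B := lt_of_lt_of_le (by positivity) hB
  have hA13 : 13 ≤ A := by
    have h1 : 13 ≤ B * φ J :=
      ((div_le_iff₀ hφ0).1 hB).trans (mul_le_mul_of_nonneg_left hφ1 hB0.le)
    calc (13 : ℝ) ≤ B * φ J := h1
      _ = B * 1 * φ J * 1 := by ring
      _ ≤ A := by rw [hA]; gcongr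
  set m : ℕ := min ⌊A / 13⌋₊ N with hm
  have hmA : (m : ℝ) ≤ A / 13 :=
    (Nat.cast_le.2 (min_le_left _ _)).trans (Nat.floor_le (by positivity))
  have hm1 : 1 ≤ m := le_min (Nat.le_floor (by push_cast; linarith)) (by omega)
  have hsmall : 13 * (m : ℝ) * ‖(linForm n α : UnitAddCircle)‖ ≤ 1 :=
    calc 13 * (m : ℝ) * ‖(linForm n α : UnitAddCircle)‖ ≤ 13 * (A / 13) * (1 / A) := by gcongr
      _ = 1 := by field_simp
  have hupper := norm_sum_eu_linForm_le hk (α := α) (n := n)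
    (fun i => by have := one_le_of_mem_shell hn i; omega) (m := m) (M := C * E ^ k * φ J)
    fun x hx => (H N hN3 m hm1 (min_le_right _ _) x hx).trans (by
      have := hφpos ⌈Real.log (Real.log N)⌉₊
      have := hφmono hll
      gcongr)
  have hmain := (half_le_norm_sum_eu hsmall).trans hupper
  rcases le_total ⌊A / 13⌋₊ N with h | h
  · rw [hm, min_eq_left h] at hmain
    have hf := Nat.lt_floor_add_one (A / 13)
    have hfl : A / 26 ≤ (⌊A / 13⌋₊ : ℝ) := by
      have : (1 : ℝ) ≤ (⌊A / 13⌋₊ : ℝ) := by exact_mod_cast hm1.trans (min_le_left _ _)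
      linarith
    have h1 : A ≤ 52 * (4 * Real.pi) ^ k * C * (E ^ k * φ J * P) := by
      linarith
    have h2 : 52 * (4 * Real.pi) ^ k * C * (E ^ k * φ J * P) < B * (E ^ k * φ J * P) := by
      gcongr
    have h3 : A = B * (E ^ k * φ J * P) := by rw [hA]; ring
    linarith
  · rw [hm, min_eq_right h] at hmain
    have hsq : Real.exp E = Real.exp (E / 2) * Real.exp (E / 2) := by
      rw [← Real.exp_add]; ring_nf
    have h1 : (4 * Real.pi) ^ k * P * (C * E ^ k * φ J) ≤
        (4 * Real.pi) ^ k * Real.exp (E / 2) * (C * E ^ k * 2 ^ J) := by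
      have := Real.pi_pos
      gcongr
    have h2 := mul_lt_mul_of_pos_right hj (Real.exp_pos (E / 2))
    nlinarith

theorem ae_not_abs_DiscT_le_of_not_summable {k : ℕ} (hk : 2 ≤ k) {φ : ℕ → ℝ}
    (hφpos : ∀ n, 0 < φ n) (hφmono : Monotone φ) (hs : ¬ Summable fun n => 1 / φ n) :
    ∀ᵐ α ∂(volume : Measure (Fin k → ℝ)),
      ¬ ∃ C : ℝ, ∀ N : ℕ, 3 ≤ N → ∀ m : ℕ, 1 ≤ m → m ≤ N → ∀ x : Fin k → ℝ,
        (∀ i, x i ∈ Set.Icc (0 : ℝ) 1) →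
          |DiscT k α x m| ≤ C * Real.log N ^ k * φ ⌈Real.log (Real.log N)⌉₊ := by
  have hφ0 := hφpos 0
  have key : ∀ᵐ α ∂(volume : Measure (Fin k → ℝ)), ∀ B j₀ : ℕ, 1 / φ 0 ≤ B →
      ∃ j, j₀ ≤ j ∧ φ (j + 1) ≤ 2 ^ (j + 1) ∧ ∃ n ∈ shell k j,
        ‖torusForm n (fun i => (α i : UnitAddCircle))‖ ≤
          1 / (B * Real.exp ((j + 1 : ℕ) : ℝ) ^ k * φ (j + 1) * hypHeight n) := by
    simp only [ae_all_iff]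
    exact fun B j₀ hB => ae_of_ae_torus (ae_exists_small_form hk hφpos hφmono hs hB j₀)
  filter_upwards [key] with α hα
  rintro ⟨C, hC⟩
  obtain ⟨J₀, hJ₀⟩ := exists_lt_exp_half k (4 * (4 * Real.pi) ^ k * |C|)
  obtain ⟨B, hB⟩ := exists_nat_gt (max (13 / φ 0) (52 * (4 * Real.pi) ^ k * |C|))
  have hB1 : 13 / φ 0 ≤ B := ((le_max_left _ _).trans_lt hB).le
  obtain ⟨j, hj, hφj, n, hn, hδ⟩ := hα B J₀ ((by gcongr; norm_num : 1 / φ 0 ≤ 13 / φ 0).trans hB1)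
  rw [torusForm_coe] at hδ
  refine not_abs_DiscT_le (by omega) hφpos hφmono (abs_nonneg C) hn hB1
    ((le_max_right _ _).trans_lt hB) hφj (hJ₀ _ (by omega)) hδ
    fun N hN m hm hmN x hx => (hC N hN m hm hmN x hx).trans ?_
  have := one_le_log_natCast hN
  have := hφpos ⌈Real.log (Real.log N)⌉₊
  gcongr
  exact le_abs_self C

/-- Beck's multidimensional Khintchine theorem: for `k ≥ 2` and a positive increasing `φ`,
for a.e. `α ∈ ℝ^k`, `Δ(α;N) ≪ (log N)^k·φ(log log N)` iff `∑ 1/φ(n) < ∞`. -/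
theorem stmt_1 (k : ℕ) (hk : 2 ≤ k) (φ : ℕ → ℝ) (hφpos : ∀ n, 0 < φ n)
    (hφmono : Monotone φ) :
    ∀ᵐ α ∂(volume : Measure (Fin k → ℝ)),
      ((∃ C : ℝ, ∀ N : ℕ, 3 ≤ N → ∀ m : ℕ, 1 ≤ m → m ≤ N → ∀ x : Fin k → ℝ,
            (∀ i, x i ∈ Set.Icc (0 : ℝ) 1) →
            |DiscT k α x m| ≤
              C * Real.log N ^ k * φ (Nat.ceil (Real.log (Real.log N)))) ↔
        Summable fun n => 1 / φ n) := by
  by_cases hs : Summable fun n => 1 / φ n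
  · filter_upwards [ae_abs_DiscT_le_of_summable hk hφpos hφmono hs] with α hα
    exact iff_of_true hα hs
  · filter_upwards [ae_not_abs_DiscT_le_of_not_summable hk hφpos hφmono hs] with α hα
    exact iff_of_false hα hs
end
end

section
/- Let d ≥ 1 and let φ : ℕ → (0,∞) be a positive increasing function with ∑_{n=1}^∞ 1/φ(n) < ∞. Then for Lebesgue-almost every α = (α₁,…,α_d) ∈ ℝ^d, the series ∑_{n=2}^∞ 1 / [ n·φ(log n)·∏_{i=1}^d ( ‖nα_i‖·φ(|log ‖nα_i‖|) ) ] converges. -/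
open MeasureTheory Finset

noncomputable section

/-- Distance from `y` to the nearest integer. -/
def nid (y : ℝ) : ℝ := |y - round y|

open scoped ENNReal

/-- The weight `1 / (t φ(⌈|log t|⌉))` attached to a distance `t`. -/
def logWeight (φ : ℕ → ℝ) (t : ℝ) : ℝ := 1 / (t * φ ⌈|Real.log t|⌉₊)

theorem measurable_logWeight (φ : ℕ → ℝ) : Measurable (logWeight φ) := by
  have h : Measurable fun t : ℝ => φ ⌈|Real.log t|⌉₊ :=
    (measurable_from_nat (f := φ)).comp
      (Nat.measurable_ceil.comp (measurable_norm.comp Real.measurable_log))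
  exact (measurable_id.mul h).const_div 1

theorem logWeight_nonneg {φ : ℕ → ℝ} (hφ : ∀ n, 0 < φ n) {t : ℝ} (ht : 0 ≤ t) :
    0 ≤ logWeight φ t :=
  div_nonneg zero_le_one (mul_nonneg ht (hφ _).le)

theorem exp_neg_ceil_abs_log_le {t : ℝ} (ht : 0 < t) :
    Real.exp (-(⌈|Real.log t|⌉₊ : ℝ)) ≤ t := by
  rw [← Real.le_log_iff_exp_le ht]
  linarith [Nat.le_ceil |Real.log t|, neg_abs_le (Real.log t)]

theorem le_exp_one_sub_ceil_abs_log {t : ℝ} (ht : 0 < t) (ht1 : t ≤ 1) :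
    t ≤ Real.exp (1 - (⌈|Real.log t|⌉₊ : ℝ)) := by
  rw [← Real.log_le_iff_le_exp ht]
  linarith [Nat.ceil_lt_add_one (abs_nonneg (Real.log t)),
    abs_of_nonpos (Real.log_nonpos ht.le ht1)]

/-- Dyadic-type majorant of the weight on the circle. -/
theorem ofReal_logWeight_norm_le {φ : ℕ → ℝ} (hφ : ∀ n, 0 < φ n) (y : UnitAddCircle) :
    ENNReal.ofReal (logWeight φ ‖y‖) ≤
      ∑' k : ℕ, (Metric.closedBall (0 : UnitAddCircle) (Real.exp (1 - k))).indicator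
        (fun _ => ENNReal.ofReal (Real.exp k / φ k)) y := by
  rcases (norm_nonneg y).eq_or_lt with h0 | h0
  · simp [logWeight, ← h0]
  have h1 : ‖y‖ ≤ 1 := by
    have := AddCircle.norm_le_half_period (1 : ℝ) (x := y) one_ne_zero
    norm_num at this
    linarith
  refine le_trans ?_ (ENNReal.le_tsum ⌈|Real.log ‖y‖|⌉₊)
  rw [Set.indicator_of_mem (by simpa using le_exp_one_sub_ceil_abs_log h0 h1)]
  refine ENNReal.ofReal_le_ofReal ?_
  have hk := exp_neg_ceil_abs_log_le h0
  rw [Real.exp_neg] at hk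
  rw [logWeight, ← div_div]
  refine div_le_div_of_nonneg_right ?_ (hφ _).le
  rw [one_div]
  exact inv_le_of_inv_le₀ (Real.exp_pos _) hk

theorem tsum_ofReal_const_div_lt_top {φ : ℕ → ℝ} (hφ : ∀ n, 0 < φ n)
    (hsum : Summable fun n => 1 / φ n) {c : ℝ} (hc : 0 ≤ c) :
    ∑' k : ℕ, ENNReal.ofReal (c / φ k) < ∞ := by
  have h : Summable fun k => c / φ k := by
    simpa [div_eq_mul_inv] using hsum.mul_left c
  rw [← ENNReal.ofReal_tsum_of_nonneg (fun k => div_nonneg hc (hφ k).le) h]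
  exact ENNReal.ofReal_lt_top

theorem lintegral_logWeight_norm_lt_top {φ : ℕ → ℝ} (hφ : ∀ n, 0 < φ n)
    (hsum : Summable fun n => 1 / φ n) :
    ∫⁻ y : UnitAddCircle, ENNReal.ofReal (logWeight φ ‖y‖) < ∞ := by
  refine (lintegral_mono (ofReal_logWeight_norm_le hφ)).trans_lt ?_
  rw [lintegral_tsum fun k =>
    (measurable_const.indicator Metric.isClosed_closedBall.measurableSet).aemeasurable]
  refine lt_of_le_of_lt (ENNReal.tsum_le_tsum fun k => ?_)
    (tsum_ofReal_const_div_lt_top hφ hsum (c := 2 * Real.exp 1) (by positivity))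
  rw [lintegral_indicator_const Metric.isClosed_closedBall.measurableSet,
    AddCircle.volume_closedBall]
  refine (mul_le_mul_right (ENNReal.ofReal_le_ofReal (min_le_right _ _)) _).trans ?_
  rw [← ENNReal.ofReal_mul (div_nonneg (Real.exp_pos _).le (hφ k).le)]
  refine ENNReal.ofReal_le_ofReal (le_of_eq ?_)
  have := (hφ k).ne'
  rw [Real.exp_sub]
  field_simp

theorem ofReal_one_div_mul_log_le {φ : ℕ → ℝ} (hφ : ∀ n, 0 < φ n) {n : ℕ} (hn : 1 ≤ n) :
    ENNReal.ofReal (1 / (n * φ ⌈Real.log n⌉₊)) ≤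
      ∑' k : ℕ, (Set.Icc 1 ⌊Real.exp k⌋₊).indicator
        (fun _ => ENNReal.ofReal (Real.exp (1 - k) / φ k)) n := by
  have hn0 : (0 : ℝ) < n := by exact_mod_cast hn
  have hlog : 0 ≤ Real.log n := Real.log_natCast_nonneg n
  refine le_trans ?_ (ENNReal.le_tsum ⌈Real.log n⌉₊)
  rw [Set.indicator_of_mem]
  · refine ENNReal.ofReal_le_ofReal ?_
    rw [← div_div]
    refine div_le_div_of_nonneg_right ?_ (hφ _).le
    rw [one_div, ← Real.exp_log hn0, ← Real.exp_neg, Real.exp_le_exp, Real.log_exp]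
    linarith [Nat.ceil_lt_add_one hlog]
  · refine ⟨hn, Nat.le_floor ?_⟩
    rw [← Real.log_le_iff_le_exp hn0]
    exact Nat.le_ceil _

theorem tsum_one_div_mul_log_lt_top {φ : ℕ → ℝ} (hφ : ∀ n, 0 < φ n)
    (hsum : Summable fun n => 1 / φ n) :
    ∑' n : {m : ℕ // 2 ≤ m}, ENNReal.ofReal (1 / (n.1 * φ ⌈Real.log n.1⌉₊)) < ∞ := by
  refine (ENNReal.tsum_le_tsum fun n : {m : ℕ // 2 ≤ m} =>
    ofReal_one_div_mul_log_le hφ (one_le_two.trans n.2)).trans_lt ?_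
  refine (ENNReal.tsum_comp_le_tsum_of_injective Subtype.val_injective
    (fun n : ℕ => ∑' k : ℕ, (Set.Icc 1 ⌊Real.exp k⌋₊).indicator
        (fun _ => ENNReal.ofReal (Real.exp (1 - k) / φ k)) n)).trans_lt ?_
  rw [ENNReal.tsum_comm]
  refine lt_of_le_of_lt (ENNReal.tsum_le_tsum fun k => ?_)
    (tsum_ofReal_const_div_lt_top hφ hsum (c := Real.exp 1) (Real.exp_pos _).le)
  rw [← Finset.coe_Icc, ← _root_.tsum_subtype,
    Finset.tsum_subtype' _ fun _ => ENNReal.ofReal (Real.exp (1 - k) / φ k), Finset.sum_const, Nat.card_Icc,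
    Nat.add_sub_cancel, ← ENNReal.ofReal_nsmul, nsmul_eq_mul]
  refine ENNReal.ofReal_le_ofReal ?_
  rw [← mul_div_assoc]
  refine div_le_div_of_nonneg_right ?_ (hφ k).le
  calc (⌊Real.exp k⌋₊ : ℝ) * Real.exp (1 - k)
      ≤ Real.exp k * Real.exp (1 - k) :=
        mul_le_mul_of_nonneg_right (Nat.floor_le (Real.exp_pos _).le) (Real.exp_pos _).le
    _ = Real.exp 1 := by rw [← Real.exp_add]; congr 1; ring

theorem nid_natCast_mul (n : ℕ) (x : ℝ) : nid (n * x) = ‖n • (x : UnitAddCircle)‖ := by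
  rw [← AddCircle.coe_nsmul, UnitAddCircle.norm_eq, nid, nsmul_eq_mul]

theorem measurable_nid : Measurable nid := by
  have h : nid = fun x : ℝ => ‖(x : UnitAddCircle)‖ := by
    funext x
    rw [UnitAddCircle.norm_eq, nid]
  rw [h]
  exact measurable_norm.comp AddCircle.measurable_mk'

/-- Multiplication by `n ≥ 1` preserves integrals of functions of the distance to `ℤ`. -/
theorem setLIntegral_nid_natCast_mul {f : ℝ → ℝ≥0∞} (hf : Measurable f) {n : ℕ} (hn : 1 ≤ n)
    (t : ℝ) :
    ∫⁻ x in Set.Ioc t (t + 1), f (nid (n * x)) = ∫⁻ y : UnitAddCircle, f ‖y‖ := by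
  simp_rw [nid_natCast_mul]
  rw [UnitAddCircle.lintegral_preimage t fun y => f ‖n • y‖]
  have hmp : MeasurePreserving (fun y : UnitAddCircle => n • y) volume volume := by
    rcases hn.eq_or_lt with rfl | hn
    · simp_rw [one_smul]
      exact MeasurePreserving.id volume
    · exact (AddCircle.ergodic_nsmul hn).toMeasurePreserving
  exact hmp.lintegral_comp (hf.comp measurable_norm)

/-- Tonelli's theorem for a product of functions of the separate coordinates. -/
theorem lintegral_pi_prod_eq_prod {ι Ω : Type*} [Fintype ι] [MeasurableSpace Ω]
    (μ : ι → Measure Ω) [∀ i, IsProbabilityMeasure (μ i)] {f : Ω → ℝ≥0∞} (hf : Measurable f) :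
    ∫⁻ x : ι → Ω, ∏ i, f (x i) ∂Measure.pi μ = ∏ i, ∫⁻ y, f y ∂μ i := by
  rw [ProbabilityTheory.lintegral_prod_eq_prod_lintegral_of_indepFun univ
    (fun i (x : ι → Ω) => f (x i))
    (ProbabilityTheory.iIndepFun_pi (X := fun _ => f) fun _ => hf.aemeasurable)
    fun i => hf.comp (measurable_pi_apply i)]
  exact Finset.prod_congr rfl fun i _ => (measurePreserving_eval μ i).lintegral_comp hf

theorem iUnion_pi_Ioc_intCast_eq_univ (ι : Type*) :
    ⋃ a : ι → ℤ, Set.univ.pi (fun i => Set.Ioc (a i : ℝ) (a i + 1)) = Set.univ := by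
  refine Set.eq_univ_of_forall fun x => Set.mem_iUnion.2 ⟨fun i => ⌈x i⌉ - 1, fun i _ => ?_⟩
  push_cast
  exact ⟨by linarith [Int.ceil_lt_add_one (x i)], by linarith [Int.le_ceil (x i)]⟩

/-- For a positive increasing `φ` with `∑ 1/φ(n) < ∞`, for a.e. `α ∈ ℝ^d` the series
`∑_{n=2}^∞ 1/(n·φ(log n)·∏_{i=1}^d (‖nα_i‖·φ(|log ‖nα_i‖|)))` converges. -/
theorem stmt_7 (d : ℕ) (hd : 1 ≤ d) (φ : ℕ → ℝ) (hφpos : ∀ n, 0 < φ n)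
    (hφmono : Monotone φ) (hφsum : Summable fun n => 1 / φ n) :
    ∀ᵐ α ∂(volume : Measure (Fin d → ℝ)),
      Summable fun n : {m : ℕ // 2 ≤ m} =>
        1 / ((n.1 : ℝ) * φ (Nat.ceil (Real.log (n.1 : ℝ))) *
          ∏ i : Fin d,
            (nid ((n.1 : ℝ) * α i) *
              φ (Nat.ceil |Real.log (nid ((n.1 : ℝ) * α i))|))) := by
  set c : {m : ℕ // 2 ≤ m} → ℝ := fun n => 1 / (n.1 * φ ⌈Real.log n.1⌉₊) with hc
  have hc0 : ∀ n, 0 ≤ c n := fun n =>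
    div_nonneg zero_le_one (mul_nonneg (Nat.cast_nonneg _) (hφpos _).le)
  have hw0 : ∀ (n : ℕ) (x : ℝ), 0 ≤ logWeight φ (nid (n * x)) := fun n x =>
    logWeight_nonneg hφpos (abs_nonneg _)
  have hw : Measurable fun t => ENNReal.ofReal (logWeight φ t) :=
    (measurable_logWeight φ).ennreal_ofReal
  have hwn : ∀ n : ℕ, Measurable fun x : ℝ => ENNReal.ofReal (logWeight φ (nid (n * x))) :=
    fun n => hw.comp (measurable_nid.comp (measurable_const_mul (n : ℝ)))
  have hF : ∀ n : {m : ℕ // 2 ≤ m}, Measurable fun α : Fin d → ℝ =>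
      ENNReal.ofReal (c n) * ∏ i, ENNReal.ofReal (logWeight φ (nid (n.1 * α i))) := fun n =>
    (Finset.measurable_fun_prod _ fun i _ => (hwn n.1).comp (measurable_pi_apply i)).const_mul _
  rw [← Measure.restrict_univ (μ := (volume : Measure (Fin d → ℝ))),
    ← iUnion_pi_Ioc_intCast_eq_univ, ae_restrict_iUnion_iff]
  intro a
  rw [volume_pi, Measure.restrict_pi_pi]
  have hprob : ∀ i, IsProbabilityMeasure
      ((volume : Measure ℝ).restrict (Set.Ioc (a i : ℝ) (a i + 1))) := fun i => ⟨by simp⟩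
  have hfin : ∫⁻ α : Fin d → ℝ, ∑' n : {m : ℕ // 2 ≤ m}, ENNReal.ofReal (c n) *
        ∏ i, ENNReal.ofReal (logWeight φ (nid (n.1 * α i)))
        ∂Measure.pi (fun i => volume.restrict (Set.Ioc (a i : ℝ) (a i + 1))) ≠ ∞ := by
    rw [lintegral_tsum fun n => (hF n).aemeasurable]
    have hn : ∀ n : {m : ℕ // 2 ≤ m}, ∫⁻ α : Fin d → ℝ, ENNReal.ofReal (c n) *
        ∏ i, ENNReal.ofReal (logWeight φ (nid (n.1 * α i)))
        ∂Measure.pi (fun i => volume.restrict (Set.Ioc (a i : ℝ) (a i + 1))) =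
        ENNReal.ofReal (c n) *
          (∫⁻ y : UnitAddCircle, ENNReal.ofReal (logWeight φ ‖y‖)) ^ d := fun n => by
      rw [lintegral_const_mul' _ _ ENNReal.ofReal_ne_top, lintegral_pi_prod_eq_prod _ (hwn n.1),
        Finset.prod_congr rfl fun i _ =>
          setLIntegral_nid_natCast_mul hw (one_le_two.trans n.2) (a i : ℝ)]
      simp
    simp_rw [hn]
    rw [ENNReal.tsum_mul_right]
    exact ENNReal.mul_ne_top (tsum_one_div_mul_log_lt_top hφpos hφsum).ne
      (ENNReal.pow_ne_top (lintegral_logWeight_norm_lt_top hφpos hφsum).ne)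
  filter_upwards [ae_lt_top (Measurable.tsum hF) hfin] with α hα
  refine (ENNReal.summable_toReal hα.ne).congr fun n => ?_
  rw [ENNReal.toReal_mul, ENNReal.toReal_prod, ENNReal.toReal_ofReal (hc0 n),
    Finset.prod_congr rfl fun i _ => ENNReal.toReal_ofReal (hw0 n.1 (α i))]
  simp [hc, logWeight, Finset.prod_mul_distrib, mul_comm]
end
end
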